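/- arXiv:math/9910160 — 2 statements merged into one kernel-verified Lean document; each statement's English description precedes it below -/
import Mathlib

section
/- For every integer m ≥ 2 there is a constant C = C(m) such that for every n ≥ 1, every norm ‖·‖ on ℝⁿ with closed unit ball B, and every continuous function f : B → ℝ with ω_m(f;B) ≤ 1, there exists a polynomial φ on ℝⁿ of total degree at most m−1 with sup_{x∈B} |f(x) − φ(x)| ≤ C n^{m/2 − 1} log(n+1). (Corollary 5.6: w_m^{(s)}(n) ≤ C n^{m/2−1} log(n+1).) -/
open Finset

/-- `diffBound m K f c` says that the `m`-th modulus of smoothness of `f` on `K` is at most `c`,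
i.e. `|Δ_h^m f(x)| ≤ c` whenever `x, x+h, …, x+mh ∈ K`. -/
def diffBound {E : Type*} [AddCommGroup E] [Module ℝ E] (m : ℕ) (K : Set E) (f : E → ℝ)
    (c : ℝ) : Prop :=
  ∀ x h : E, (∀ j : ℕ, j ≤ m → x + (j : ℝ) • h ∈ K) →
    |∑ j ∈ Finset.range (m + 1), (-1 : ℝ) ^ (m - j) * (m.choose j : ℝ) * f (x + (j : ℝ) • h)| ≤ c

/-- A norm on `ι → ℝ`, given as a function with the norm axioms. -/
def IsNormFn {ι : Type*} [Fintype ι] (N : (ι → ℝ) → ℝ) : Prop :=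
  (∀ x, 0 ≤ N x) ∧ (∀ x, N x = 0 ↔ x = 0) ∧ (∀ (a : ℝ) (x), N (a • x) = |a| * N x) ∧
  (∀ x y, N (x + y) ≤ N x + N y)

namespace Whit

open Polynomial in
/-- evaluation of a polynomial in the shift operator on a sequence -/
noncomputable def ev (s : ℕ → ℝ) : ℝ[X] →ₗ[ℝ] ℝ :=
  Polynomial.lsum (fun j => s j • (LinearMap.id : ℝ →ₗ[ℝ] ℝ))

/-- iterated difference -/
noncomputable def dl {E : Type*} [AddCommGroup E] [Module ℝ E] (m : ℕ) (f : E → ℝ) (x h : E) : ℝ :=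
  ∑ j ∈ Finset.range (m + 1), (-1 : ℝ) ^ (m - j) * (m.choose j : ℝ) * f (x + (j : ℝ) • h)

/-- difference bound on the unit ball of a seminorm -/
def DB {n : ℕ} (N : Seminorm ℝ (Fin n → ℝ)) (m : ℕ) (f : (Fin n → ℝ) → ℝ) (c : ℝ) : Prop :=
  ∀ x h, (∀ j : ℕ, j ≤ m → N (x + (j : ℝ) • h) ≤ 1) → |dl m f x h| ≤ c

section polys
open Polynomial

lemma ev_monomial (s : ℕ → ℝ) (j : ℕ) (a : ℝ) : ev s (monomial j a) = s j * a := by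
  simp [ev, Polynomial.lsum_apply, Polynomial.sum_monomial_index]

lemma ev_X_pow (s : ℕ → ℝ) (j : ℕ) : ev s (X ^ j) = s j := by
  rw [← monomial_one_right_eq_X_pow, ev_monomial, mul_one]

lemma ev_C_mul (s : ℕ → ℝ) (a : ℝ) (Q : ℝ[X]) : ev s (C a * Q) = a * ev s Q := by
  rw [← smul_eq_C_mul, map_smul, smul_eq_mul]

lemma ev_expand (s : ℕ → ℝ) (p : ℕ) (Q : ℝ[X]) :
    ev s (expand ℝ p Q) = ev (fun j => s (p * j)) Q := by
  induction Q using Polynomial.induction_on' with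
  | add a b ha hb => simp [map_add, ha, hb]
  | monomial j a => simp [expand_monomial, ev_monomial, mul_comm]

lemma ev_diff (s : ℕ → ℝ) (m i : ℕ) : ev s ((X - 1) ^ m * X ^ i) =
    ∑ j ∈ range (m + 1), (-1 : ℝ) ^ (m - j) * (m.choose j : ℝ) * s (i + j) := by
  rw [sub_eq_add_neg, add_pow, Finset.sum_mul, map_sum]
  refine Finset.sum_congr rfl fun j _ => ?_
  have : (X : ℝ[X]) ^ j * (-1) ^ (m - j) * (m.choose j : ℝ[X]) * X ^ i
      = C ((-1 : ℝ) ^ (m - j) * (m.choose j : ℝ)) * X ^ (i + j) := by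
    simp only [map_mul, map_pow, map_neg, map_one, map_natCast]; ring
  rw [this, ev_C_mul, ev_X_pow]

lemma evd (m : ℕ) (Q : ℝ[X]) (hd : (X - 1) ^ m ∣ Q) : ∃ C : ℝ, 0 ≤ C ∧
    ∀ (n : ℕ) (N : Seminorm ℝ (Fin n → ℝ)) (f : (Fin n → ℝ) → ℝ) (c : ℝ) (x h : Fin n → ℝ),
      DB N m f c → (∀ j : ℕ, j ≤ Q.natDegree → N (x + (j : ℝ) • h) ≤ 1) →
      |ev (fun j => f (x + (j : ℝ) • h)) Q| ≤ C * c := by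
  obtain ⟨R, rfl⟩ := hd
  refine ⟨∑ i ∈ range (R.natDegree + 1), |R.coeff i|, Finset.sum_nonneg fun _ _ => abs_nonneg _, ?_⟩
  intro n N f c x h hf hx
  by_cases hR : R = 0
  · simp [hR]
  have hm : ((X - 1 : ℝ[X]) ^ m).Monic := (by simpa using monic_X_sub_C (1:ℝ) : (X - 1 : ℝ[X]).Monic).pow m
  have hdeg : ((X - 1) ^ m * R).natDegree = m + R.natDegree := by
    rw [hm.natDegree_mul' hR]
    congr 1
    have : (X - 1 : ℝ[X]) = X - C 1 := by simp
    rw [this, natDegree_pow, natDegree_X_sub_C, mul_one]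
  rw [hdeg] at hx
  have e : (X - 1) ^ m * R = ∑ i ∈ range (R.natDegree + 1), C (R.coeff i) * ((X - 1) ^ m * X ^ i) := by
    conv_lhs => rw [R.as_sum_range_C_mul_X_pow]
    rw [Finset.mul_sum]
    refine Finset.sum_congr rfl fun j _ => ?_
    ring
  rw [e, map_sum, Finset.sum_mul]
  refine (Finset.abs_sum_le_sum_abs _ _).trans (Finset.sum_le_sum fun i hi => ?_)
  rw [ev_C_mul, abs_mul]
  refine mul_le_mul_of_nonneg_left ?_ (abs_nonneg _)
  rw [ev_diff]
  have := hf (x + (i : ℝ) • h) h (fun j hj => by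
    have := hx (i + j) (by have := Finset.mem_range.1 hi; omega)
    rw [add_assoc, ← add_smul]; exact_mod_cast this)
  refine le_of_eq_of_le ?_ this
  congr 1
  unfold dl
  refine Finset.sum_congr rfl fun j _ => ?_
  rw [add_assoc, ← add_smul]; push_cast; rfl

/-- the polynomials encoding the product of `D - 2^{-l}` -/
noncomputable def Qp : ℕ → ℝ[X]
  | 0 => X
  | (l + 1) => Qp l - C ((1 / 2 : ℝ) ^ l) * expand ℝ 2 (Qp l)

lemma Qp_deg (l : ℕ) : (Qp l).natDegree ≤ 2 ^ l := by
  induction l with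
  | zero => simp [Qp]
  | succ l ih =>
    rw [Qp]
    refine (natDegree_sub_le _ _).trans (max_le (ih.trans (by rw [pow_succ]; omega)) ?_)
    refine (natDegree_C_mul_le _ _).trans ?_
    rw [natDegree_expand, pow_succ]; omega

lemma dvd_of_eval (p : ℝ[X]) (h : p.eval 1 = 0) : (X - 1) ∣ p := by
  have := dvd_iff_isRoot.2 (show IsRoot p 1 from h)
  simpa using this

lemma Qp_dvd (l : ℕ) : (X - 1) ^ l ∣ Qp l := by
  induction l with
  | zero => simp
  | succ l ih =>
    obtain ⟨R, hR⟩ := ih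
    have : Qp (l + 1) = (X - 1) ^ l * (R - C ((1 / 2 : ℝ) ^ l) * ((X + 1) ^ l * expand ℝ 2 R)) := by
      rw [Qp, hR, map_mul (expand ℝ 2), map_pow (expand ℝ 2), map_sub (expand ℝ 2), expand_X, map_one]
      have : (X ^ 2 - 1 : ℝ[X]) ^ l = (X - 1) ^ l * (X + 1) ^ l := by rw [← mul_pow]; ring
      rw [this]; ring
    rw [this, pow_succ]
    refine mul_dvd_mul_left _ (dvd_of_eval _ ?_)
    simp only [eval_sub, eval_mul, eval_C, eval_pow, eval_add, eval_X, eval_one, expand_eval, one_pow]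
    rw [← mul_assoc, ← mul_pow]; norm_num

lemma Qp_dvd' (l : ℕ) : ∃ ρ : ℝ, (X - 1) ^ (l + 1) ∣ Qp l - C ρ * (X - 1) ^ l := by
  obtain ⟨R, hR⟩ := Qp_dvd l
  refine ⟨R.eval 1, ?_⟩
  have : Qp l - C (R.eval 1) * (X - 1) ^ l = (X - 1) ^ l * (R - C (R.eval 1)) := by rw [hR]; ring
  rw [this, pow_succ]
  exact mul_dvd_mul_left _ (dvd_of_eval _ (by simp))

lemma march_dvd (r M : ℕ) : (X - 1 : ℝ[X]) ^ (r + 1) ∣ (X ^ M - 1) ^ r - C ((M : ℝ) ^ r) * (X - 1) ^ r := by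
  have h1 : (X ^ M - 1 : ℝ[X]) = (X - 1) * ∑ i ∈ range M, X ^ i := (mul_geom_sum X M).symm
  have : (X ^ M - 1 : ℝ[X]) ^ r - C ((M : ℝ) ^ r) * (X - 1) ^ r
    = (X - 1) ^ r * ((∑ i ∈ range M, X ^ i) ^ r - C ((M : ℝ) ^ r)) := by rw [h1, mul_pow]; ring
  rw [this, pow_succ]
  exact mul_dvd_mul_left _ (dvd_of_eval _ (by simp [eval_finsetSum]))

end polys

/-- product of `D - 2^{-l}` -/
noncomputable def W {n : ℕ} (f : (Fin n → ℝ) → ℝ) : ℕ → (Fin n → ℝ) → ℝ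
  | 0, x => f x
  | (l + 1), x => W f l ((1 / 2 : ℝ) • x) - (1 / 2 : ℝ) ^ l * W f l x

lemma W_eq {n : ℕ} (f : (Fin n → ℝ) → ℝ) (l : ℕ) (x : Fin n → ℝ) :
    W f l x = ev (fun j => f (0 + (j : ℝ) • ((1 / 2 : ℝ) ^ l • x))) (Qp l) := by
  induction l generalizing x with
  | zero =>
    have := ev_X_pow (fun j => f (0 + (j : ℝ) • ((1 / 2 : ℝ) ^ 0 • x))) 1
    rw [pow_one] at this
    rw [W, Qp, this]; simp
  | succ l ih =>
    rw [W, Qp, map_sub, ev_C_mul, ev_expand, ih, ih]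
    congr 2
    · congr 1
      funext j
      rw [smul_smul ((1 / 2 : ℝ) ^ l), ← pow_succ]
    · congr 1
      congr 1
      funext j
      congr 2
      rw [smul_smul, smul_smul, pow_succ]
      congr 1; push_cast; ring

lemma N_half {n : ℕ} (N : Seminorm ℝ (Fin n → ℝ)) (x : Fin n → ℝ) (hx : N x ≤ 1) (l j : ℕ) (hj : j ≤ 2 ^ l) :
    N (0 + (j : ℝ) • ((1 / 2 : ℝ) ^ l • x)) ≤ 1 := by
  rw [zero_add, smul_smul, map_smul_eq_mul, Real.norm_of_nonneg (by positivity)]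
  have h1 : (j : ℝ) * (1 / 2) ^ l ≤ 1 := by
    rw [one_div, inv_pow, ← div_eq_mul_inv, div_le_one (by positivity)]
    exact_mod_cast hj
  exact mul_le_one₀ h1 (apply_nonneg _ _) hx

lemma W_bound (m : ℕ) : ∃ C : ℝ, 0 ≤ C ∧ ∀ (n : ℕ) (N : Seminorm ℝ (Fin n → ℝ))
    (f : (Fin n → ℝ) → ℝ) (c : ℝ), DB N m f c → ∀ x, N x ≤ 1 → |W f m x| ≤ C * c := by
  obtain ⟨C, hC, h⟩ := evd m (Qp m) (Qp_dvd m)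
  refine ⟨C, hC, fun n N f c hf x hx => ?_⟩
  rw [W_eq]
  exact h n N f c _ _ hf fun j hj => N_half N x hx m j (hj.trans (Qp_deg m))

lemma W_bound' (m : ℕ) : ∃ ρ C : ℝ, 0 ≤ C ∧ ∀ (n : ℕ) (N : Seminorm ℝ (Fin n → ℝ))
    (f : (Fin n → ℝ) → ℝ) (c : ℝ), DB N (m + 1) f c → ∀ x, N x ≤ 1 →
      |W f m x - ρ * dl m f 0 ((1 / 2 : ℝ) ^ m • x)| ≤ C * c := by
  obtain ⟨ρ, hρ⟩ := Qp_dvd' m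
  obtain ⟨C, hC, h⟩ := evd (m + 1) _ hρ
  refine ⟨ρ, C, hC, fun n N f c hf x hx => ?_⟩
  have := h n N f c 0 ((1 / 2 : ℝ) ^ m • x) hf fun j hj => N_half N x hx m j (hj.trans ?_)
  · rw [map_sub, ev_C_mul, ← W_eq] at this
    convert this using 4
    have := ev_diff (fun j => f (0 + (j : ℝ) • ((1 / 2 : ℝ) ^ m • x))) m 0
    rw [pow_zero, mul_one] at this
    rw [this]; simp [dl]
  · refine (Polynomial.natDegree_sub_le _ _).trans (max_le (Qp_deg m) ?_)
    refine (Polynomial.natDegree_C_mul_le _ _).trans ?_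
    have : (Polynomial.X - 1 : Polynomial ℝ) = Polynomial.X - Polynomial.C 1 := by simp
    rw [this, Polynomial.natDegree_pow, Polynomial.natDegree_X_sub_C, mul_one]
    exact Nat.lt_two_pow_self.le

end Whit

namespace Whit

lemma iter {α : Type*} (S : α → Prop) (g : α → ℝ) (d A0 : ℝ) (h0 : ∀ x, S x → |g x| ≤ A0)
    (hs : ∀ A, (∀ x, S x → |g x| ≤ A) → ∀ x, S x → |g x| ≤ A / 2 + d) :
    ∀ x, S x → |g x| ≤ 2 * d := by
  have key : ∀ k : ℕ, ∀ x, S x → |g x| ≤ (A0 - 2 * d) * (1 / 2 : ℝ) ^ k + 2 * d := by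
    intro k
    induction k with
    | zero => intro x hx; simpa using h0 x hx
    | succ k ih =>
      intro x hx
      refine (hs _ ih x hx).trans (le_of_eq ?_)
      rw [pow_succ]; ring
  intro x hx
  have ht : Filter.Tendsto (fun k : ℕ => (A0 - 2 * d) * (1 / 2 : ℝ) ^ k + 2 * d) Filter.atTop
      (nhds ((A0 - 2 * d) * 0 + 2 * d)) :=
    ((tendsto_pow_atTop_nhds_zero_of_lt_one (by norm_num) (by norm_num)).const_mul _).add_const _
  have := ge_of_tendsto' ht (fun k => key k x hx)
  simpa using this

lemma dsum_le (r : ℕ) (u : ℕ → ℝ) (e : ℝ) (h : ∀ j ≤ r, |u j| ≤ e) :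
    |∑ j ∈ range (r + 1), (-1 : ℝ) ^ (r - j) * (r.choose j : ℝ) * u j| ≤ 2 ^ r * e := by
  refine (Finset.abs_sum_le_sum_abs _ _).trans ?_
  have : (2 : ℝ) ^ r * e = ∑ j ∈ range (r + 1), (r.choose j : ℝ) * e := by
    rw [← Finset.sum_mul]; congr 1; exact_mod_cast (Nat.sum_range_choose r).symm
  rw [this]
  refine Finset.sum_le_sum fun j hj => ?_
  rw [abs_mul, abs_mul, abs_pow, abs_neg, abs_one, one_pow, one_mul, Nat.abs_cast]
  exact mul_le_mul_of_nonneg_left (h j (by have := Finset.mem_range.1 hj; omega)) (by positivity)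

/-- quasi-homogeneity -/
def QH {n : ℕ} (N : Seminorm ℝ (Fin n → ℝ)) (k : ℕ) (f : (Fin n → ℝ) → ℝ) (a : ℝ) : Prop :=
  ∀ x, N x ≤ 1 → |f ((1 / 2 : ℝ) • x) - (1 / 2 : ℝ) ^ k * f x| ≤ a

variable {n : ℕ} {N : Seminorm ℝ (Fin n → ℝ)}

lemma QH.nonneg {k : ℕ} {f : (Fin n → ℝ) → ℝ} {a : ℝ} (h : QH N k f a) : 0 ≤ a :=
  (abs_nonneg _).trans (h 0 (by simp))

lemma DB.nonneg {k : ℕ} {f : (Fin n → ℝ) → ℝ} {a : ℝ} (h : DB N k f a) : 0 ≤ a :=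
  (abs_nonneg _).trans (h 0 0 (by simp))

lemma DB.mono {k : ℕ} {f : (Fin n → ℝ) → ℝ} {a b : ℝ} (h : DB N k f a) (hab : a ≤ b) : DB N k f b :=
  fun x y hx => (h x y hx).trans hab

lemma N_smul_le {x : Fin n → ℝ} (hx : N x ≤ 1) {t : ℝ} (h0 : 0 ≤ t) (h1 : t ≤ 1) : N (t • x) ≤ 1 := by
  rw [map_smul_eq_mul, Real.norm_of_nonneg h0]
  exact mul_le_one₀ h1 (apply_nonneg _ _) hx

lemma QH.iter {k : ℕ} {f : (Fin n → ℝ) → ℝ} {a : ℝ} (h : QH N k f a) (s : ℕ) :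
    ∀ x, N x ≤ 1 → |f ((1 / 2 : ℝ) ^ s • x) - ((1 / 2 : ℝ) ^ s) ^ k * f x| ≤ s * a := by
  induction s with
  | zero => intro x _; simp
  | succ s ih =>
    intro x hx
    have h1 := h ((1 / 2 : ℝ) ^ s • x) (N_smul_le hx (by positivity) (pow_le_one₀ (by norm_num) (by norm_num)))
    have h2 := ih x hx
    rw [smul_smul, ← pow_succ'] at h1
    set u := f ((1 / 2 : ℝ) ^ s • x)
    have e : f ((1 / 2 : ℝ) ^ (s + 1) • x) - ((1 / 2 : ℝ) ^ (s + 1)) ^ k * f x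
      = (f ((1 / 2 : ℝ) ^ (s + 1) • x) - (1 / 2 : ℝ) ^ k * u)
        + (1 / 2 : ℝ) ^ k * (u - ((1 / 2 : ℝ) ^ s) ^ k * f x) := by
      rw [pow_succ (1/2 : ℝ) s, mul_pow]; ring
    rw [e]
    refine (abs_add_le _ _).trans ?_
    have h3 : |(1 / 2 : ℝ) ^ k * (u - ((1 / 2 : ℝ) ^ s) ^ k * f x)| ≤ s * a := by
      rw [abs_mul, abs_of_nonneg (by positivity : (0:ℝ) ≤ (1/2)^k)]
      exact (mul_le_of_le_one_left (abs_nonneg _) (pow_le_one₀ (by norm_num) (by norm_num))).trans h2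
    push_cast
    linarith

lemma Npt {x h : Fin n → ℝ} {r M i : ℕ} (hr : 0 < r) (h0 : N x ≤ 1) (h1 : N (x + (r : ℝ) • h) ≤ 1)
    (hM : 0 < M) (hi : i ≤ M * r) {t : ℝ} (ht : t * (4 * M) = 1) :
    N (t • x + (i : ℝ) • (t • h)) ≤ 1 := by
  have hMr : (0 : ℝ) < M := by exact_mod_cast hM
  have hrr : (0 : ℝ) < r := by exact_mod_cast hr
  have ht0 : 0 < t := by
    by_contra hc
    nlinarith
  have e : t • x + (i : ℝ) • (t • h) = t • (x + (i : ℝ) • h) := by rw [smul_add, smul_comm]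
  have h2 : N ((r : ℝ) • h) ≤ 2 := by
    have : (r : ℝ) • h = (x + (r : ℝ) • h) - x := by simp
    rw [this]
    exact (map_sub_le_add N _ _).trans (by linarith)
  rw [map_smul_eq_mul, Real.norm_of_nonneg hrr.le] at h2
  have h3 : N ((i : ℝ) • h) ≤ 2 * M := by
    rw [map_smul_eq_mul, Real.norm_of_nonneg (by positivity)]
    have : (i : ℝ) ≤ M * r := by exact_mod_cast hi
    have h4 := apply_nonneg N h
    calc (i : ℝ) * N h ≤ (M * r) * N h := by gcongr
      _ = M * (r * N h) := by ring
      _ ≤ M * 2 := by gcongr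
      _ = _ := by ring
  have hM1 : (1 : ℝ) ≤ M := by exact_mod_cast hM
  rw [e, map_smul_eq_mul, Real.norm_of_nonneg ht0.le]
  have h5 := map_add_le_add N x ((i : ℝ) • h)
  calc t * N (x + (i : ℝ) • h) ≤ t * (4 * M) := by gcongr; linarith
    _ = 1 := ht

lemma march (k r : ℕ) (hkr : k < r) : ∃ C : ℝ, 0 ≤ C ∧ ∀ (n : ℕ) (N : Seminorm ℝ (Fin n → ℝ))
    (f : (Fin n → ℝ) → ℝ) (a c M : ℝ), (∀ x, N x ≤ 1 → |f x| ≤ M) → QH N k f a →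
    DB N (r + 1) f c → DB N r f (C * (a + c)) := by
  set l : ℕ := 2 * k + 1 with hl
  obtain ⟨C1, hC1, h1⟩ := evd (r + 1) _ (march_dvd r (2 ^ l))
  set T : ℝ := 4 * 2 ^ l with hT
  refine ⟨2 * (C1 / 2 + T ^ k * (2 ^ r * ((l + 2 : ℕ) : ℝ))), by positivity, ?_⟩
  intro n N f a c M hM hq hf
  have ha := hq.nonneg
  have hc := hf.nonneg
  have main := iter (α := (Fin n → ℝ) × (Fin n → ℝ))
    (fun p => ∀ j : ℕ, j ≤ r → N (p.1 + (j : ℝ) • p.2) ≤ 1) (fun p => dl r f p.1 p.2)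
    (C1 * c / 2 + T ^ k * (2 ^ r * (((l + 2 : ℕ) : ℝ) * a))) (2 ^ r * M)
    (fun p hp => dsum_le r _ M fun j hj => hM _ (hp j hj)) ?_
  · intro x h hx
    refine (main (x, h) hx).trans ?_
    have e1 : C1 * c ≤ C1 * (a + c) := by gcongr; linarith
    have e2 : T ^ k * (2 ^ r * (((l + 2 : ℕ) : ℝ) * a)) ≤ T ^ k * (2 ^ r * (((l + 2 : ℕ) : ℝ) * (a + c))) := by
      gcongr; linarith
    nlinarith
  · rintro A hA ⟨x, h⟩ hx
    dsimp only at hx ⊢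
    set t : ℝ := (1 / 2 : ℝ) ^ (l + 2) with ht
    have htT : t * T = 1 := by
      rw [ht, hT, pow_add]
      have : (1 / 2 : ℝ) ^ l * 2 ^ l = 1 := by rw [← mul_pow]; norm_num
      linear_combination this
    have htT' : t * (4 * ((2 ^ l : ℕ) : ℝ)) = 1 := by push_cast; exact htT
    have hx0 : N x ≤ 1 := by simpa using hx 0 (Nat.zero_le _)
    have hpt : ∀ i : ℕ, i ≤ 2 ^ l * r → N (t • x + (i : ℝ) • (t • h)) ≤ 1 := fun i hi =>
      Npt (by omega) hx0 (hx r le_rfl) (by positivity) hi htT'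
    have E1 : |dl r f (t • x) (t • h) - t ^ k * dl r f x h| ≤ 2 ^ r * (((l + 2 : ℕ) : ℝ) * a) := by
      have := dsum_le r (fun j => f (t • x + (j : ℝ) • (t • h)) - t ^ k * f (x + (j : ℝ) • h)) _
        (fun j hj => by
          have := hq.iter (l + 2) _ (hx j hj)
          rw [← ht, smul_add, smul_comm] at this
          exact this)
      refine le_of_eq_of_le ?_ this
      congr 1
      unfold dl
      rw [Finset.mul_sum, ← Finset.sum_sub_distrib]
      refine Finset.sum_congr rfl fun j _ => ?_
      ring
    have E2 : |dl r f (t • x) (((2 ^ l : ℕ) : ℝ) • t • h) - (2 ^ l) ^ r * dl r f (t • x) (t • h)| ≤ C1 * c := by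
      have := h1 n N f c (t • x) (t • h) hf (fun j hj => hpt j (hj.trans ?_))
      · have ex : (Polynomial.X ^ (2 ^ l) - 1 : Polynomial ℝ) ^ r
            = Polynomial.expand ℝ (2 ^ l) ((Polynomial.X - 1) ^ r) := by simp
        have e1 := ev_diff (fun j => f (t • x + (j : ℝ) • (t • h))) r 0
        have e2 := ev_diff (fun j => f (t • x + ((2 ^ l * j : ℕ) : ℝ) • (t • h))) r 0
        rw [pow_zero, mul_one] at e1 e2
        rw [map_sub, ev_C_mul, ex, ev_expand, e1, e2] at this
        refine le_of_eq_of_le ?_ this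
        congr 1
        unfold dl
        congr 1
        · refine Finset.sum_congr rfl fun j _ => ?_
          rw [smul_smul, zero_add]; push_cast; rw [mul_comm (j : ℝ)]
        · push_cast; simp
      · refine (Polynomial.natDegree_sub_le _ _).trans (max_le ?_ ?_)
        · rw [Polynomial.natDegree_pow, mul_comm]
          refine Nat.mul_le_mul_right _ ?_
          have : (Polynomial.X ^ (2 ^ l) - 1 : Polynomial ℝ) = Polynomial.X ^ (2 ^ l) - Polynomial.C 1 := by simp
          rw [this, Polynomial.natDegree_X_pow_sub_C]
        · refine (Polynomial.natDegree_C_mul_le _ _).trans ?_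
          have : (Polynomial.X - 1 : Polynomial ℝ) = Polynomial.X - Polynomial.C 1 := by simp
          rw [this, Polynomial.natDegree_pow, Polynomial.natDegree_X_sub_C, mul_one]
          exact Nat.le_mul_of_pos_left _ (by positivity)
    have E3 : |dl r f (t • x) (((2 ^ l : ℕ) : ℝ) • t • h)| ≤ A := by
      refine hA (t • x, ((2 ^ l : ℕ) : ℝ) • t • h) fun j hj => ?_
      have := hpt (2 ^ l * j) (Nat.mul_le_mul_left _ hj)
      dsimp only
      rw [smul_smul, mul_comm]
      push_cast at this ⊢
      exact this
    set X := dl r f x h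
    set Y := dl r f (t • x) (t • h)
    set Z := dl r f (t • x) (((2 ^ l : ℕ) : ℝ) • t • h)
    have hTk : T ^ k ≤ (2 ^ l) ^ r / 2 := by
      have : ((2 : ℝ) ^ l) ^ (k + 1) ≤ (2 ^ l) ^ r := pow_le_pow_right₀ (one_le_pow₀ (by norm_num)) hkr
      have h4 : ((2 : ℝ) ^ l) ^ (k + 1) = 2 * T ^ k := by
        have e4 : (2 : ℝ) ^ l = 2 * 4 ^ k := by rw [hl, pow_succ, pow_mul]; norm_num; ring
        rw [hT, mul_pow, pow_succ]
        nth_rewrite 2 [e4]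
        ring
      linarith
    have hTt : T ^ k * t ^ k = 1 := by rw [← mul_pow, mul_comm, htT, one_pow]
    have hTp : 0 ≤ T ^ k := by positivity
    have hY : (2 ^ l) ^ r * |Y| ≤ A + C1 * c := by
      have : |(2 ^ l) ^ r * Y| = (2 ^ l) ^ r * |Y| := by rw [abs_mul, abs_of_nonneg (by positivity)]
      rw [← this]
      have := abs_sub_abs_le_abs_sub ((2 ^ l) ^ r * Y) Z
      rw [abs_sub_comm] at this
      linarith
    have hX : |X| = T ^ k * |t ^ k * X| := by
      rw [abs_mul, ← mul_assoc, abs_of_nonneg (by positivity : 0 ≤ t ^ k), hTt, one_mul]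
    have hX2 : |t ^ k * X| ≤ |Y| + 2 ^ r * (((l + 2 : ℕ) : ℝ) * a) := by
      have := abs_sub_abs_le_abs_sub (t ^ k * X) Y
      rw [abs_sub_comm] at this
      linarith
    calc |X| = T ^ k * |t ^ k * X| := hX
      _ ≤ T ^ k * (|Y| + 2 ^ r * (((l + 2 : ℕ) : ℝ) * a)) := by gcongr
      _ = T ^ k * |Y| + T ^ k * (2 ^ r * (((l + 2 : ℕ) : ℝ) * a)) := by ring
      _ ≤ ((2 ^ l) ^ r / 2) * |Y| + T ^ k * (2 ^ r * (((l + 2 : ℕ) : ℝ) * a)) := by gcongr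
      _ ≤ _ := by linarith

lemma march_iter (k m : ℕ) (hkm : k + 1 ≤ m) : ∃ C : ℝ, 0 ≤ C ∧ ∀ (n : ℕ) (N : Seminorm ℝ (Fin n → ℝ))
    (f : (Fin n → ℝ) → ℝ) (a c M : ℝ), (∀ x, N x ≤ 1 → |f x| ≤ M) → QH N k f a →
    DB N m f c → DB N (k + 1) f (C * (a + c)) := by
  induction m, hkm using Nat.le_induction with
  | base => exact ⟨1, by norm_num, fun n N f a c M _ hq hf => hf.mono (by linarith [hq.nonneg])⟩
  | succ m hm ih =>
    obtain ⟨C, hC, h⟩ := ih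
    obtain ⟨C1, hC1, h1⟩ := march k m hm
    refine ⟨C * (1 + C1), by positivity, fun n N f a c M hM hq hf => ?_⟩
    refine (h n N f a _ M hM hq (h1 n N f a c M hM hq hf)).mono ?_
    have := hf.nonneg
    rw [mul_assoc]
    gcongr
    linarith

section decomp
open Polynomial

/-- dilation operator -/
noncomputable def Dil (n : ℕ) : Module.End ℝ ((Fin n → ℝ) → ℝ) :=
  LinearMap.funLeft ℝ ℝ (fun x : Fin n → ℝ => (1 / 2 : ℝ) • x)

lemma Dil_apply (n : ℕ) (f : (Fin n → ℝ) → ℝ) (x : Fin n → ℝ) : Dil n f x = f ((1 / 2 : ℝ) • x) := rfl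

lemma Dil_pow (n i : ℕ) (f : (Fin n → ℝ) → ℝ) (x : Fin n → ℝ) :
    ((Dil n) ^ i) f x = f ((1 / 2 : ℝ) ^ i • x) := by
  induction i generalizing x with
  | zero => simp
  | succ i ih => rw [pow_succ', Module.End.mul_apply, Dil_apply, ih, smul_smul, pow_succ]

lemma aeval_Dil (n : ℕ) (p : ℝ[X]) (f : (Fin n → ℝ) → ℝ) (x : Fin n → ℝ) :
    (aeval (Dil n) p f) x = ∑ i ∈ range (p.natDegree + 1), p.coeff i * f ((1 / 2 : ℝ) ^ i • x) := by
  rw [aeval_eq_sum_range]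
  simp [LinearMap.sum_apply, Finset.sum_apply, Dil_pow]

lemma half_pow_le (i : ℕ) : (1 / 2 : ℝ) ^ i ≤ 1 := pow_le_one₀ (by norm_num) (by norm_num)

lemma aeval_bdd (n : ℕ) (N : Seminorm ℝ (Fin n → ℝ)) (p : ℝ[X]) (f : (Fin n → ℝ) → ℝ) (M : ℝ)
    (hM : ∀ x, N x ≤ 1 → |f x| ≤ M) :
    ∀ x, N x ≤ 1 → |aeval (Dil n) p f x| ≤ (∑ i ∈ range (p.natDegree + 1), |p.coeff i|) * M := by
  intro x hx
  rw [aeval_Dil, Finset.sum_mul]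
  refine (Finset.abs_sum_le_sum_abs _ _).trans (Finset.sum_le_sum fun i _ => ?_)
  rw [abs_mul]
  exact mul_le_mul_of_nonneg_left (hM _ (N_smul_le hx (by positivity) (half_pow_le i))) (abs_nonneg _)

lemma aeval_DB (n : ℕ) (N : Seminorm ℝ (Fin n → ℝ)) (p : ℝ[X]) (f : (Fin n → ℝ) → ℝ) (m : ℕ) (c : ℝ)
    (hf : DB N m f c) :
    DB N m (aeval (Dil n) p f) ((∑ i ∈ range (p.natDegree + 1), |p.coeff i|) * c) := by
  intro x h hx
  have : dl m (aeval (Dil n) p f) x h = ∑ i ∈ range (p.natDegree + 1),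
      p.coeff i * dl m f ((1 / 2 : ℝ) ^ i • x) ((1 / 2 : ℝ) ^ i • h) := by
    unfold dl
    simp only [aeval_Dil, Finset.mul_sum]
    rw [Finset.sum_comm]
    refine Finset.sum_congr rfl fun i _ => Finset.sum_congr rfl fun j _ => ?_
    rw [smul_add, smul_comm]; ring
  rw [this, Finset.sum_mul]
  refine (Finset.abs_sum_le_sum_abs _ _).trans (Finset.sum_le_sum fun i _ => ?_)
  rw [abs_mul]
  refine mul_le_mul_of_nonneg_left (hf _ _ fun j hj => ?_) (abs_nonneg _)
  rw [smul_comm, ← smul_add]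
  exact N_smul_le (hx j hj) (by positivity) (half_pow_le i)

lemma W_aeval (n m : ℕ) (f : (Fin n → ℝ) → ℝ) (x : Fin n → ℝ) :
    W f m x = aeval (Dil n) (∏ l ∈ range m, (X - C ((1 / 2 : ℝ) ^ l))) f x := by
  induction m generalizing x with
  | zero => simp [W]
  | succ m ih =>
    rw [W, Finset.prod_range_succ, mul_comm (∏ l ∈ range m, (X - C ((1 / 2 : ℝ) ^ l))), map_mul, Module.End.mul_apply, map_sub, aeval_X, aeval_C,
      LinearMap.sub_apply, Pi.sub_apply, Dil_apply, ih, ih]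
    simp

lemma decomp (m : ℕ) (hm : 1 ≤ m) : ∃ C : ℝ, 0 ≤ C ∧ ∀ (n : ℕ) (N : Seminorm ℝ (Fin n → ℝ))
    (f : (Fin n → ℝ) → ℝ) (c M : ℝ), (∀ x, N x ≤ 1 → |f x| ≤ M) → DB N m f c →
    ∃ h : ℕ → (Fin n → ℝ) → ℝ, (∀ x, f x = ∑ k ∈ range m, h k x) ∧
      ∀ k < m, (∃ M', ∀ x, N x ≤ 1 → |h k x| ≤ M') ∧ DB N m (h k) (C * c) ∧ QH N k (h k) (C * c) := by
  obtain ⟨C1, hC1, h1⟩ := W_bound m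
  set v : ℕ → ℝ := fun l => (1 / 2 : ℝ) ^ l with hv
  have hinj : Set.InjOn v (range m) := by
    intro a _ b _ hab
    exact pow_right_injective₀ (by norm_num) (by norm_num) hab
  set b : ℕ → ℝ[X] := fun k => Lagrange.basis (range m) v k with hb
  set A : ℕ → ℝ := fun k => ∑ i ∈ range ((b k).natDegree + 1), |(b k).coeff i| with hA
  set w : ℕ → ℝ := fun k => ∏ j ∈ (range m).erase k, (v k - v j)⁻¹ with hw
  have hA0 : ∀ k, 0 ≤ A k := fun k => Finset.sum_nonneg fun _ _ => abs_nonneg _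
  have hb2 : ∀ k < m, (X - C (v k)) * b k = C (w k) * ∏ l ∈ range m, (X - C ((1 / 2 : ℝ) ^ l)) := by
    intro k hk
    rw [← Finset.mul_prod_erase (range m) _ (Finset.mem_range.2 hk), hb, hw]
    simp only [Lagrange.basis, Lagrange.basisDivisor, Finset.prod_mul_distrib, map_prod]
    ring
  refine ⟨∑ k ∈ range m, (A k + |w k| * C1), Finset.sum_nonneg fun k _ => by
    have := hA0 k; positivity, ?_⟩
  intro n N f c M hM hf
  refine ⟨fun k => aeval (Dil n) (b k) f, ?_, ?_⟩
  · intro x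
    have := Lagrange.sum_basis hinj ⟨0, Finset.mem_range.2 hm⟩
    have h2 : aeval (Dil n) (∑ k ∈ range m, b k) f x = f x := by rw [this]; simp
    rw [← h2, map_sum, LinearMap.sum_apply, Finset.sum_apply]
  · intro k hk
    have hc := hf.nonneg
    have hle : A k + |w k| * C1 ≤ ∑ k ∈ range m, (A k + |w k| * C1) :=
      Finset.single_le_sum (f := fun k => A k + |w k| * C1)
        (fun k _ => by have := hA0 k; positivity) (Finset.mem_range.2 hk)
    refine ⟨⟨_, aeval_bdd n N (b k) f M hM⟩, (aeval_DB n N (b k) f m c hf).mono ?_, ?_⟩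
    · gcongr
      have : 0 ≤ |w k| * C1 := by positivity
      exact le_trans (by change A k ≤ _; linarith) hle
    · intro x hx
      have e : aeval (Dil n) (b k) f ((1 / 2 : ℝ) • x) - (1 / 2 : ℝ) ^ k * aeval (Dil n) (b k) f x
          = w k * W f m x := by
        have := congrArg (fun p => aeval (Dil n) p f x) (hb2 k hk)
        simp only [map_mul, Module.End.mul_apply, map_sub, aeval_X, aeval_C, LinearMap.sub_apply,
          Pi.sub_apply, Dil_apply] at this
        rw [W_aeval]
        simpa [hv] using this
      rw [e, abs_mul]
      calc |w k| * |W f m x| ≤ |w k| * (C1 * c) := by gcongr; exact h1 n N f c hf x hx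
        _ = (|w k| * C1) * c := by ring
        _ ≤ _ := by gcongr; linarith [hA0 k]

end decomp
end Whit

namespace Whit

lemma W_QH (k l : ℕ) : ∃ C : ℝ, 0 ≤ C ∧ ∀ (n : ℕ) (N : Seminorm ℝ (Fin n → ℝ))
    (h : (Fin n → ℝ) → ℝ) (a : ℝ), QH N k h a → ∀ x, N x ≤ 1 →
    |W h l x - (∏ i ∈ range l, ((1 / 2 : ℝ) ^ k - (1 / 2 : ℝ) ^ i)) * h x| ≤ C * a := by
  induction l with
  | zero => exact ⟨0, le_rfl, fun n N h a _ x _ => by simp [W]⟩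
  | succ l ih =>
    obtain ⟨C, hC, ih⟩ := ih
    set p := ∏ i ∈ range l, ((1 / 2 : ℝ) ^ k - (1 / 2 : ℝ) ^ i) with hp
    refine ⟨2 * C + |p|, by positivity, fun n N h a hq x hx => ?_⟩
    have h1 := ih n N h a hq x hx
    have h2 := ih n N h a hq ((1 / 2 : ℝ) • x) (N_smul_le hx (by norm_num) (by norm_num))
    have h3 := hq x hx
    have ha := hq.nonneg
    rw [Finset.prod_range_succ, ← hp, W]
    have e : W h l ((1 / 2 : ℝ) • x) - (1 / 2 : ℝ) ^ l * W h l x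
        - p * ((1 / 2 : ℝ) ^ k - (1 / 2 : ℝ) ^ l) * h x
      = (W h l ((1 / 2 : ℝ) • x) - p * h ((1 / 2 : ℝ) • x))
        - (1 / 2 : ℝ) ^ l * (W h l x - p * h x)
        + p * (h ((1 / 2 : ℝ) • x) - (1 / 2 : ℝ) ^ k * h x) := by ring
    rw [e]
    refine (abs_add_le _ _).trans ?_
    have h4 := abs_sub (W h l ((1 / 2 : ℝ) • x) - p * h ((1 / 2 : ℝ) • x))
      ((1 / 2 : ℝ) ^ l * (W h l x - p * h x))
    have h5 : |(1 / 2 : ℝ) ^ l * (W h l x - p * h x)| ≤ C * a := by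
      rw [abs_mul, abs_of_nonneg (by positivity : (0:ℝ) ≤ (1/2)^l)]
      exact (mul_le_of_le_one_left (abs_nonneg _) (pow_le_one₀ (by norm_num) (by norm_num))).trans h1
    have h6 : |p * (h ((1 / 2 : ℝ) • x) - (1 / 2 : ℝ) ^ k * h x)| ≤ |p| * a := by
      rw [abs_mul]; gcongr
    linarith

lemma repr (k : ℕ) : ∃ σ C : ℝ, 0 ≤ C ∧ ∀ (n : ℕ) (N : Seminorm ℝ (Fin n → ℝ))
    (h : (Fin n → ℝ) → ℝ) (a : ℝ), QH N k h a → DB N (k + 1) h a → ∀ x, N x ≤ 1 →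
    |h x - σ * dl k h 0 ((1 / 2 : ℝ) ^ (3 * k + 2) • x)| ≤ C * a := by
  obtain ⟨C1, hC1, h1⟩ := W_QH k k
  obtain ⟨ρ, C2, hC2, h2⟩ := W_bound' k
  set p := ∏ i ∈ range k, ((1 / 2 : ℝ) ^ k - (1 / 2 : ℝ) ^ i) with hp
  have hp0 : p ≠ 0 := by
    refine Finset.prod_ne_zero_iff.2 fun i hi => ?_
    have := Finset.mem_range.1 hi
    have : (1 / 2 : ℝ) ^ k < (1 / 2 : ℝ) ^ i :=
      pow_lt_pow_right_of_lt_one₀ (by norm_num) (by norm_num) this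
    linarith
  set T : ℝ := ((2 : ℝ) ^ (2 * k + 2)) ^ k with hT
  have hT0 : 0 < T := by positivity
  refine ⟨T * (ρ / p), T * ((2 * k + 2 : ℕ) + (C1 + C2) / |p|), by positivity, ?_⟩
  intro n N h a hq hd x hx
  set y := (1 / 2 : ℝ) ^ (2 * k + 2) • x with hy
  have hyN : N y ≤ 1 := N_smul_le hx (by positivity) (pow_le_one₀ (by norm_num) (by norm_num))
  have e1 := hq.iter (2 * k + 2) x hx
  have e2 := h1 n N h a hq y hyN
  have e3 := h2 n N h a hd y hyN
  have ey : (1 / 2 : ℝ) ^ k • y = (1 / 2 : ℝ) ^ (3 * k + 2) • x := by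
    rw [hy, smul_smul, ← pow_add]; congr 2; ring
  rw [ey] at e3
  set D := dl k h 0 ((1 / 2 : ℝ) ^ (3 * k + 2) • x)
  rw [← hy] at e1
  have e4 : |h y - ρ / p * D| ≤ (C1 + C2) / |p| * a := by
    have e : h y - ρ / p * D = (p * h y - ρ * D) / p := by field_simp
    rw [e, abs_div, div_mul_eq_mul_div]
    gcongr
    rw [abs_le] at *
    constructor <;> linarith [e2.1, e2.2, e3.1, e3.2]
  have e5 : T * ((1 / 2 : ℝ) ^ (2 * k + 2)) ^ k = 1 := by
    rw [hT, ← mul_pow, ← mul_pow]; norm_num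
  have e : h x - T * (ρ / p) * D
      = T * ((h y - ρ / p * D) - (h y - ((1 / 2 : ℝ) ^ (2 * k + 2)) ^ k * h x)) := by
    linear_combination (-h x) * e5
  rw [e, abs_mul, abs_of_pos hT0, mul_assoc]
  gcongr
  refine (abs_sub _ _).trans ?_
  linarith

/-- mixed differences -/
def md {E : Type*} [AddCommGroup E] : (k : ℕ) → (Fin k → E) → (E → ℝ) → E → ℝ
  | 0, _, f, x => f x
  | k + 1, y, f, x => md k (Fin.tail y) f (x + y 0) - md k (Fin.tail y) f x

lemma md_zero {E : Type*} [AddCommGroup E] (k : ℕ) (y : Fin k → E) (f : E → ℝ) (i : Fin k)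
    (hi : y i = 0) (x : E) : md k y f x = 0 := by
  induction k generalizing x with
  | zero => exact i.elim0
  | succ k ih =>
    rw [md]
    refine Fin.cases ?_ ?_ i (motive := fun i => y i = 0 → _) hi
    · intro h; rw [h, add_zero, sub_self]
    · intro j hj
      rw [ih (Fin.tail y) j hj, ih (Fin.tail y) j hj, sub_self]

lemma md_add {E : Type*} [AddCommGroup E] (P : E → Prop) (k : ℕ) (y : Fin k → E) (f : E → ℝ)
    (i : Fin k) (u v : E) (hy : ∀ i, P (y i)) (hu : P u) (hv : P v) :
    ∃ z : Fin (k + 1) → E, (∀ i, P (z i)) ∧ ∀ x, md k (Function.update y i (u + v)) f x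
      - md k (Function.update y i u) f x - md k (Function.update y i v) f x = md (k + 1) z f x := by
  induction k with
  | zero => exact i.elim0
  | succ k ih =>
    refine Fin.cases ?_ ?_ i
    · refine ⟨Fin.cons u (Fin.cons v (Fin.tail y)), ?_, ?_⟩
      · intro i
        refine Fin.cases hu (fun i => ?_) i
        refine Fin.cases hv (fun i => ?_) i
        exact hy _
      · intro x
        simp only [md, Fin.tail_update_zero, Function.update_self, Fin.tail_cons, Fin.cons_zero]
        rw [add_assoc]; ring
    · intro j
      obtain ⟨z, hz, h⟩ := ih (Fin.tail y) j (fun i => hy _)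
      refine ⟨Fin.cons (y 0) z, fun i => Fin.cases (hy 0) hz i, fun x => ?_⟩
      have e : md (k + 1 + 1) (Fin.cons (y 0) z) f x = md (k + 1) z f (x + y 0) - md (k + 1) z f x := rfl
      rw [e]
      rw [← h, ← h]
      simp only [md, Fin.tail_update_succ]
      rw [Function.update_of_ne (Fin.succ_ne_zero j).symm, Function.update_of_ne (Fin.succ_ne_zero j).symm,
        Function.update_of_ne (Fin.succ_ne_zero j).symm]
      ring

lemma dl_succ {E : Type*} [AddCommGroup E] [Module ℝ E] (k : ℕ) (f : E → ℝ) (x h : E) :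
    dl (k + 1) f x h = dl k f (x + h) h - dl k f x h := by
  have key : ∀ k x, dl k f x h = ev (fun j => f (x + (j : ℝ) • h)) ((Polynomial.X - 1) ^ k) := by
    intro k x
    have := ev_diff (fun j => f (x + (j : ℝ) • h)) k 0
    rw [pow_zero, mul_one] at this
    rw [this]; simp [dl]
  have key2 : dl k f (x + h) h = ev (fun j => f (x + (j : ℝ) • h)) ((Polynomial.X - 1) ^ k * Polynomial.X ^ 1) := by
    rw [ev_diff, dl]
    refine Finset.sum_congr rfl fun j _ => ?_
    push_cast
    rw [add_smul, one_smul, add_assoc]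
  rw [key2, key, key, pow_succ, mul_sub, map_sub, mul_one, pow_one]

lemma md_const {E : Type*} [AddCommGroup E] [Module ℝ E] (k : ℕ) (f : E → ℝ) (x h : E) :
    md k (fun _ => h) f x = dl k f x h := by
  induction k generalizing x with
  | zero => simp [md, dl]
  | succ k ih =>
    rw [md, dl_succ]
    have : Fin.tail (fun _ : Fin (k + 1) => h) = fun _ => h := rfl
    rw [this, ih, ih]

variable {n : ℕ} {N : Seminorm ℝ (Fin n → ℝ)}

lemma md_aux {m : ℕ} {f : (Fin n → ℝ) → ℝ} {c : ℝ} (hf : DB N m f c) (k : ℕ)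
    (p q : Fin k → (Fin n → ℝ)) (x h : Fin n → ℝ)
    (H : ∀ j : ℕ, j ≤ m → N (x + (j : ℝ) • h) + ∑ i, N (p i + (j : ℝ) • q i) ≤ 1) :
    |∑ j ∈ range (m + 1), (-1 : ℝ) ^ (m - j) * (m.choose j : ℝ) *
      md k (fun i => p i + (j : ℝ) • q i) f (x + (j : ℝ) • h)| ≤ 2 ^ k * c := by
  induction k generalizing x h with
  | zero =>
    simp only [md]
    rw [pow_zero, one_mul]
    exact hf x h fun j hj => by simpa using H j hj
  | succ k ih =>
    have h1 := ih (Fin.tail p) (Fin.tail q) (x + p 0) (h + q 0) (fun j hj => by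
      have := H j hj
      rw [Fin.sum_univ_succ] at this
      have t := map_add_le_add N (x + (j : ℝ) • h) (p 0 + (j : ℝ) • q 0)
      have e : x + p 0 + (j : ℝ) • (h + q 0) = (x + (j : ℝ) • h) + (p 0 + (j : ℝ) • q 0) := by
        rw [smul_add]; abel
      rw [e]
      simp only [Fin.tail]
      linarith)
    have h2 := ih (Fin.tail p) (Fin.tail q) x h (fun j hj => by
      have := H j hj
      rw [Fin.sum_univ_succ] at this
      have t := apply_nonneg N (p 0 + (j : ℝ) • q 0)
      simp only [Fin.tail]
      linarith)
    have e : ∀ j : ℕ, md (k + 1) (fun i => p i + (j : ℝ) • q i) f (x + (j : ℝ) • h)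
      = md k (fun i => Fin.tail p i + (j : ℝ) • Fin.tail q i) f (x + p 0 + (j : ℝ) • (h + q 0))
        - md k (fun i => Fin.tail p i + (j : ℝ) • Fin.tail q i) f (x + (j : ℝ) • h) := by
      intro j
      rw [md]
      have e : x + p 0 + (j : ℝ) • (h + q 0) = (x + (j : ℝ) • h) + (p 0 + (j : ℝ) • q 0) := by
        rw [smul_add]; abel
      rw [e]; rfl
    simp only [e, mul_sub, Finset.sum_sub_distrib]
    refine (abs_sub _ _).trans ?_
    rw [pow_succ]; linarith

lemma md_bound {m : ℕ} (hm : 1 ≤ m) {f : (Fin n → ℝ) → ℝ} {c : ℝ} (hf : DB N m f c)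
    (y : Fin m → (Fin n → ℝ)) (hy : ∀ i, N (y i) ≤ 1 / (m : ℝ) ^ 2) : |md m y f 0| ≤ 2 ^ m * c := by
  have hm0 : (0 : ℝ) < m := by exact_mod_cast hm
  have hm1 : (1 : ℝ) ≤ m := by exact_mod_cast hm
  have h := md_aux hf m y (fun i => (-(1 / ((i : ℕ) + 1 : ℝ))) • y i) 0 0 (by
    intro j hj
    rw [smul_zero, add_zero, map_zero, zero_add]
    have : ∀ i : Fin m, N (y i + (j : ℝ) • (-(1 / ((i : ℕ) + 1 : ℝ))) • y i) ≤ 1 / m := by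
      intro i
      have e : y i + (j : ℝ) • (-(1 / ((i : ℕ) + 1 : ℝ))) • y i
          = (1 - (j : ℝ) / ((i : ℕ) + 1 : ℝ)) • y i := by
        rw [smul_smul, sub_smul, one_smul, mul_neg, neg_smul, mul_one_div]; abel
      rw [e, map_smul_eq_mul, Real.norm_eq_abs]
      have hj' : (j : ℝ) ≤ m := by exact_mod_cast hj
      have h1 : |1 - (j : ℝ) / ((i : ℕ) + 1 : ℝ)| ≤ m := by
        have h2 : 0 ≤ (j : ℝ) / ((i : ℕ) + 1 : ℝ) := by positivity
        have h3 : (j : ℝ) / ((i : ℕ) + 1 : ℝ) ≤ m :=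
          (div_le_self (by positivity) (by linarith [(Nat.cast_nonneg (i : ℕ) : (0:ℝ) ≤ _)])).trans hj'
        rw [abs_le]; constructor <;> linarith
      calc _ ≤ (m : ℝ) * (1 / (m : ℝ) ^ 2) := mul_le_mul h1 (hy i) (apply_nonneg _ _) hm0.le
        _ = 1 / m := by field_simp
    calc _ ≤ ∑ i : Fin m, (1 / (m : ℝ)) := Finset.sum_le_sum fun i _ => this i
      _ = 1 := by simp; field_simp
      _ ≤ 1 := le_rfl)
  rw [Finset.sum_eq_single 0] at h
  · simpa [abs_mul] using h
  · intro j hj hj0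
    have hj := Finset.mem_range.1 hj
    rw [md_zero (i := ⟨j - 1, by omega⟩), mul_zero]
    have : ((j - 1 : ℕ) : ℝ) + 1 = j := by
      have : j - 1 + 1 = j := by omega
      exact_mod_cast this
    have hj' : (j : ℝ) ≠ 0 := by exact_mod_cast hj0
    simp only [this]
    rw [smul_smul, mul_neg, mul_one_div_cancel hj', neg_smul, one_smul, add_neg_cancel]
  · intro h; simp at h

lemma t_le (k : ℕ) : (1 / 2 : ℝ) ^ (3 * k + 2) ≤ 1 / ((k + 1 : ℕ) : ℝ) ^ 2 := by
  rw [one_div_pow]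
  have h1 : (k + 1) ≤ 2 ^ (k + 1) := Nat.lt_two_pow_self.le
  have h2 : (k + 1) ^ 2 ≤ 2 ^ (3 * k + 2) := by
    calc (k + 1) ^ 2 ≤ (2 ^ (k + 1)) ^ 2 := Nat.pow_le_pow_left h1 2
      _ = 2 ^ (2 * k + 2) := by rw [← pow_mul]; congr 1; ring
      _ ≤ _ := Nat.pow_le_pow_right (by norm_num) (by omega)
  have h3 : ((k + 1 : ℕ) : ℝ) ^ 2 ≤ 2 ^ (3 * k + 2) := by exact_mod_cast h2
  exact one_div_le_one_div_of_le (by positivity) h3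

/-- quasi-multi-additive on the ball -/
def QM {n : ℕ} (N : Seminorm ℝ (Fin n → ℝ)) (k : ℕ) (b : (Fin k → (Fin n → ℝ)) → ℝ) (c M : ℝ) : Prop :=
  (∀ x, (∀ i, N (x i) ≤ 1) → |b x| ≤ M) ∧
  ∀ x, (∀ i, N (x i) ≤ 1) → ∀ i u v, N u ≤ 1 → N v ≤ 1 → N (u + v) ≤ 1 →
    |b (Function.update x i (u + v)) - b (Function.update x i u) - b (Function.update x i v)| ≤ c

lemma md_bdd {f : (Fin n → ℝ) → ℝ} {M : ℝ} (hM : ∀ x, N x ≤ 1 → |f x| ≤ M) (k : ℕ)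
    (y : Fin k → (Fin n → ℝ)) (x : Fin n → ℝ) (hx : N x + ∑ i, N (y i) ≤ 1) :
    |md k y f x| ≤ 2 ^ k * M := by
  induction k generalizing x with
  | zero => simpa [md] using hM x (by simpa using hx)
  | succ k ih =>
    rw [Fin.sum_univ_succ] at hx
    have h1 := ih (Fin.tail y) (x + y 0) (by
      have := map_add_le_add N x (y 0); simp only [Fin.tail]; linarith)
    have h2 := ih (Fin.tail y) x (by
      have := apply_nonneg N (y 0); simp only [Fin.tail]; linarith)
    rw [md, pow_succ]
    refine (abs_sub _ _).trans ?_
    linarith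

lemma md_QM {k : ℕ} {f : (Fin n → ℝ) → ℝ} {c M : ℝ} (hM : ∀ x, N x ≤ 1 → |f x| ≤ M)
    (hf : DB N (k + 1) f c) :
    QM N k (fun x => md k (fun i => (1 / 2 : ℝ) ^ (3 * k + 2) • x i) f 0) (2 ^ (k + 1) * c) (2 ^ k * M) := by
  have ht : ∀ u : Fin n → ℝ, N u ≤ 1 → N ((1 / 2 : ℝ) ^ (3 * k + 2) • u) ≤ 1 / ((k + 1 : ℕ) : ℝ) ^ 2 := by
    intro u hu
    rw [map_smul_eq_mul, Real.norm_of_nonneg (by positivity)]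
    exact (mul_le_of_le_one_right (by positivity) hu).trans (t_le k)
  constructor
  · intro x hx
    refine md_bdd hM k _ 0 ?_
    rw [map_zero, zero_add]
    have hk : (0 : ℝ) < (k + 1 : ℕ) := by positivity
    calc _ ≤ ∑ i : Fin k, 1 / ((k + 1 : ℕ) : ℝ) ^ 2 := Finset.sum_le_sum fun i _ => ht _ (hx i)
      _ = k / ((k + 1 : ℕ) : ℝ) ^ 2 := by simp; ring
      _ ≤ 1 := by
        rw [div_le_one (by positivity)]; push_cast; nlinarith [(Nat.cast_nonneg k : (0:ℝ) ≤ k)]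
  · intro x hx i u v hu hv huv
    have e : ∀ w, (fun j => (1 / 2 : ℝ) ^ (3 * k + 2) • Function.update x i w j)
        = Function.update (fun j => (1 / 2 : ℝ) ^ (3 * k + 2) • x j) i ((1 / 2 : ℝ) ^ (3 * k + 2) • w) := by
      intro w; ext1 j
      by_cases h : j = i
      · subst h; simp
      · simp [h]
    obtain ⟨z, hz, h⟩ := md_add (fun w => N w ≤ 1 / ((k + 1 : ℕ) : ℝ) ^ 2) k
      (fun j => (1 / 2 : ℝ) ^ (3 * k + 2) • x j) f i ((1 / 2 : ℝ) ^ (3 * k + 2) • u)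
      ((1 / 2 : ℝ) ^ (3 * k + 2) • v) (fun i => ht _ (hx i)) (ht _ hu) (ht _ hv)
    simp only [e, smul_add]
    rw [h]
    exact md_bound (by omega) hf z hz

end Whit

namespace Whit

variable {n : ℕ} {N : Seminorm ℝ (Fin n → ℝ)}

lemma QA_smul {F : (Fin n → ℝ) → ℝ} {c M : ℝ} (hM : ∀ x, N x ≤ 1 → |F x| ≤ M)
    (hF : ∀ u v, N u ≤ 1 → N v ≤ 1 → N (u + v) ≤ 1 → |F (u + v) - F u - F v| ≤ c)
    (t : ℝ) (h0 : 0 ≤ t) (h1 : t ≤ 1) (u : Fin n → ℝ) (hu : N u ≤ 1) :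
    |F (t • u) - t * F u| ≤ 3 * c := by
  have := iter (α := ℝ × (Fin n → ℝ)) (fun z => 0 ≤ z.1 ∧ z.1 ≤ 1 ∧ N z.2 ≤ 1)
    (fun z => F (z.1 • z.2) - z.1 * F z.2) (3 / 2 * c) (2 * M) ?_ ?_ (t, u) ⟨h0, h1, hu⟩
  · simpa [← mul_assoc] using this.trans (le_of_eq (by ring))
  · rintro ⟨t, u⟩ ⟨h0, h1, hu⟩
    simp only at *
    have a1 := hM _ (N_smul_le hu h0 h1)
    have a2 := hM _ hu
    have a3 : |t * F u| ≤ M := by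
      rw [abs_mul, abs_of_nonneg h0]
      exact (mul_le_of_le_one_left (abs_nonneg _) h1).trans a2
    exact (abs_sub _ _).trans (by linarith)
  · intro A hA
    have small : ∀ t u, 0 ≤ t → t ≤ 1 / 2 → N u ≤ 1 → |F (t • u) - t * F u| ≤ (A + c) / 2 := by
      intro t u h0 h1 hu
      have a1 := hA (2 * t, u) ⟨by simp; linarith, by simp; linarith, hu⟩
      have hx := N_smul_le hu h0 (by linarith)
      have e : t • u + t • u = (2 * t) • u := by rw [← add_smul]; congr 1; ring
      have a2 := hF _ _ hx hx (by rw [e]; exact N_smul_le hu (by linarith) (by linarith))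
      rw [e] at a2
      simp only at a1
      rw [abs_le] at *
      constructor <;> linarith [a1.1, a1.2, a2.1, a2.2]
    rintro ⟨t, u⟩ ⟨h0, h1, hu⟩
    simp only at *
    have hc : 0 ≤ c := (abs_nonneg _).trans (hF 0 0 (by simp) (by simp) (by simp))
    by_cases ht : t ≤ 1 / 2
    · exact (small t u h0 ht hu).trans (by linarith)
    · push Not at ht
      have a1 := small (1 - t) u (by linarith) (by linarith) hu
      have e : t • u + (1 - t) • u = u := by rw [← add_smul]; simp
      have a2 := hF (t • u) ((1 - t) • u) (N_smul_le hu h0 h1)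
        (N_smul_le hu (by linarith) (by linarith)) (by rw [e]; exact hu)
      rw [e] at a2
      rw [abs_le] at *
      constructor <;> linarith [a1.1, a1.2, a2.1, a2.2]

/-- homogeneous quasi-additive -/
structure HQ {n : ℕ} (N : Seminorm ℝ (Fin n → ℝ)) (G : (Fin n → ℝ) → ℝ) (d : ℝ) : Prop where
  d0 : 0 ≤ d
  hom : ∀ t : ℝ, 0 ≤ t → ∀ x, G (t • x) = t * G x
  add : ∀ x y, |G (x + y) - G x - G y| ≤ d * (N x + N y)

lemma homog (hN : ∀ x, N x = 0 → x = 0) {F : (Fin n → ℝ) → ℝ} {c M : ℝ}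
    (hM : ∀ x, N x ≤ 1 → |F x| ≤ M)
    (hF : ∀ u v, N u ≤ 1 → N v ≤ 1 → N (u + v) ≤ 1 → |F (u + v) - F u - F v| ≤ c) :
    ∃ G, HQ N G (10 * c) ∧ ∀ x, N x ≤ 1 → |G x - F x| ≤ 3 * c := by
  have hc : 0 ≤ c := (abs_nonneg _).trans (hF 0 0 (by simp) (by simp) (by simp))
  set G : (Fin n → ℝ) → ℝ := fun x => N x * F ((N x)⁻¹ • x) with hG
  have key : ∀ s : ℝ, 0 < s → ∀ w, N w ≤ s → |G w - s * F (s⁻¹ • w)| ≤ 3 * c * s := by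
    intro s hs w hw
    have hfac : G w - s * F (s⁻¹ • w) = -(s * (F (s⁻¹ • w) - (N w / s) * F ((N w)⁻¹ • w))) := by
      rw [hG]; field_simp; ring
    rw [hfac, abs_neg, abs_mul, abs_of_pos hs, mul_comm]
    gcongr
    rcases eq_or_ne (N w) 0 with h | h
    · have := hN w h
      subst this
      have := hF 0 0 (by simp) (by simp) (by simp)
      simp only [map_zero, smul_zero, zero_div, zero_mul, sub_zero, add_zero, sub_self, zero_sub, abs_neg] at *
      linarith
    · have hw0 : 0 < N w := lt_of_le_of_ne (apply_nonneg _ _) (Ne.symm h)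
      have := QA_smul hM hF (N w / s) (by positivity) (by rw [div_le_one hs]; exact hw) ((N w)⁻¹ • w)
        (by rw [map_smul_eq_mul, Real.norm_of_nonneg (by positivity), inv_mul_cancel₀ h])
      have e : (N w / s) • (N w)⁻¹ • w = s⁻¹ • w := by
        rw [smul_smul]; congr 1; field_simp
      rwa [e] at this
  refine ⟨G, ⟨by positivity, ?_, ?_⟩, ?_⟩
  · intro t ht x
    rcases eq_or_lt_of_le ht with h | h
    · subst h; simp [hG]
    · simp only [hG, map_smul_eq_mul, Real.norm_of_nonneg ht, smul_smul]
      have : (t * N x)⁻¹ * t = (N x)⁻¹ := by rw [mul_inv]; field_simp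
      rw [this, mul_assoc]
  · intro x y
    set s := N x + N y with hs
    have hx0 := apply_nonneg N x
    have hy0 := apply_nonneg N y
    rcases eq_or_lt_of_le (add_nonneg hx0 hy0) with h | h
    · have hx : x = 0 := hN x (by linarith)
      have hy : y = 0 := hN y (by linarith)
      subst hx hy
      simp [hG, hs]
    · have k1 := key s h x (by linarith)
      have k2 := key s h y (by linarith)
      have k3 := key s h (x + y) (map_add_le_add _ _ _)
      have nn : ∀ w, N w ≤ s → N (s⁻¹ • w) ≤ 1 := by
        intro w hw
        rw [map_smul_eq_mul, Real.norm_of_nonneg (by positivity), inv_mul_le_one₀ h]; exact hw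
      have k4 := hF (s⁻¹ • x) (s⁻¹ • y) (nn x (by linarith)) (nn y (by linarith))
        (by rw [← smul_add]; exact nn _ (map_add_le_add _ _ _))
      rw [← smul_add] at k4
      have k5 : |s * (F (s⁻¹ • (x + y)) - F (s⁻¹ • x) - F (s⁻¹ • y))| ≤ s * c := by
        rw [abs_mul, abs_of_pos h]; gcongr
      rw [abs_le] at *
      constructor <;> nlinarith [k1.1, k1.2, k2.1, k2.2, k3.1, k3.2, k5.1, k5.2]
  · intro x hx
    have := key 1 one_pos x hx
    simpa using this

variable {G : (Fin n → ℝ) → ℝ} {d : ℝ}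

lemma HQ.zero (h : HQ N G d) : G 0 = 0 := by
  have := h.hom 0 le_rfl 0
  simpa using this

lemma HQ.neg (h : HQ N G d) (x : Fin n → ℝ) : |G (-x) + G x| ≤ 2 * d * N x := by
  have := h.add x (-x)
  rw [add_neg_cancel, h.zero, map_neg_eq_map, zero_sub, ← abs_neg] at this
  refine le_trans (le_of_eq ?_) (this.trans (le_of_eq (by ring)))
  congr 1; ring

lemma HQ.tree (h : HQ N G d) {ι : Type*} (x : ι → (Fin n → ℝ)) (p : ℕ) :
    ∀ S : Finset ι, S.card ≤ 2 ^ p →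
      |G (∑ i ∈ S, x i) - ∑ i ∈ S, G (x i)| ≤ d * p * ∑ i ∈ S, N (x i) := by
  classical
  have hd := h.d0
  induction p with
  | zero =>
    intro S hS
    rw [pow_zero] at hS
    rcases Nat.le_one_iff_eq_zero_or_eq_one.1 hS with h0 | h1
    · rw [Finset.card_eq_zero] at h0
      subst h0; simp [h.zero]
    · obtain ⟨a, rfl⟩ := Finset.card_eq_one.1 h1
      simp
  | succ p ih =>
    intro S hS
    by_cases hc : S.card ≤ 2 ^ p
    · refine (ih S hc).trans ?_
      have : 0 ≤ ∑ i ∈ S, N (x i) := Finset.sum_nonneg fun i _ => apply_nonneg _ _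
      gcongr; simp
    · obtain ⟨T, hT, hTc⟩ := Finset.exists_subset_card_eq (not_le.1 hc).le
      have h1 := ih T hTc.le
      have h2 := ih (S \ T) (by rw [Finset.card_sdiff_of_subset hT, hTc]; rw [pow_succ] at hS; omega)
      have h3 := h.add (∑ i ∈ S \ T, x i) (∑ i ∈ T, x i)
      rw [Finset.sum_sdiff hT] at h3
      rw [← Finset.sum_sdiff hT (f := fun i => G (x i)), ← Finset.sum_sdiff hT (f := fun i => N (x i))]
      have sub : ∀ T : Finset ι, N (∑ i ∈ T, x i) ≤ ∑ i ∈ T, N (x i) := fun T =>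
        Finset.le_sum_of_subadditive N (map_zero N).le (map_add_le_add N) T x
      have h4 : d * (N (∑ i ∈ S \ T, x i) + N (∑ i ∈ T, x i))
          ≤ d * (∑ i ∈ S \ T, N (x i) + ∑ i ∈ T, N (x i)) := by
        gcongr <;> exact sub _
      push_cast
      rw [abs_le] at *
      constructor <;> nlinarith [h1.1, h1.2, h2.1, h2.2, h3.1, h3.2]

lemma HQ.signed (h : HQ N G d) (x : Fin n → ℝ) (t : ℝ) : |G (t • x) - t * G x| ≤ 2 * d * (|t| * N x) := by
  have hd := h.d0
  rcases le_total 0 t with ht | ht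
  · rw [h.hom t ht, sub_self, abs_zero]
    have := apply_nonneg N x
    positivity
  · have e : t • x = (-t) • (-x) := by simp
    rw [e, h.hom (-t) (by linarith), abs_of_nonpos ht]
    have := h.neg x
    have e2 : -t * G (-x) - t * G x = (-t) * (G (-x) + G x) := by ring
    rw [e2, abs_mul, abs_of_nonneg (by linarith : 0 ≤ -t)]
    calc _ ≤ -t * (2 * d * N x) := mul_le_mul_of_nonneg_left this (by linarith)
      _ = _ := by ring

lemma HQ.comb (h : HQ N G d) {ι : Type*} (x : ι → (Fin n → ℝ)) (l : ι → ℝ) (p : ℕ)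
    (S : Finset ι) (hS : S.card ≤ 2 ^ p) (hx : ∀ i ∈ S, N (x i) ≤ 1) :
      |G (∑ i ∈ S, l i • x i) - ∑ i ∈ S, l i * G (x i)| ≤ d * (p + 2) * ∑ i ∈ S, |l i| := by
  have hd := h.d0
  have h1 := h.tree (fun i => l i • x i) p S hS
  have h2 : |∑ i ∈ S, G (l i • x i) - ∑ i ∈ S, l i * G (x i)| ≤ 2 * d * ∑ i ∈ S, |l i| * N (x i) := by
    rw [← Finset.sum_sub_distrib, Finset.mul_sum]
    exact (Finset.abs_sum_le_sum_abs _ _).trans (Finset.sum_le_sum fun i _ => h.signed _ _)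
  have h3 : ∑ i ∈ S, |l i| * N (x i) ≤ ∑ i ∈ S, |l i| :=
    Finset.sum_le_sum fun i hi => mul_le_of_le_one_right (abs_nonneg _) (hx i hi)
  simp only [map_smul_eq_mul, Real.norm_eq_abs] at h1
  have h4 : d * p * ∑ i ∈ S, |l i| * N (x i) ≤ d * p * ∑ i ∈ S, |l i| := by gcongr
  have h5 : 2 * d * ∑ i ∈ S, |l i| * N (x i) ≤ 2 * d * ∑ i ∈ S, |l i| := by gcongr
  have := abs_add_le (G (∑ i ∈ S, l i • x i) - ∑ i ∈ S, G (l i • x i))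
    (∑ i ∈ S, G (l i • x i) - ∑ i ∈ S, l i * G (x i))
  rw [sub_add_sub_cancel] at this
  linarith

lemma HQ.hull (h : HQ N G d) {p : ℕ} (hp : n + 2 ≤ 2 ^ p) (z : (Fin n → ℝ) × ℝ)
    (hz : z ∈ convexHull ℝ {w : (Fin n → ℝ) × ℝ | N w.1 ≤ 1 ∧ w.2 = G w.1}) : G z.1 ≤ z.2 + d * p := by
  have hd := h.d0
  rw [convexHull_eq_union] at hz
  simp only [Set.mem_iUnion] at hz
  obtain ⟨t, hts, hai, hz⟩ := hz
  have hcard : t.card ≤ 2 ^ p := by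
    have h1 := hai.card_le_finrank_succ
    rw [Fintype.card_coe] at h1
    have h2 := Submodule.finrank_le (vectorSpan ℝ (Set.range ((↑) : t → (Fin n → ℝ) × ℝ)))
    rw [Module.finrank_prod, Module.finrank_self, Module.finrank_fin_fun] at h2
    omega
  rw [Finset.mem_convexHull'] at hz
  obtain ⟨w, hw0, hw1, hz⟩ := hz
  have h1 := h.tree (fun y : (Fin n → ℝ) × ℝ => w y • y.1) p t hcard
  have e1 : z.1 = ∑ y ∈ t, w y • y.1 := by rw [← hz, Prod.fst_sum]; rfl
  have e2 : z.2 = ∑ y ∈ t, G (w y • y.1) := by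
    rw [← hz, Prod.snd_sum]
    refine Finset.sum_congr rfl fun y hy => ?_
    rw [h.hom _ (hw0 y hy), ← (hts hy).2]; rfl
  rw [← e1, ← e2] at h1
  have h3 : ∑ i ∈ t, N (w i • i.1) ≤ 1 := by
    rw [← hw1]
    refine Finset.sum_le_sum fun y hy => ?_
    rw [map_smul_eq_mul, Real.norm_of_nonneg (hw0 y hy)]
    exact mul_le_of_le_one_right (hw0 y hy) (hts hy).1
  have h4 : d * p * ∑ i ∈ t, N (w i • i.1) ≤ d * p := mul_le_of_le_one_right (by positivity) h3
  linarith [(abs_le.1 h1).2]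

lemma HQ.list (hN : ∀ x, N x = 0 → x = 0) (h : HQ N G d) (l : List (Fin n → ℝ)) :
    ∃ z ∈ convexHull ℝ {w : (Fin n → ℝ) × ℝ | N w.1 ≤ 1 ∧ w.2 = G w.1},
      0 ≤ (l.map N).sum ∧ l.sum = (l.map N).sum • z.1 ∧ (l.map G).sum = (l.map N).sum * z.2 := by
  induction l with
  | nil => exact ⟨(0, 0), subset_convexHull _ _ ⟨by simp, by simp [h.zero]⟩, by simp⟩
  | cons a l ih =>
    obtain ⟨z, hz, h0, h1, h2⟩ := ih
    simp only [List.sum_cons, List.map_cons]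
    set W := (l.map N).sum
    rcases eq_or_ne (N a) 0 with ha | ha
    · have := hN a ha
      subst this
      exact ⟨z, hz, by simpa using h0, by simpa using h1, by simpa [h.zero] using h2⟩
    · have ha0 : 0 < N a := lt_of_le_of_ne (apply_nonneg _ _) (Ne.symm ha)
      have hW : 0 < N a + W := by linarith
      have hb : (((N a)⁻¹ • a, G ((N a)⁻¹ • a)) : (Fin n → ℝ) × ℝ) ∈
          convexHull ℝ {w : (Fin n → ℝ) × ℝ | N w.1 ≤ 1 ∧ w.2 = G w.1} := by
        refine subset_convexHull _ _ ⟨?_, rfl⟩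
        simp only
        rw [map_smul_eq_mul, Real.norm_of_nonneg (by positivity), inv_mul_cancel₀ ha]
      refine ⟨_, convex_convexHull ℝ _ hb hz (a := N a / (N a + W)) (b := W / (N a + W))
        (by positivity) (by positivity) (by field_simp), hW.le, ?_, ?_⟩
      · simp only [Prod.fst_add, Prod.smul_fst, smul_add, smul_smul, h1]
        congr 1
        · rw [show (N a + W) * (N a / (N a + W) * (N a)⁻¹) = 1 by field_simp, one_smul]
        · congr 1; field_simp
      · simp only [Prod.snd_add, Prod.smul_snd, h2, h.hom _ (inv_nonneg.2 ha0.le), smul_eq_mul]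
        field_simp

lemma HQ.linear (hN : ∀ x, N x = 0 → x = 0) (h : HQ N G d) {p : ℕ} (hp : n + 2 ≤ 2 ^ p) :
    ∃ L : (Fin n → ℝ) →ₗ[ℝ] ℝ, ∀ x, |G x - L x| ≤ d * (p + 2) * N x := by
  set g : (Fin n → ℝ) → ℝ := fun x => G x + d * p * N x with hg
  have glist : ∀ l : List (Fin n → ℝ), (l.map g).sum = (l.map G).sum + d * p * (l.map N).sum := by
    intro l
    induction l with
    | nil => simp
    | cons a l ih => rw [List.map_cons, List.sum_cons, ih]; simp only [List.map_cons, List.sum_cons, hg]; ring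
  have lower : ∀ l : List (Fin n → ℝ), G l.sum ≤ (l.map g).sum := by
    intro l
    obtain ⟨z, hz, h0, h1, h2⟩ := h.list hN l
    have := h.hull hp z hz
    rw [glist, h1, h2, h.hom _ h0]
    nlinarith
  set S : (Fin n → ℝ) → Set ℝ := fun x => {r | ∃ l : List (Fin n → ℝ), l.sum = x ∧ r = (l.map g).sum} with hS
  have bdd : ∀ x, BddBelow (S x) := by
    intro x
    refine ⟨G x, ?_⟩
    rintro r ⟨l, hl, rfl⟩
    rw [← hl]; exact lower l
  have mem : ∀ x, g x ∈ S x := fun x => ⟨[x], by simp, by simp⟩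
  have ne : ∀ x, (S x).Nonempty := fun x => ⟨_, mem x⟩
  have ghom : ∀ c : ℝ, 0 < c → ∀ x, g (c • x) = c * g x := by
    intro c hc x
    simp only [hg, h.hom c hc.le, map_smul_eq_mul, Real.norm_of_nonneg hc.le]; ring
  have shom : ∀ c : ℝ, 0 < c → ∀ x r, r ∈ S x → c * r ∈ S (c • x) := by
    rintro c hc x r ⟨l, hl, rfl⟩
    refine ⟨l.map (c • ·), ?_, ?_⟩
    · rw [← hl, List.smul_sum]
    · rw [List.map_map, ← List.sum_map_mul_left]
      congr 1
      refine List.map_congr_left fun x _ => ?_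
      simp [ghom c hc]
  have hom1 : ∀ c : ℝ, 0 < c → ∀ x, sInf (S (c • x)) ≤ c * sInf (S x) := by
    intro c hc x
    rw [← div_le_iff₀' hc]
    refine le_csInf (ne x) fun r hr => ?_
    rw [div_le_iff₀' hc]
    exact csInf_le (bdd _) (shom c hc x r hr)
  obtain ⟨L, -, hL⟩ := exists_extension_of_le_sublinear (⊥ : (Fin n → ℝ) →ₗ.[ℝ] ℝ)
    (fun x => sInf (S x)) (by
      intro c hc x
      refine le_antisymm (hom1 c hc x) ?_
      have := hom1 c⁻¹ (inv_pos.2 hc) (c • x)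
      rw [smul_smul, inv_mul_cancel₀ hc.ne', one_smul] at this
      rwa [← le_inv_mul_iff₀ hc]) (by
      intro x y
      rw [← sub_le_iff_le_add]
      refine le_csInf (ne x) fun r hr => ?_
      rw [sub_le_comm]
      refine le_csInf (ne y) fun r' hr' => ?_
      rw [sub_le_iff_le_add]
      obtain ⟨l, hl, rfl⟩ := hr
      obtain ⟨l', hl', rfl⟩ := hr'
      exact csInf_le (bdd _) ⟨l ++ l', by simp [hl, hl'], by simp [add_comm]⟩) (by
      rintro ⟨x, hx⟩
      have hx0 : x = 0 := hx
      subst hx0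
      have : (⊥ : (Fin n → ℝ) →ₗ.[ℝ] ℝ) ⟨0, hx⟩ = 0 := by
        exact LinearPMap.map_zero _
      rw [this]
      refine le_csInf (ne _) ?_
      rintro r ⟨l, hl, rfl⟩
      have := lower l
      rw [hl, h.zero] at this
      exact this)
  refine ⟨L, fun x => ?_⟩
  have up : ∀ x, L x ≤ G x + d * p * N x := fun x => (hL x).trans (csInf_le (bdd _) (mem x))
  have a1 := up x
  have a2 := up (-x)
  rw [map_neg, map_neg_eq_map] at a2
  have a3 := h.neg x
  have hd := h.d0
  have hx0 := apply_nonneg N x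
  have : 0 ≤ d * N x := by positivity
  rw [abs_le] at *
  constructor <;> nlinarith [a3.1, a3.2]

end Whit

namespace Whit

variable {n : ℕ} {N : Seminorm ℝ (Fin n → ℝ)}

lemma N_le_norm (N : Seminorm ℝ (Fin n → ℝ)) : ∃ C : ℝ, 0 ≤ C ∧ ∀ x, N x ≤ C * ‖x‖ := by
  refine ⟨∑ i, N (Pi.single i 1), Finset.sum_nonneg fun i _ => apply_nonneg _ _, fun x => ?_⟩
  have e : x = ∑ i, x i • (Pi.single i 1 : Fin n → ℝ) := by
    ext j; simp [Finset.sum_apply, Pi.single_apply]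
  calc N x = N (∑ i, x i • (Pi.single i 1 : Fin n → ℝ)) := by rw [← e]
    _ ≤ ∑ i, N (x i • (Pi.single i 1 : Fin n → ℝ)) :=
      Finset.le_sum_of_subadditive N (map_zero N).le (map_add_le_add N) _ _
    _ ≤ _ := by
      rw [Finset.sum_mul]
      refine Finset.sum_le_sum fun i _ => ?_
      rw [map_smul_eq_mul, mul_comm]
      exact mul_le_mul_of_nonneg_left (norm_le_pi_norm x i) (apply_nonneg _ _)

lemma N_cont (N : Seminorm ℝ (Fin n → ℝ)) : Continuous N := by
  obtain ⟨C, hC, h⟩ := N_le_norm N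
  refine (LipschitzWith.of_dist_le_mul (K := ⟨C, hC⟩) fun x y => ?_).continuous
  rw [Real.dist_eq, dist_eq_norm]
  exact (abs_sub_map_le_sub N x y).trans (h _)

lemma ball_compact (hN : ∀ x, N x = 0 → x = 0) : IsCompact {x | N x ≤ 1} := by
  rcases Nat.eq_zero_or_pos n with h0 | hpos
  · subst h0
    exact (Set.toFinite _).isCompact
  have : Nonempty (Fin n) := ⟨⟨0, hpos⟩⟩
  obtain ⟨x0, hx0, hmin⟩ := (isCompact_sphere (0 : Fin n → ℝ) 1).exists_isMinOn
    (NormedSpace.sphere_nonempty.2 zero_le_one) (N_cont N).continuousOn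
  have hx0n : ‖x0‖ = 1 := by simpa using hx0
  have hd : 0 < N x0 := by
    refine lt_of_le_of_ne (apply_nonneg _ _) fun h => ?_
    rw [hN x0 h.symm, norm_zero] at hx0n
    norm_num at hx0n
  have lb : ∀ x, N x0 * ‖x‖ ≤ N x := by
    intro x
    rcases eq_or_ne x 0 with rfl | hx
    · simp
    have hxn := norm_pos_iff.2 hx
    have := hmin (a := ‖x‖⁻¹ • x) (by
      rw [mem_sphere_zero_iff_norm, norm_smul, norm_inv, norm_norm, inv_mul_cancel₀ hxn.ne'])
    simp only [Set.mem_ofPred_eq] at this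
    rw [map_smul_eq_mul, Real.norm_of_nonneg (by positivity), le_inv_mul_iff₀ hxn] at this
    linarith
  refine Metric.isCompact_of_isClosed_isBounded (isClosed_le (N_cont N) continuous_const) ?_
  refine (Metric.isBounded_closedBall (x := (0 : Fin n → ℝ)) (r := 1 / N x0)).subset fun x hx => ?_
  rw [mem_closedBall_zero_iff, le_div_iff₀ hd, mul_comm]
  exact (lb x).trans hx

open Matrix in
lemma kiefer (hn : 1 ≤ n) (hN : ∀ x, N x = 0 → x = 0) :
    ∃ (x : Fin n ⊕ Fin n → (Fin n → ℝ)) (l : Fin n ⊕ Fin n → ((Fin n → ℝ) →ₗ[ℝ] ℝ)),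
      (∀ i, N (x i) ≤ 1) ∧ (∀ u, ∑ i, l i u • x i = u) ∧
      ∀ u, N u ≤ 1 → ∑ i, (l i u) ^ 2 ≤ 1 := by
  have hB := ball_compact hN
  set K : Set (Fin n ⊕ Fin n → Fin n → ℝ) := Set.univ.pi fun _ => {x | N x ≤ 1} with hK
  have hKc : IsCompact K := isCompact_univ_pi fun _ => hB
  set D : (Fin n ⊕ Fin n → Fin n → ℝ) → ℝ := fun X => ((Matrix.of X)ᵀ * Matrix.of X).det with hD
  have hDc : Continuous D := by
    refine Continuous.matrix_det (Continuous.matrix_mul ?_ ?_)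
    · exact Continuous.matrix_transpose continuous_id
    · exact continuous_id
  obtain ⟨X, hX, hmax⟩ := hKc.exists_isMaxOn ⟨0, fun i _ => by simp⟩ hDc.continuousOn
  have hXN : ∀ i, N (X i) ≤ 1 := fun i => hX i trivial
  have hmax' : ∀ Y : Fin n ⊕ Fin n → Fin n → ℝ, (∀ i, N (Y i) ≤ 1) → D Y ≤ D X :=
    fun Y hY => hmax (fun i _ => hY i)
  have hpos : 0 < D X := by
    obtain ⟨C, hC, hCN⟩ := N_le_norm N
    set e : ℝ := (C + 1)⁻¹ with he
    have he0 : 0 < e := by positivity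
    have := hmax' (Matrix.fromRows (e • (1 : Matrix (Fin n) (Fin n) ℝ)) 0) (by
      rintro (i | i)
      · have : (Matrix.fromRows (e • (1 : Matrix (Fin n) (Fin n) ℝ)) (0 : Matrix (Fin n) (Fin n) ℝ)) (Sum.inl i)
            = e • (Pi.single i 1 : Fin n → ℝ) := by
          change (e • (1 : Matrix (Fin n) (Fin n) ℝ)) i = _
          ext j; simp [Matrix.one_apply, Pi.single_apply, eq_comm]
        rw [this, map_smul_eq_mul, Real.norm_of_nonneg he0.le]
        have h1 := hCN (Pi.single i 1)
        rw [Pi.norm_single, norm_one, mul_one] at h1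
        rw [he, inv_mul_le_one₀ (by positivity)]; linarith
      · have : (Matrix.fromRows (e • (1 : Matrix (Fin n) (Fin n) ℝ)) (0 : Matrix (Fin n) (Fin n) ℝ)) (Sum.inr i)
            = 0 := by
          rfl
        rw [this, map_zero]; exact zero_le_one)
    refine lt_of_lt_of_le ?_ this
    have e2 : D (Matrix.fromRows (e • (1 : Matrix (Fin n) (Fin n) ℝ)) 0) = (e * e) ^ n := by
      have : (Matrix.of (Matrix.fromRows (e • (1 : Matrix (Fin n) (Fin n) ℝ)) (0 : Matrix (Fin n) (Fin n) ℝ)))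
          = Matrix.fromRows (e • (1 : Matrix (Fin n) (Fin n) ℝ)) 0 := rfl
      simp only [hD, this, Matrix.transpose_fromRows, Matrix.fromCols_mul_fromRows]
      simp [smul_smul, Matrix.det_smul]
    rw [e2]; positivity
  set Xm : Matrix (Fin n ⊕ Fin n) (Fin n) ℝ := Matrix.of X with hXm
  set A : Matrix (Fin n) (Fin n) ℝ := Xmᵀ * Xm with hA
  have hAD : D X = A.det := rfl
  have hu : IsUnit A.det := by rw [← hAD]; exact hpos.ne'.isUnit
  have hsymm : (A⁻¹)ᵀ = A⁻¹ := by
    rw [Matrix.transpose_nonsing_inv, hA, Matrix.transpose_mul, Matrix.transpose_transpose]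
  set d : (Fin n → ℝ) → (Fin n → ℝ) → ℝ := fun u v => u ⬝ᵥ (A⁻¹ *ᵥ v) with hd
  have dsymm : ∀ u v, d u v = d v u := by
    intro u v
    simp only [hd]
    rw [Matrix.dotProduct_mulVec, ← Matrix.mulVec_transpose, hsymm, dotProduct_comm]
  have step : ∀ y, N y ≤ 1 → ∀ i, (1 + d y y) * (1 - d (X i) (X i)) ≤ 1 := by
    intro y hy i
    have h1 := hmax' (Function.update X i y) (by
      intro j
      by_cases h : j = i
      · subst h; simpa using hy
      · simpa [h] using hXN j)
    set U : Matrix (Fin n) (Fin 2) ℝ := Matrix.of fun a b => ![y a, - X i a] b with hU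
    set V : Matrix (Fin 2) (Fin n) ℝ := Matrix.of ![y, X i] with hV
    have e1 : (Matrix.of (Function.update X i y))ᵀ * Matrix.of (Function.update X i y) = A + U * V := by
      ext a b
      have hUV : (U * V) a b = y a * y b - X i a * X i b := by
        rw [Matrix.mul_apply, Fin.sum_univ_two]
        simp [hU, hV, sub_eq_add_neg]
      rw [Matrix.add_apply, hUV, hA, hXm, Matrix.mul_apply, Matrix.mul_apply]
      simp only [Matrix.transpose_apply, Matrix.of_apply]
      rw [← Finset.add_sum_erase _ _ (Finset.mem_univ i), ← Finset.add_sum_erase (a := i) _ (fun x => X x a * X x b) (Finset.mem_univ i)]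
      have : ∑ x ∈ Finset.univ.erase i, Function.update X i y x a * Function.update X i y x b
          = ∑ x ∈ Finset.univ.erase i, X x a * X x b := by
        refine Finset.sum_congr rfl fun j hj => ?_
        rw [Function.update_of_ne (Finset.ne_of_mem_erase hj)]
      rw [this, Function.update_self]
      ring
    have e2 : D (Function.update X i y) = A.det * ((1 + d y y) * (1 - d (X i) (X i)) + d y (X i) * d y (X i)) := by
      simp only [hD]
      rw [e1, Matrix.det_add_mul U V hu]
      congr 1
      have hent : ∀ a b, (V * A⁻¹ * U) a b = d (V a) (fun c => U c b) := by
        intro a b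
        rw [Matrix.mul_assoc]
        rfl
      have hd1 : ∀ u v, d u (-v) = - d u v := by
        intro u v; simp only [hd]; rw [Matrix.mulVec_neg, dotProduct_neg]
      have v0 : V 0 = y := rfl
      have v1 : V 1 = X i := rfl
      have u0 : (fun c => U c 0) = y := rfl
      have u1 : (fun c => U c 1) = -(X i) := rfl
      rw [Matrix.det_fin_two]
      simp only [Matrix.add_apply, hent, v0, v1, u0, u1, hd1, dsymm (X i) y]
      simp only [Matrix.one_apply]
      norm_num
      left; ring
    rw [e2, hAD] at h1
    rw [hAD] at hpos
    have h2 := le_of_mul_le_mul_left (h1.trans (mul_one _).ge) hpos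
    nlinarith [mul_self_nonneg (d y (X i))]
  have tr : ∑ i, d (X i) (X i) = n := by
    have h1 : (Xm * A⁻¹ * Xmᵀ).trace = n := by
      rw [Matrix.mul_assoc, Matrix.trace_mul_comm, Matrix.mul_assoc, ← hA, Matrix.nonsing_inv_mul _ hu]
      simp
    rw [← h1, Matrix.trace]
    refine Finset.sum_congr rfl fun i _ => ?_
    rw [Matrix.mul_assoc]
    rfl
  have dle : ∀ y, N y ≤ 1 → d y y ≤ 1 := by
    intro y hy
    have h1 := Finset.sum_le_sum fun i (_ : i ∈ Finset.univ) => step y hy i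
    rw [← Finset.mul_sum, Finset.sum_sub_distrib, tr] at h1
    simp at h1
    have hn' : (1 : ℝ) ≤ n := by exact_mod_cast hn
    nlinarith
  refine ⟨X, fun i => (LinearMap.proj i).comp (Matrix.toLin' (Xm * A⁻¹)), hXN, ?_, ?_⟩
  · intro u
    have : Xmᵀ *ᵥ ((Xm * A⁻¹) *ᵥ u) = u := by
      rw [Matrix.mulVec_mulVec, ← Matrix.mul_assoc, ← hA, Matrix.mul_nonsing_inv _ hu, Matrix.one_mulVec]
    rw [Matrix.mulVec_eq_sum] at this
    have hr : ∀ i, Xm i = X i := fun i => rfl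
    simpa [hr] using this
  · intro u hu1
    have e : ∑ i, ((Xm * A⁻¹) *ᵥ u) i ^ 2 = d u u := by
      have : ∑ i, ((Xm * A⁻¹) *ᵥ u) i ^ 2 = ((Xm * A⁻¹) *ᵥ u) ⬝ᵥ ((Xm * A⁻¹) *ᵥ u) := by
        simp [dotProduct, sq]
      rw [this, Matrix.dotProduct_mulVec, ← Matrix.mulVec_transpose, Matrix.mulVec_mulVec,
        Matrix.transpose_mul, hsymm, dotProduct_comm, ← Matrix.mul_assoc, Matrix.mul_assoc A⁻¹, ← hA,
        Matrix.nonsing_inv_mul _ hu, Matrix.one_mul]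
    simpa [← e] using dle u hu1

end Whit

namespace Whit

lemma multilin (k : ℕ) : ∃ C : ℝ, 0 ≤ C ∧ ∀ (n : ℕ) (N : Seminorm ℝ (Fin n → ℝ)) (p : ℕ)
    (b : (Fin (k + 1) → (Fin n → ℝ)) → ℝ) (c M : ℝ), 1 ≤ n → (∀ x, N x = 0 → x = 0) →
    2 * n ≤ 2 ^ p → n + 2 ≤ 2 ^ p → 1 ≤ p → QM N (k + 1) b c M →
    ∃ L : MultilinearMap ℝ (fun _ : Fin (k + 1) => Fin n → ℝ) ℝ, ∀ x, (∀ i, N (x i) ≤ 1) →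
      |b x - L x| ≤ C * Real.sqrt (2 * n) ^ k * p * c := by
  induction k with
  | zero =>
    refine ⟨33, by norm_num, fun n N p b c M hn hN hp1 hp2 hp hb => ?_⟩
    have e : ∀ w : Fin n → ℝ, Function.update (fun _ : Fin 1 => (0 : Fin n → ℝ)) 0 w = fun _ => w := by
      intro w; ext1 i; rw [Subsingleton.elim i 0, Function.update_self]
    have hM : ∀ x, N x ≤ 1 → |(fun w => b (fun _ => w)) x| ≤ M := fun x hx => hb.1 _ fun _ => hx
    have hF : ∀ u v, N u ≤ 1 → N v ≤ 1 → N (u + v) ≤ 1 →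
        |(fun w => b (fun _ => w)) (u + v) - (fun w => b (fun _ => w)) u - (fun w => b (fun _ => w)) v| ≤ c := by
      intro u v hu hv huv
      have := hb.2 (fun _ => 0) (fun _ => by simp) 0 u v hu hv huv
      simpa only [e] using this
    have hc : 0 ≤ c := (abs_nonneg _).trans (hF 0 0 (by simp) (by simp) (by simp))
    obtain ⟨G, hG, hGF⟩ := homog hN hM hF
    obtain ⟨L, hL⟩ := hG.linear hN hp2
    refine ⟨MultilinearMap.ofSubsingleton ℝ _ _ (0 : Fin 1) L, fun x hx => ?_⟩
    have ex : x = fun _ => x 0 := by ext1 i; rw [Subsingleton.elim (α := Fin 1) i 0]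
    have h1 := hGF (x 0) (hx 0)
    have h2 := hL (x 0)
    have h3 : 10 * c * (p + 2) * N (x 0) ≤ 10 * c * (p + 2) :=
      mul_le_of_le_one_right (by positivity) (hx 0)
    have h4 : b x = b (fun _ => x 0) := by rw [← ex]
    have hp' : (1 : ℝ) ≤ p := by exact_mod_cast hp
    have h5 : c ≤ c * p := le_mul_of_one_le_right hc hp'
    rw [MultilinearMap.ofSubsingleton_apply_apply, h4, pow_zero, mul_one]
    rw [abs_le] at *
    constructor <;> linarith [h1.1, h1.2, h2.1, h2.2]
  | succ k ih =>
    obtain ⟨C, hC, ih⟩ := ih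
    refine ⟨C + 36, by positivity, fun n N p b c M hn hN hp1 hp2 hp hb => ?_⟩
    obtain ⟨w, l, hw, hl, hl2⟩ := kiefer hn hN
    set q := Real.sqrt (2 * n) with hq
    have hn' : (1 : ℝ) ≤ n := by exact_mod_cast hn
    have hq1 : 1 ≤ q := by rw [hq]; exact Real.one_le_sqrt.2 (by linarith)
    have hsum : ∀ u, N u ≤ 1 → ∑ i, |l i u| ≤ q := by
      intro u hu
      refine Real.le_sqrt_of_sq_le ?_
      have h1 := sq_sum_le_card_mul_sum_sq (s := (Finset.univ : Finset (Fin n ⊕ Fin n))) (f := fun i => |l i u|)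
      have h2 := hl2 u hu
      simp only [sq_abs] at h1
      refine h1.trans ?_
      have : ((Finset.univ : Finset (Fin n ⊕ Fin n)).card : ℝ) = 2 * n := by
        simp; ring
      rw [this]
      exact mul_le_of_le_one_right (by positivity) h2
    have hcons : ∀ (u : Fin n → ℝ) (y : Fin (k + 1) → (Fin n → ℝ)), N u ≤ 1 → (∀ i, N (y i) ≤ 1) →
        ∀ i, N ((Fin.cons u y : Fin (k + 1 + 1) → (Fin n → ℝ)) i) ≤ 1 := by
      intro u y hu hy i
      refine Fin.cases ?_ (fun i => ?_) i
      · simpa using hu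
      · simpa using hy i
    have hbi : ∀ i, QM N (k + 1) (fun y => b (Fin.cons (w i) y)) c M := by
      intro i
      refine ⟨fun y hy => hb.1 _ (hcons _ _ (hw i) hy), fun y hy j u v hu hv huv => ?_⟩
      simp only [Fin.cons_update]
      exact hb.2 _ (hcons _ _ (hw i) hy) _ u v hu hv huv
    choose Li hLi using fun i => ih n N p _ c M hn hN hp1 hp2 hp (hbi i)
    refine ⟨LinearMap.uncurryLeft (R := ℝ) (M := fun _ : Fin (k + 2) => Fin n → ℝ)
      (∑ i, (l i).smulRight (Li i)), fun x hx => ?_⟩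
    have hval : LinearMap.uncurryLeft (R := ℝ) (M := fun _ : Fin (k + 2) => Fin n → ℝ)
      (∑ i, (l i).smulRight (Li i)) x
        = ∑ i, l i (x 0) * Li i (Fin.tail x) := by
      rw [LinearMap.uncurryLeft_apply, LinearMap.sum_apply, MultilinearMap.sum_apply]
      simp
    have htail : ∀ i, N (Fin.tail x i) ≤ 1 := fun i => hx _
    have hup : ∀ u v : Fin n → ℝ, Function.update (Fin.cons u (Fin.tail x) : Fin (k + 1 + 1) → (Fin n → ℝ)) 0 v
        = Fin.cons v (Fin.tail x) := fun u v => Fin.update_cons_zero _ _ _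
    have hM : ∀ y, N y ≤ 1 → |(fun u => b (Fin.cons u (Fin.tail x))) y| ≤ M :=
      fun y hy => hb.1 _ (hcons _ _ hy htail)
    have hF : ∀ u v, N u ≤ 1 → N v ≤ 1 → N (u + v) ≤ 1 →
        |(fun u => b (Fin.cons u (Fin.tail x))) (u + v) - (fun u => b (Fin.cons u (Fin.tail x))) u
          - (fun u => b (Fin.cons u (Fin.tail x))) v| ≤ c := by
      intro u v hu hv huv
      have := hb.2 x hx 0 u v hu hv huv
      rw [← Fin.cons_self_tail x] at this
      simp only [Fin.tail_cons, Fin.update_cons_zero] at this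
      exact this
    have hc : 0 ≤ c := (abs_nonneg _).trans (hF 0 0 (by simp) (by simp) (by simp))
    obtain ⟨G, hG, hGF⟩ := homog hN hM hF
    have a1 := hGF (x 0) (hx 0)
    simp only [Fin.cons_self_tail] at a1
    have a2 := hG.comb w (fun i => l i (x 0)) p Finset.univ (by simp; omega) (fun i _ => hw i)
    rw [hl] at a2
    have hS := hsum (x 0) (hx 0)
    set S := ∑ i, |l i (x 0)| with hSdef
    have hS0 : 0 ≤ S := Finset.sum_nonneg fun i _ => abs_nonneg _
    set K := C * q ^ k * p * c with hK
    have hK0 : 0 ≤ K := by positivity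
    have a3 : |∑ i, l i (x 0) * G (w i) - ∑ i, l i (x 0) * Li i (Fin.tail x)| ≤ S * (3 * c + K) := by
      rw [← Finset.sum_sub_distrib, hSdef, Finset.sum_mul]
      refine (Finset.abs_sum_le_sum_abs _ _).trans (Finset.sum_le_sum fun i _ => ?_)
      rw [← mul_sub, abs_mul]
      refine mul_le_mul_of_nonneg_left ?_ (abs_nonneg _)
      have b1 := hGF (w i) (hw i)
      have b2 := hLi i (Fin.tail x) htail
      rw [abs_le] at *
      constructor <;> linarith [b1.1, b1.2, b2.1, b2.2]
    rw [hval]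
    have hp' : (1 : ℝ) ≤ p := by exact_mod_cast hp
    have t1 : S * (3 * c + K) ≤ q * (3 * c + K) := by gcongr
    have t2 : 10 * c * (p + 2) * S ≤ 10 * c * (p + 2) * q := by gcongr
    have hqk : q ≤ q ^ (k + 1) := le_self_pow₀ hq1 (by omega)
    have t3 : q * (p * c) ≤ q ^ (k + 1) * (p * c) := by gcongr
    have t4 : c ≤ q * (p * c) := by
      have : c ≤ p * c := le_mul_of_one_le_left hc hp'
      exact this.trans (le_mul_of_one_le_left (by positivity) hq1)
    have t5 : q * c ≤ q * (p * c) := by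
      gcongr; exact le_mul_of_one_le_left hc hp'
    have t6 : q * K = C * (q ^ (k + 1) * (p * c)) := by rw [hK, pow_succ]; ring
    have fin : 3 * c + 10 * c * (p + 2) * q + q * (3 * c + K) ≤ (C + 36) * q ^ (k + 1) * p * c := by
      have : (C + 36) * q ^ (k + 1) * p * c = C * (q ^ (k + 1) * (p * c)) + 36 * (q ^ (k + 1) * (p * c)) := by ring
      rw [this]
      have : 10 * c * (p + 2) * q = 10 * (q * (p * c)) + 20 * (q * c) := by ring
      rw [this]
      linarith
    refine le_trans ?_ fin
    rw [abs_le] at *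
    constructor <;> linarith [a1.1, a1.2, a2.1, a2.2, a3.1, a3.2]

lemma multilin_poly {n k : ℕ} (L : MultilinearMap ℝ (fun _ : Fin k => Fin n → ℝ) ℝ) :
    ∃ P : MvPolynomial (Fin n) ℝ, P.totalDegree ≤ k ∧ ∀ x, MvPolynomial.eval x P = L (fun _ => x) := by
  classical
  refine ⟨∑ r : Fin k → Fin n, MvPolynomial.C (L fun i => Pi.single (r i) 1) * ∏ i, MvPolynomial.X (r i), ?_, ?_⟩
  · refine MvPolynomial.totalDegree_finsetSum_le fun r _ => ?_
    refine (MvPolynomial.totalDegree_mul _ _).trans ?_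
    rw [MvPolynomial.totalDegree_C, zero_add]
    refine (MvPolynomial.totalDegree_finsetProd _ _).trans ?_
    simp
  · intro x
    have e : x = ∑ i, x i • (Pi.single i 1 : Fin n → ℝ) := by
      ext j; simp [Finset.sum_apply, Pi.single_apply]
    have : L (fun _ => x) = L (fun _ => ∑ i, x i • (Pi.single i 1 : Fin n → ℝ)) := by rw [← e]
    rw [this, MultilinearMap.map_sum]
    rw [map_sum]
    refine Finset.sum_congr rfl fun r _ => ?_
    rw [MultilinearMap.map_smul_univ]
    simp [mul_comm, map_prod]

lemma p_bound (n : ℕ) (hn : 1 ≤ n) : ((Nat.log 2 (n + 1) + 2 : ℕ) : ℝ) ≤ 3 / Real.log 2 * Real.log (n + 1) := by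
  have h2 : 0 < Real.log 2 := Real.log_pos (by norm_num)
  have h1 : (Nat.log 2 (n + 1) : ℝ) ≤ Real.log (n + 1) / Real.log 2 := by
    rw [le_div_iff₀ h2, ← Real.log_pow]
    refine Real.log_le_log (by positivity) ?_
    exact_mod_cast Nat.pow_log_le_self 2 (by omega : n + 1 ≠ 0)
  have h3 : Real.log 2 ≤ Real.log (n + 1) :=
    Real.log_le_log (by norm_num) (by have : (1:ℝ) ≤ n := by exact_mod_cast hn
                                      linarith)
  have h4 : 1 ≤ Real.log (n + 1) / Real.log 2 := by rwa [one_le_div h2]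
  push_cast
  have : 3 / Real.log 2 * Real.log (n + 1) = 3 * (Real.log (n + 1) / Real.log 2) := by ring
  rw [this]; linarith

lemma p_ok (n : ℕ) : 2 * n ≤ 2 ^ (Nat.log 2 (n + 1) + 2) ∧ n + 2 ≤ 2 ^ (Nat.log 2 (n + 1) + 2) := by
  have := Nat.lt_pow_succ_log_self (b := 2) (by norm_num) (n + 1)
  rw [Nat.succ_eq_add_one] at this
  rw [show Nat.log 2 (n + 1) + 2 = (Nat.log 2 (n + 1) + 1) + 1 by ring, pow_succ]
  omega

lemma piece (m k : ℕ) (hm : 2 ≤ m) (hk : k + 1 ≤ m) : ∃ D : ℝ, 0 ≤ D ∧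
    ∀ (n : ℕ) (N : Seminorm ℝ (Fin n → ℝ)) (h : (Fin n → ℝ) → ℝ) (a M : ℝ),
      1 ≤ n → (∀ x, N x = 0 → x = 0) → (∀ x, N x ≤ 1 → |h x| ≤ M) → DB N m h a → QH N k h a →
      ∃ P : MvPolynomial (Fin n) ℝ, P.totalDegree ≤ k ∧ ∀ x, N x ≤ 1 →
        |h x - MvPolynomial.eval x P| ≤ D * a * ((n : ℝ) ^ ((m : ℝ) / 2 - 1) * Real.log (n + 1)) := by
  obtain ⟨C1, hC1, h1⟩ := march_iter k m hk
  obtain ⟨σ, C2, hC2, h2⟩ := repr k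
  have hl2 : 0 < Real.log 2 := Real.log_pos (by norm_num)
  have hQ : ∀ n : ℕ, 1 ≤ n → 1 ≤ (1 / Real.log 2) * ((n : ℝ) ^ ((m : ℝ) / 2 - 1) * Real.log (n + 1)) := by
    intro n hn
    have hn' : (1 : ℝ) ≤ n := by exact_mod_cast hn
    have hm' : (2 : ℝ) ≤ m := by exact_mod_cast hm
    have e1 : (1 : ℝ) ≤ (n : ℝ) ^ ((m : ℝ) / 2 - 1) := Real.one_le_rpow hn' (by linarith)
    have e2 : Real.log 2 ≤ Real.log (n + 1) := Real.log_le_log (by norm_num) (by linarith)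
    rw [one_div, le_inv_mul_iff₀ hl2, mul_one]
    exact e2.trans (le_mul_of_one_le_left (by linarith) e1)
  rcases k with _ | k
  · refine ⟨C2 * (2 * C1 + 1) * (1 / Real.log 2), by positivity, ?_⟩
    intro n N h a M hn hN hM hD hq
    have ha := hq.nonneg
    have d1 := h1 n N h a a M hM hq hD
    have d2 := h2 n N h ((2 * C1 + 1) * a) (fun x hx => (hq x hx).trans (by nlinarith))
      (d1.mono (by nlinarith))
    refine ⟨MvPolynomial.C (σ * h 0), by rw [MvPolynomial.totalDegree_C], fun x hx => ?_⟩
    have d3 := d2 x hx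
    have e : dl 0 h 0 ((1 / 2 : ℝ) ^ (3 * 0 + 2) • x) = h 0 := by simp [dl]
    rw [e] at d3
    rw [MvPolynomial.eval_C]
    refine d3.trans ?_
    have := hQ n hn
    calc C2 * ((2 * C1 + 1) * a) ≤ (C2 * ((2 * C1 + 1) * a)) *
          ((1 / Real.log 2) * ((n : ℝ) ^ ((m : ℝ) / 2 - 1) * Real.log (n + 1))) :=
        le_mul_of_one_le_right (by positivity) this
      _ = _ := by ring
  · obtain ⟨C3, hC3, h3⟩ := multilin k
    refine ⟨C2 * (2 * C1 + 1) * (1 / Real.log 2) +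
      |σ| * (C3 * Real.sqrt 2 ^ (m - 2) * (3 / Real.log 2) * (2 ^ (k + 2) * (2 * C1 + 1))), by positivity, ?_⟩
    intro n N h a M hn hN hM hD hq
    have hn' : (1 : ℝ) ≤ n := by exact_mod_cast hn
    have ha := hq.nonneg
    have d1 := h1 n N h a a M hM hq hD
    have d1' : DB N (k + 1 + 1) h ((2 * C1 + 1) * a) := d1.mono (by nlinarith)
    have d2 := h2 n N h ((2 * C1 + 1) * a) (fun x hx => (hq x hx).trans (by nlinarith)) d1'
    obtain ⟨L, hL⟩ := h3 n N (Nat.log 2 (n + 1) + 2) _ _ _ hn hN (p_ok n).1 (p_ok n).2 (by omega)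
      (md_QM hM d1')
    obtain ⟨P, hP, hPe⟩ := multilin_poly L
    refine ⟨MvPolynomial.C σ * P, ?_, fun x hx => ?_⟩
    · refine (MvPolynomial.totalDegree_mul _ _).trans ?_
      rw [MvPolynomial.totalDegree_C, zero_add]; exact hP
    have d3 := d2 x hx
    have d4 := hL (fun _ => x) (fun _ => hx)
    simp only [md_const] at d4
    rw [map_mul, MvPolynomial.eval_C, hPe]
    set Δ := dl (k + 1) h 0 ((1 / 2 : ℝ) ^ (3 * (k + 1) + 2) • x)
    have e : h x - σ * L (fun _ => x) = (h x - σ * Δ) + σ * (Δ - L (fun _ => x)) := by ring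
    rw [e]
    refine (abs_add_le _ _).trans ?_
    rw [abs_mul, add_mul, add_mul]
    refine add_le_add ?_ ?_
    · refine d3.trans ?_
      have := hQ n hn
      calc C2 * ((2 * C1 + 1) * a) ≤ (C2 * ((2 * C1 + 1) * a)) *
            ((1 / Real.log 2) * ((n : ℝ) ^ ((m : ℝ) / 2 - 1) * Real.log (n + 1))) :=
          le_mul_of_one_le_right (by positivity) this
        _ = _ := by ring
    · rw [mul_assoc |σ|, mul_assoc |σ|]
      refine mul_le_mul_of_nonneg_left (d4.trans ?_) (abs_nonneg _)
      have s1 : Real.sqrt (2 * n) ^ k ≤ Real.sqrt 2 ^ (m - 2) * (n : ℝ) ^ ((m : ℝ) / 2 - 1) := by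
        calc Real.sqrt (2 * n) ^ k ≤ Real.sqrt (2 * n) ^ (m - 2) :=
              pow_le_pow_right₀ (Real.one_le_sqrt.2 (by linarith)) (by omega)
          _ = Real.sqrt 2 ^ (m - 2) * Real.sqrt n ^ (m - 2) := by
              rw [Real.sqrt_mul (by norm_num), mul_pow]
          _ = _ := by
              congr 1
              rw [Real.sqrt_eq_rpow, ← Real.rpow_natCast, ← Real.rpow_mul (by positivity)]
              congr 1
              rw [Nat.cast_sub hm]; push_cast; ring
      have s2 := p_bound n hn
      calc _ ≤ C3 * (Real.sqrt 2 ^ (m - 2) * (n : ℝ) ^ ((m : ℝ) / 2 - 1)) *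
            (3 / Real.log 2 * Real.log (n + 1)) * (2 ^ (k + 1 + 1) * ((2 * C1 + 1) * a)) := by
            gcongr
        _ = _ := by ring

end Whit

open Whit in
/-- Corollary 5.6: `w_m^{(s)}(n) ≤ C n^{m/2−1} log(n+1)`. -/
theorem whitney_m_symmetric_upper_bound (m : ℕ) (hm : 2 ≤ m) :
    ∃ C : ℝ, ∀ n : ℕ, 1 ≤ n →
      ∀ N : (Fin n → ℝ) → ℝ, IsNormFn N →
        ∀ f : (Fin n → ℝ) → ℝ, ContinuousOn f {x | N x ≤ 1} → diffBound m {x | N x ≤ 1} f 1 →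
          ∃ P : MvPolynomial (Fin n) ℝ, P.totalDegree ≤ m - 1 ∧
            ∀ x, N x ≤ 1 →
              |f x - MvPolynomial.eval x P| ≤
                C * (n : ℝ) ^ ((m : ℝ) / 2 - 1) * Real.log (n + 1) := by
  obtain ⟨C0, hC0, h0⟩ := decomp m (by omega)
  have hp : ∀ k : ℕ, ∃ D : ℝ, k < m → 0 ≤ D ∧
    ∀ (n : ℕ) (N : Seminorm ℝ (Fin n → ℝ)) (h : (Fin n → ℝ) → ℝ) (a M : ℝ),
      1 ≤ n → (∀ x, N x = 0 → x = 0) → (∀ x, N x ≤ 1 → |h x| ≤ M) → DB N m h a → QH N k h a →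
      ∃ P : MvPolynomial (Fin n) ℝ, P.totalDegree ≤ k ∧ ∀ x, N x ≤ 1 →
        |h x - MvPolynomial.eval x P| ≤ D * a * ((n : ℝ) ^ ((m : ℝ) / 2 - 1) * Real.log (n + 1)) := by
    intro k
    by_cases hk : k < m
    · obtain ⟨D, hD⟩ := piece m k hm hk
      exact ⟨D, fun _ => hD⟩
    · exact ⟨0, fun h => absurd h hk⟩
  choose D hD using hp
  refine ⟨∑ k ∈ range m, D k * (C0 * 1), ?_⟩
  intro n hn N hN f hf hd
  set S : Seminorm ℝ (Fin n → ℝ) := Seminorm.of N hN.2.2.2 (fun a x => by rw [hN.2.2.1, Real.norm_eq_abs])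
    with hS
  have hSN : ∀ x, S x = N x := fun x => rfl
  have hdef : ∀ x, S x = 0 → x = 0 := fun x hx => (hN.2.1 x).1 hx
  have hcomp : IsCompact {x | N x ≤ 1} := ball_compact hdef
  obtain ⟨M, hM⟩ := hcomp.exists_bound_of_continuousOn hf
  obtain ⟨h, hsum, hh⟩ := h0 n S f 1 M (fun x hx => hM x hx) (fun x y hxy => hd x y hxy)
  have hP : ∀ k : ℕ, ∃ P : MvPolynomial (Fin n) ℝ, k < m → P.totalDegree ≤ k ∧ ∀ x, S x ≤ 1 →
        |h k x - MvPolynomial.eval x P| ≤ D k * (C0 * 1) * ((n : ℝ) ^ ((m : ℝ) / 2 - 1) * Real.log (n + 1)) := by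
    intro k
    by_cases hk : k < m
    · obtain ⟨⟨M', hM'⟩, h1, h2⟩ := hh k hk
      obtain ⟨P, hP⟩ := (hD k hk).2 n S (h k) _ M' hn hdef hM' h1 h2
      exact ⟨P, fun _ => hP⟩
    · exact ⟨0, fun h => absurd h hk⟩
  choose P hP using hP
  refine ⟨∑ k ∈ range m, P k, ?_, fun x hx => ?_⟩
  · refine MvPolynomial.totalDegree_finsetSum_le fun k hk => ?_
    have hk := Finset.mem_range.1 hk
    exact (hP k hk).1.trans (by omega)
  · rw [hsum, map_sum, ← Finset.sum_sub_distrib, mul_assoc, Finset.sum_mul]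
    refine (Finset.abs_sum_le_sum_abs _ _).trans (Finset.sum_le_sum fun k hk => ?_)
    exact (hP k (Finset.mem_range.1 hk)).2 x hx
end

section
/- For every integer m ≥ 2 there is a constant C = C(m) ≥ 1 such that for every n ≥ 1: (i) every continuous f : B_{ℓ₁ⁿ} → ℝ with ω_m(f;B_{ℓ₁ⁿ}) ≤ 1 admits a polynomial φ of total degree at most m−1 with sup_{x∈B_{ℓ₁ⁿ}} |f(x) − φ(x)| ≤ C log(n+1); and (ii) there exists a continuous f : B_{ℓ₁ⁿ} → ℝ with ω_m(f;B_{ℓ₁ⁿ}) ≤ 1 such that every polynomial φ of total degree at most m−1 satisfies sup_{x∈B_{ℓ₁ⁿ}} |f(x) − φ(x)| ≥ C^{−1} log(n+1). (Corollary 5.7: C^{−1} log(n+1) ≤ w_m(ℓ₁ⁿ) ≤ C log(n+1).) -/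
open Finset

/-- The closed unit ball of `ℓ₁ⁿ`. -/
def l1Ball (n : ℕ) : Set (Fin n → ℝ) := {x | ∑ i, |x i| ≤ 1}

/-- The `ℓ₁` norm. -/
def nm {n : ℕ} (x : Fin n → ℝ) : ℝ := ∑ i, |x i|

lemma nm_nonneg {n : ℕ} (x : Fin n → ℝ) : 0 ≤ nm x := Finset.sum_nonneg fun _ _ => abs_nonneg _

lemma nm_add_le {n : ℕ} (x y : Fin n → ℝ) : nm (x + y) ≤ nm x + nm y := by
  unfold nm
  rw [← Finset.sum_add_distrib]
  exact Finset.sum_le_sum fun i _ => abs_add_le _ _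

lemma nm_smul {n : ℕ} (c : ℝ) (x : Fin n → ℝ) : nm (c • x) = |c| * nm x := by
  unfold nm
  rw [Finset.mul_sum]
  exact Finset.sum_congr rfl fun i _ => by simp [abs_mul]

lemma nm_zero {n : ℕ} : nm (0 : Fin n → ℝ) = 0 := by simp [nm]

lemma nm_sum_le {n : ℕ} {ι : Type*} (s : Finset ι) (v : ι → Fin n → ℝ) :
    nm (∑ i ∈ s, v i) ≤ ∑ i ∈ s, nm (v i) := by
  classical
  induction s using Finset.induction_on with
  | empty => simp [nm_zero]
  | insert a s ha ih =>
    rw [Finset.sum_insert ha, Finset.sum_insert ha]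
    exact (nm_add_le _ _).trans (by linarith)

lemma mem_l1Ball {n : ℕ} (x : Fin n → ℝ) : x ∈ l1Ball n ↔ nm x ≤ 1 := Iff.rfl

/-- Univariate polynomials of degree `< m` are killed by `m`-th differences. -/
lemma upoly_diff (m : ℕ) (p : Polynomial ℝ) (hp : p.natDegree < m) :
    ∑ j ∈ Finset.range (m + 1), (-1 : ℝ) ^ (m - j) * (m.choose j : ℝ) * p.eval (j : ℝ) = 0 := by
  have h := Polynomial.fwdDiff_iter_eq_zero_of_degree_lt (R := ℝ) (P := p) (n := m) hp
  have h2 := congrFun h 0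
  rw [fwdDiff_iter_eq_sum_shift] at h2
  simpa using h2

/-- Restriction of a polynomial to a line. -/
lemma line_poly {n : ℕ} (P : MvPolynomial (Fin n) ℝ) (x h : Fin n → ℝ) :
    ∃ p : Polynomial ℝ, p.natDegree ≤ P.totalDegree ∧
      ∀ t : ℝ, p.eval t = MvPolynomial.eval (x + t • h) P := by
  refine ⟨MvPolynomial.aeval (fun i => Polynomial.C (x i) + Polynomial.X * Polynomial.C (h i)) P,
    ?_, ?_⟩
  · have := MvPolynomial.aeval_natDegree_le (F := P) (m := P.totalDegree) le_rfl
      (fun i => Polynomial.C (x i) + Polynomial.X * Polynomial.C (h i)) (n := 1) (fun i => by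
        compute_degree)
    simpa using this
  · intro t
    rw [← Polynomial.coe_evalRingHom, MvPolynomial.aeval_def, MvPolynomial.hom_eval₂]
    rw [MvPolynomial.eval, MvPolynomial.coe_eval₂Hom]
    congr 1
    · ext; simp
    · ext i; simp; ring

lemma mvpoly_diff {n m : ℕ} (hm : 1 ≤ m) (P : MvPolynomial (Fin n) ℝ)
    (hP : P.totalDegree ≤ m - 1) (x h : Fin n → ℝ) :
    ∑ j ∈ Finset.range (m + 1), (-1 : ℝ) ^ (m - j) * (m.choose j : ℝ) *
      MvPolynomial.eval (x + (j : ℝ) • h) P = 0 := by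
  obtain ⟨p, hp, hpe⟩ := line_poly P x h
  simp_rw [← hpe]
  exact upoly_diff m p (by omega)

/-- Flipping one index of a subset. -/
lemma flip_cancel {ι : Type*} [Fintype ι] [DecidableEq ι] (i0 : ι) (g : Finset ι → ℝ)
    (hg : ∀ S, i0 ∉ S → g (insert i0 S) = g S) :
    ∑ S ∈ (univ : Finset ι).powerset, (-1 : ℝ) ^ #S * g S = 0 := by
  have : (univ : Finset ι) = insert i0 (univ.erase i0) := by simp
  rw [this, Finset.sum_powerset_insert (by simp), ← Finset.sum_add_distrib]
  refine Finset.sum_eq_zero fun S hS => ?_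
  have hi : i0 ∉ S := fun h => by simpa using Finset.mem_powerset.1 hS h
  rw [hg S hi, Finset.card_insert_of_notMem hi]
  ring

lemma djok {n m : ℕ} (f : (Fin n → ℝ) → ℝ) (hf : diffBound m (l1Ball n) f 1)
    (h : Fin m → Fin n → ℝ) (x : Fin n → ℝ) (hx : nm x + m * ∑ i, nm (h i) ≤ 1) :
    |∑ S ∈ (univ : Finset (Fin m)).powerset, (-1 : ℝ) ^ #S * f (x + ∑ i ∈ S, h i)| ≤ 2 ^ m := by
  have key : ∀ S : Finset (Fin m), |∑ j ∈ Finset.range (m + 1), (-1 : ℝ) ^ (m - j) *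
      (m.choose j : ℝ) * f (x + ∑ i ∈ S, (1 - (j : ℝ) / ((i : ℕ) + 1)) • h i)| ≤ 1 := by
    intro S
    have := hf (x + ∑ i ∈ S, h i) (-∑ i ∈ S, (1 / ((i : ℕ) + 1) : ℝ) • h i)
    have e : ∀ j : ℕ, x + ∑ i ∈ S, h i + (j : ℝ) • (-∑ i ∈ S, (1 / ((i : ℕ) + 1) : ℝ) • h i)
        = x + ∑ i ∈ S, (1 - (j : ℝ) / ((i : ℕ) + 1)) • h i := by
      intro j
      rw [smul_neg, Finset.smul_sum, add_assoc, ← sub_eq_add_neg, ← Finset.sum_sub_distrib]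
      congr 1
      refine Finset.sum_congr rfl fun i _ => ?_
      rw [smul_smul, sub_smul, one_smul]
      congr 2
      ring
    simp_rw [e] at this
    apply this
    intro j hj
    rw [mem_l1Ball]
    refine (nm_add_le _ _).trans (le_trans ?_ hx)
    gcongr
    refine (nm_sum_le _ _).trans ?_
    rw [Finset.mul_sum]
    refine (Finset.sum_le_sum fun i _ => ?_).trans
      (Finset.sum_le_sum_of_subset_of_nonneg (Finset.subset_univ S)
        (fun i _ _ => mul_nonneg (Nat.cast_nonneg m) (nm_nonneg _)))
    rw [nm_smul]
    refine mul_le_mul_of_nonneg_right ?_ (nm_nonneg _)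
    have hm1 : (1 : ℝ) ≤ m := by exact_mod_cast i.pos
    have hj' : (j : ℝ) ≤ m := by exact_mod_cast hj
    have h0 : (0 : ℝ) ≤ (j : ℝ) / ((i : ℕ) + 1) := by positivity
    have h1 : (j : ℝ) / ((i : ℕ) + 1) ≤ j := div_le_self (by positivity) (by simp)
    rw [abs_le]; constructor <;> linarith
  have tot : ∑ S ∈ (univ : Finset (Fin m)).powerset, (-1 : ℝ) ^ #S *
      ∑ j ∈ Finset.range (m + 1), (-1 : ℝ) ^ (m - j) *
      (m.choose j : ℝ) * f (x + ∑ i ∈ S, (1 - (j : ℝ) / ((i : ℕ) + 1)) • h i)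
      = (-1) ^ m * ∑ S ∈ (univ : Finset (Fin m)).powerset, (-1 : ℝ) ^ #S * f (x + ∑ i ∈ S, h i) := by
    simp_rw [Finset.mul_sum]
    rw [Finset.sum_comm, Finset.sum_range_succ', Finset.sum_eq_zero]
    · simp only [zero_add]
      refine Finset.sum_congr rfl fun S _ => ?_
      simp
      ring
    · intro j hj
      have hj' : j < m := Finset.mem_range.1 hj
      have := flip_cancel (⟨j, hj'⟩ : Fin m) (fun S => (-1 : ℝ) ^ (m - (j + 1)) *
        (m.choose (j + 1) : ℝ) * f (x + ∑ i ∈ S, (1 - ((j + 1 : ℕ) : ℝ) / ((i : ℕ) + 1)) • h i)) ?_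
      · exact this
      · intro S hS
        rw [Finset.sum_insert hS]
        have : (1 - ((j + 1 : ℕ) : ℝ) / ((j : ℕ) + 1)) = 0 := by
          push_cast
          rw [div_self (by positivity), sub_self]
        rw [this, zero_smul, zero_add]
  have h3 : |(-1 : ℝ) ^ m * ∑ S ∈ (univ : Finset (Fin m)).powerset,
      (-1 : ℝ) ^ #S * f (x + ∑ i ∈ S, h i)| ≤ 2 ^ m := by
    rw [← tot]
    refine (Finset.abs_sum_le_sum_abs _ _).trans ?_
    refine (Finset.sum_le_sum (g := fun _ => (1 : ℝ)) fun S _ => ?_).trans ?_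
    · rw [abs_mul, abs_pow, abs_neg, abs_one, one_pow, one_mul]
      exact key S
    · simp
  rwa [abs_mul, abs_pow, abs_neg, abs_one, one_pow, one_mul] at h3

/-- Lattice points. -/
def pt {n r : ℕ} (τ : ℝ) (y : Fin r → Fin n → ℝ) (a : Fin r →₀ ℕ) : Fin n → ℝ :=
  τ • ∑ g, (a g : ℝ) • y g

lemma pt_add {n r : ℕ} (τ : ℝ) (y : Fin r → Fin n → ℝ) (a b : Fin r →₀ ℕ) :
    pt τ y (a + b) = pt τ y a + pt τ y b := by
  simp [pt, add_smul, Finset.sum_add_distrib]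

lemma pt_single {n r : ℕ} (τ : ℝ) (y : Fin r → Fin n → ℝ) (g : Fin r) :
    pt τ y (Finsupp.single g 1) = τ • y g := by
  simp only [pt]
  rw [Finset.sum_eq_single g]
  · simp
  · intro b _ hb
    simp [Finsupp.single_apply, hb.symm]
  · simp

lemma pt_sum {n r : ℕ} (τ : ℝ) (y : Fin r → Fin n → ℝ) {ι : Type*} (s : Finset ι)
    (κ : ι → Fin r) :
    pt τ y (∑ i ∈ s, Finsupp.single (κ i) 1) = ∑ i ∈ s, τ • y (κ i) := by
  classical
  induction s using Finset.induction_on with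
  | empty => simp [pt]
  | insert a s ha ih =>
    rw [Finset.sum_insert ha, Finset.sum_insert ha, pt_add, ih, pt_single]

lemma nm_pt_le {n r : ℕ} {τ : ℝ} (hτ : 0 ≤ τ) {y : Fin r → Fin n → ℝ} (hy : ∀ g, nm (y g) ≤ 1)
    (a : Fin r →₀ ℕ) : nm (pt τ y a) ≤ τ * ((∑ g, a g : ℕ) : ℝ) := by
  unfold pt
  rw [nm_smul, abs_of_nonneg hτ]
  gcongr
  refine (nm_sum_le _ _).trans ?_
  push_cast
  refine Finset.sum_le_sum fun g _ => ?_
  rw [nm_smul, abs_of_nonneg (Nat.cast_nonneg _)]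
  exact mul_le_of_le_one_right (Nat.cast_nonneg _) (hy g)

/-- The linear functional sending the monomial `X^a` to `f (pt a)`. -/
noncomputable def Lfun {n r : ℕ} (f : (Fin n → ℝ) → ℝ) (τ : ℝ) (y : Fin r → Fin n → ℝ) :
    MvPolynomial (Fin r) ℝ →ₗ[ℝ] ℝ :=
  (MvPolynomial.basisMonomials (Fin r) ℝ).constr ℝ (fun a => f (pt τ y a))

lemma Lfun_monomial {n r : ℕ} (f : (Fin n → ℝ) → ℝ) (τ : ℝ) (y : Fin r → Fin n → ℝ)
    (a : Fin r →₀ ℕ) : Lfun f τ y (MvPolynomial.monomial a 1) = f (pt τ y a) := by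
  have := (MvPolynomial.basisMonomials (Fin r) ℝ).constr_basis ℝ (fun a => f (pt τ y a)) a
  simpa [Lfun] using this

open MvPolynomial in
lemma mixed_base {n r m : ℕ} (f : (Fin n → ℝ) → ℝ) (hf : diffBound m (l1Ball n) f 1)
    {τ : ℝ} (hτ : 0 ≤ τ) {y : Fin r → Fin n → ℝ} (hy : ∀ g, nm (y g) ≤ 1)
    (κ : Fin m → Fin r) (b : Fin r →₀ ℕ) (hb : τ * ((∑ g, b g : ℕ) + m ^ 2) ≤ 1) :
    |Lfun f τ y (monomial b 1 * ∏ i, (X (κ i) - 1))| ≤ 2 ^ m := by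
  have e : (monomial b 1 * ∏ i, (X (κ i) - 1) : MvPolynomial (Fin r) ℝ)
      = ((-1 : ℝ) ^ m) • ∑ S ∈ (univ : Finset (Fin m)).powerset,
        ((-1 : ℝ) ^ #S) • monomial (b + ∑ i ∈ S, Finsupp.single (κ i) 1) (1 : ℝ) := by
    simp_rw [sub_eq_add_neg]
    rw [Finset.prod_add, Finset.mul_sum, Finset.smul_sum]
    refine Finset.sum_congr rfl fun S _ => ?_
    have h1 : ∏ i ∈ S, (X (κ i) : MvPolynomial (Fin r) ℝ)
        = monomial (∑ i ∈ S, Finsupp.single (κ i) 1) 1 := by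
      rw [monomial_sum_one]; rfl
    have h2 : ∏ i ∈ univ \ S, (-1 : MvPolynomial (Fin r) ℝ) = C ((-1) ^ m * (-1) ^ #S) := by
      rw [Finset.prod_const, Finset.card_sdiff_of_subset (Finset.subset_univ S)]
      have hS : #S ≤ m := by simpa using Finset.card_le_univ S
      have : ((-1 : ℝ)) ^ m * (-1) ^ #S = (-1) ^ (m - #S) := by
        generalize #S = k at hS
        obtain ⟨t, rfl⟩ := Nat.exists_eq_add_of_le hS
        rw [Nat.add_sub_cancel_left, pow_add, mul_right_comm, ← mul_pow]; simp
      rw [this]; simp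
    rw [h1, h2, smul_smul, smul_eq_C_mul, mul_comm _ (C _), ← mul_assoc, mul_comm _ (C _),
      mul_assoc, monomial_mul, one_mul]
  rw [e, map_smul, map_sum]
  simp_rw [map_smul, Lfun_monomial, pt_add, pt_sum, smul_eq_mul]
  rw [abs_mul, abs_pow, abs_neg, abs_one, one_pow, one_mul]
  refine djok f hf (fun i => τ • y (κ i)) _ ?_
  refine le_trans ?_ hb
  have h1 := nm_pt_le hτ hy b
  have h2 : ∑ i, nm (τ • y (κ i)) ≤ m * τ := by
    refine (Finset.sum_le_sum (g := fun _ => τ) fun i _ => ?_).trans (by simp)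
    rw [nm_smul, abs_of_nonneg hτ]
    exact mul_le_of_le_one_right hτ (hy _)
  have h3 : (m : ℝ) * ∑ i, nm (τ • y (κ i)) ≤ m * (m * τ) := by gcongr
  nlinarith

open MvPolynomial in
lemma mixed_list {n r m : ℕ} (f : (Fin n → ℝ) → ℝ) (hf : diffBound m (l1Ball n) f 1)
    {τ : ℝ} (hτ : 0 ≤ τ) {y : Fin r → Fin n → ℝ} (hy : ∀ g, nm (y g) ≤ 1)
    (κ : Fin m → Fin r) (l : List (Fin r)) : ∀ (b : Fin r →₀ ℕ),
    τ * ((∑ g, b g : ℕ) + l.length + m ^ 2) ≤ 1 →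
    |Lfun f τ y (monomial b 1 * (∏ i, (X (κ i) - 1)) * (l.map fun g => X g - 1).prod)|
      ≤ 2 ^ (m + l.length) := by
  induction l with
  | nil => intro b hb; simpa using mixed_base f hf hτ hy κ b (by simpa using hb)
  | cons g l ih =>
    intro b hb
    have e : (monomial b 1 * (∏ i, (X (κ i) - 1)) * ((g :: l).map fun g => X g - 1).prod
        : MvPolynomial (Fin r) ℝ) =
        monomial (b + Finsupp.single g 1) 1 * (∏ i, (X (κ i) - 1)) * (l.map fun g => X g - 1).prod
        - monomial b 1 * (∏ i, (X (κ i) - 1)) * (l.map fun g => X g - 1).prod := by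
      have : (monomial (b + Finsupp.single g 1) 1 : MvPolynomial (Fin r) ℝ)
          = monomial b 1 * X g := by
        rw [X, monomial_mul, one_mul]
      rw [this, List.map_cons, List.prod_cons]
      ring
    rw [e, map_sub]
    have i1 := ih (b + Finsupp.single g 1) (by
      have : ∑ x, (b + Finsupp.single g 1 : Fin r →₀ ℕ) x = ∑ x, b x + 1 := by
        simp [Finset.sum_add_distrib, Finsupp.single_apply]
      rw [this]
      refine le_of_eq_of_le ?_ hb
      push_cast [List.length_cons]
      ring)
    have i2 := ih b (by
      refine le_trans ?_ hb
      gcongr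
      simp)
    refine (abs_sub _ _).trans ?_
    rw [List.length_cons, ← add_assoc, pow_succ]
    linarith

open MvPolynomial in
lemma mixed_alpha {n r m : ℕ} (f : (Fin n → ℝ) → ℝ) (hf : diffBound m (l1Ball n) f 1)
    {τ : ℝ} (hτ : 0 ≤ τ) {y : Fin r → Fin n → ℝ} (hy : ∀ g, nm (y g) ≤ 1)
    (α : Fin r → ℕ) (hα : m ≤ ∑ g, α g) (hb : τ * ((∑ g, α g : ℕ) + m ^ 2) ≤ 1) :
    |Lfun f τ y (∏ g, (X g - 1) ^ α g)| ≤ 2 ^ (∑ g, α g) := by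
  obtain ⟨l, hl1, hl2⟩ : ∃ l : List (Fin r), l.length = ∑ g, α g ∧
      (l.map fun g => (X g - 1 : MvPolynomial (Fin r) ℝ)).prod = ∏ g, (X g - 1) ^ α g := by
    refine ⟨(∑ g, Multiset.replicate (α g) g).toList, ?_, ?_⟩
    · simp
    · rw [Multiset.prod_map_toList, ← Multiset.coe_mapAddMonoidHom, map_sum, Multiset.prod_sum]
      simp
  rw [← hl2, ← List.take_append_drop m l, List.map_append, List.prod_append]
  have hlen : (l.take m).length = m := by simp; omega
  generalize l.take m = l1 at hlen
  have hlen2 : (l.drop m).length + m = ∑ g, α g := by simp; omega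
  generalize l.drop m = l2 at hlen2
  subst hlen
  have h := mixed_list f hf hτ hy l1.get l2 0 (by
    refine le_trans ?_ hb
    rw [← hlen2]
    push_cast
    simp
    gcongr
    linarith)
  have e : ∏ i, (X (l1.get i) - 1 : MvPolynomial (Fin r) ℝ) = (l1.map fun g => X g - 1).prod := by
    rw [← List.prod_ofFn]
    congr 1
    conv_rhs => rw [← List.ofFn_get l1]
    rw [List.map_ofFn]
    rfl
  rw [e, show (monomial (0 : Fin r →₀ ℕ) (1 : ℝ)) = 1 from rfl, one_mul, add_comm, hlen2] at h
  exact h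

open MvPolynomial in
/-- The polynomial `C(X_g, k)`. -/
noncomputable def bpm {r : ℕ} (g : Fin r) (k : ℕ) : MvPolynomial (Fin r) ℝ :=
  C ((k.factorial : ℝ)⁻¹) * ∏ i ∈ Finset.range k, (X g - C (i : ℝ))

open MvPolynomial in
lemma bpm_degree {r : ℕ} (g : Fin r) (k : ℕ) : (bpm g k).totalDegree ≤ k := by
  unfold bpm
  refine (totalDegree_mul _ _).trans ?_
  rw [totalDegree_C, zero_add]
  refine (totalDegree_finsetProd _ _).trans ?_
  refine (Finset.sum_le_sum (g := fun _ => 1) fun i _ => ?_).trans (by simp)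
  refine (totalDegree_sub_C_le _ _).trans ?_
  simp

open MvPolynomial in
lemma bpm_eval {r : ℕ} (g : Fin r) (k : ℕ) (a : Fin r → ℕ) :
    eval (fun g => (a g : ℝ)) (bpm g k) = ((a g).choose k : ℝ) := by
  have h1 : ∏ i ∈ Finset.range k, ((a g : ℝ) - i) = ((a g).descFactorial k : ℝ) := by
    rw [← descPochhammer_eval_eq_descFactorial ℝ, descPochhammer_eval_eq_prod_range]
  simp only [bpm, map_mul, eval_C, map_prod, map_sub, eval_X, h1]
  rw [Nat.descFactorial_eq_factorial_mul_choose]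
  push_cast
  field_simp

open MvPolynomial in
lemma monomial_newton {r : ℕ} (L : ℕ) (a : Fin r →₀ ℕ) (ha : ∑ g, a g ≤ L) :
    (monomial a 1 : MvPolynomial (Fin r) ℝ) =
      ∑ α ∈ Fintype.piFinset (fun _ : Fin r => Finset.range (L + 1)),
        (∏ g, ((a g).choose (α g) : ℝ)) • ∏ g, (X g - 1) ^ α g := by
  have h1 : (monomial a 1 : MvPolynomial (Fin r) ℝ) = ∏ g, X g ^ a g := by
    rw [monomial_eq, Finsupp.prod_fintype _ _ (by simp)]; simp
  have h2 : ∀ g, (X g ^ a g : MvPolynomial (Fin r) ℝ) =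
      ∑ k ∈ Finset.range (L + 1), ((a g).choose k : ℝ) • (X g - 1) ^ k := by
    intro g
    have hag : a g ≤ L := le_trans (Finset.single_le_sum (f := fun g => a g)
      (fun _ _ => Nat.zero_le _) (Finset.mem_univ g)) ha
    have : (X g : MvPolynomial (Fin r) ℝ) = (X g - 1) + 1 := by ring
    conv_lhs => rw [this]
    rw [add_pow]
    symm
    rw [← Finset.sum_subset (Finset.range_mono (Nat.succ_le_succ hag))]
    · refine Finset.sum_congr rfl fun k _ => ?_
      rw [smul_eq_C_mul]; simp [mul_comm]
    · intro k _ hk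
      rw [Nat.choose_eq_zero_of_lt (by simpa using hk)]; simp
  rw [h1, Finset.prod_congr rfl fun g _ => h2 g, Finset.prod_univ_sum]
  refine Finset.sum_congr rfl fun α _ => ?_
  rw [smul_eq_C_mul, map_prod, ← Finset.prod_mul_distrib]
  simp_rw [smul_eq_C_mul]

open MvPolynomial in
lemma newton {n r m : ℕ} (hm : 1 ≤ m) (f : (Fin n → ℝ) → ℝ) (hf : diffBound m (l1Ball n) f 1)
    (L : ℕ) {τ : ℝ} (hτ : 0 ≤ τ) (hτL : τ * (L + m ^ 2) ≤ 1)
    {y : Fin r → Fin n → ℝ} (hy : ∀ g, nm (y g) ≤ 1) :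
    ∃ Q : MvPolynomial (Fin r) ℝ, Q.totalDegree ≤ m - 1 ∧ ∀ a : Fin r →₀ ℕ, ∑ g, a g ≤ L →
      |f (pt τ y a) - eval (fun g => (a g : ℝ)) Q| ≤ 3 ^ L := by
  set I := Fintype.piFinset (fun _ : Fin r => Finset.range (L + 1)) with hI
  set D : (Fin r → ℕ) → ℝ := fun α => Lfun f τ y (∏ g, (X g - 1) ^ α g) with hD
  refine ⟨∑ α ∈ I with ∑ g, α g < m, C (D α) * ∏ g, bpm g (α g), ?_, ?_⟩
  · refine totalDegree_finsetSum_le fun α hα => ?_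
    have hα2 := (Finset.mem_filter.1 hα).2
    refine (totalDegree_mul _ _).trans ?_
    rw [totalDegree_C, zero_add]
    refine (totalDegree_finsetProd _ _).trans ?_
    refine (Finset.sum_le_sum fun g _ => bpm_degree g (α g)).trans ?_
    omega
  · intro a ha
    have e1 : f (pt τ y a) = ∑ α ∈ I, (∏ g, ((a g).choose (α g) : ℝ)) * D α := by
      rw [← Lfun_monomial f τ y a, monomial_newton L a ha, map_sum]
      simp_rw [map_smul, smul_eq_mul]
      rfl
    have e2 : eval (fun g => (a g : ℝ)) (∑ α ∈ I with ∑ g, α g < m, C (D α) * ∏ g, bpm g (α g))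
        = ∑ α ∈ I with ∑ g, α g < m, (∏ g, ((a g).choose (α g) : ℝ)) * D α := by
      rw [map_sum]
      refine Finset.sum_congr rfl fun α _ => ?_
      rw [map_mul, eval_C, map_prod, mul_comm]
      simp_rw [bpm_eval]
    rw [e2, e1, ← Finset.sum_filter_add_sum_filter_not I (fun α => ∑ g, α g < m),
      add_sub_cancel_left]
    refine (Finset.abs_sum_le_sum_abs _ _).trans ?_
    have e3 : ∑ α ∈ I, ∏ g, (((a g).choose (α g) : ℝ) * 2 ^ α g) ≤ 3 ^ L := by
      rw [hI, ← Finset.prod_univ_sum (fun _ => Finset.range (L + 1))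
        (fun g k => ((a g).choose k : ℝ) * 2 ^ k)]
      have : ∀ g, ∑ k ∈ Finset.range (L + 1), ((a g).choose k : ℝ) * 2 ^ k = 3 ^ a g := by
        intro g
        have hag : a g ≤ L := le_trans (Finset.single_le_sum (f := fun g => a g)
          (fun _ _ => Nat.zero_le _) (Finset.mem_univ g)) ha
        have h3 : (3 : ℝ) = 2 + 1 := by norm_num
        rw [h3, add_pow, ← Finset.sum_subset (Finset.range_mono (Nat.succ_le_succ hag))]
        · refine Finset.sum_congr rfl fun k _ => ?_
          simp [mul_comm]
        · intro k _ hk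
          rw [Nat.choose_eq_zero_of_lt (by simpa using hk)]; simp
      simp_rw [this]
      rw [Finset.prod_pow_eq_pow_sum]
      exact pow_le_pow_right₀ (by norm_num) ha
    refine le_trans ?_ e3
    refine (Finset.sum_le_sum fun α hα => ?_).trans
      (Finset.sum_le_sum_of_subset_of_nonneg (Finset.filter_subset _ _) fun α _ _ => by positivity)
    have hα2 : m ≤ ∑ g, α g := by simpa using (Finset.mem_filter.1 hα).2
    rw [Finset.prod_mul_distrib, abs_mul, abs_of_nonneg (by positivity),
      Finset.prod_pow_eq_pow_sum]
    by_cases hle : ∀ g, α g ≤ a g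
    · gcongr
      apply mixed_alpha f hf hτ hy α hα2
      refine le_trans ?_ hτL
      gcongr
      exact (Finset.sum_le_sum fun g _ => hle g).trans ha
    · push Not at hle
      obtain ⟨g, hg⟩ := hle
      rw [Finset.prod_eq_zero (Finset.mem_univ g)]
      · simp
      · rw [Nat.choose_eq_zero_of_lt hg]; simp

/-- `k^{-D} C(k,s)` is a polynomial in `1/k`. -/
lemma choose_inv_poly (s D : ℕ) (hs : s ≤ D) : ∃ R : Polynomial ℝ, R.natDegree ≤ D ∧
    ∀ k : ℕ, 1 ≤ k → ((k : ℝ)⁻¹) ^ D * (k.choose s : ℝ) = R.eval ((k : ℝ)⁻¹) := by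
  set p : Polynomial ℝ := Polynomial.C ((s.factorial : ℝ)⁻¹) * descPochhammer ℝ s with hp
  have hpd : p.natDegree ≤ D := by
    refine (Polynomial.natDegree_C_mul_le _ _).trans ?_
    rw [descPochhammer_natDegree]; exact hs
  refine ⟨p.reflect D, Polynomial.natDegree_reflect_le.trans (by simp [hpd]), ?_⟩
  intro k hk
  have hk0 : (k : ℝ) ≠ 0 := by positivity
  have := invertibleOfNonzero hk0
  have h := Polynomial.eval₂_reflect_mul_pow (RingHom.id ℝ) (k : ℝ) D p hpd
  rw [invOf_eq_inv] at h
  have h2 : p.eval (k : ℝ) = (k.choose s : ℝ) := by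
    rw [hp, Polynomial.eval_C_mul, descPochhammer_eval_eq_descFactorial,
      Nat.descFactorial_eq_factorial_mul_choose]
    push_cast
    field_simp
  change Polynomial.eval _ _ * _ = p.eval (k : ℝ) at h
  rw [← h2, ← h, mul_comm, mul_assoc, ← mul_pow, mul_inv_cancel₀ hk0, one_pow, mul_one]

open MvPolynomial in
lemma subset_avg_monomial {n : ℕ} (c : ℝ) (α : Fin n →₀ ℕ) : ∃ R : Polynomial ℝ,
    R.natDegree ≤ α.sum (fun _ e => e) ∧ ∀ k : ℕ, 1 ≤ k → k ≤ n →
      (∑ K ∈ powersetCard k (univ : Finset (Fin n)),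
        α.prod (fun i e => (if i ∈ K then c * (k : ℝ)⁻¹ else 0) ^ e)) / (n.choose k : ℝ)
      = R.eval ((k : ℝ)⁻¹) := by
  classical
  set D := α.sum (fun _ e => e) with hD
  set S := α.support with hS
  have hSD : #S ≤ D := by
    rw [hD, Finsupp.sum, Finset.card_eq_sum_ones]
    refine Finset.sum_le_sum fun i hi => ?_
    exact Nat.one_le_iff_ne_zero.2 (Finsupp.mem_support_iff.1 hi)
  obtain ⟨R, hR, hRe⟩ := choose_inv_poly #S D hSD
  refine ⟨Polynomial.C (c ^ D / (n.choose #S : ℝ)) * R,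
    (Polynomial.natDegree_C_mul_le _ _).trans hR, ?_⟩
  intro k hk hkn
  have hSn : #S ≤ n := by simpa using Finset.card_le_univ S
  have e1 : ∀ K : Finset (Fin n), α.prod (fun i e => (if i ∈ K then c * (k : ℝ)⁻¹ else 0) ^ e)
      = if S ⊆ K then (c * (k : ℝ)⁻¹) ^ D else 0 := by
    intro K
    split_ifs with h
    · rw [Finsupp.prod, hD, Finsupp.sum, ← Finset.prod_pow_eq_pow_sum]
      refine Finset.prod_congr rfl fun i hi => ?_
      rw [if_pos (h hi)]
    · obtain ⟨i, hi, hiK⟩ := Finset.not_subset.1 h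
      rw [Finsupp.prod]
      refine Finset.prod_eq_zero hi ?_
      rw [if_neg hiK, zero_pow (Finsupp.mem_support_iff.1 hi)]
  simp_rw [e1]
  rw [← Finset.sum_filter, Finset.sum_const, nsmul_eq_mul, Polynomial.eval_C_mul, ← hRe k hk]
  have hcard : (#{K ∈ powersetCard k (univ : Finset (Fin n)) | S ⊆ K} : ℝ) * (n.choose #S : ℝ)
      = (n.choose k : ℝ) * (k.choose #S : ℝ) := by
    by_cases hsk : #S ≤ k
    · have h1 := Finset.card_filter_powersetCard_subset S (univ : Finset (Fin n)) k
      have h2 := Nat.choose_mul (n := n) hsk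
      rw [h1 (Finset.subset_univ _) hsk]
      rw [Finset.card_univ, Fintype.card_fin]
      rw [mul_comm]
      exact_mod_cast h2.symm
    · rw [Nat.choose_eq_zero_of_lt (not_le.1 hsk), Finset.filter_false_of_mem]
      · simp
      · intro K hK hSK
        exact hsk ((Finset.card_le_card hSK).trans (Finset.mem_powersetCard.1 hK).2.le)
  have hne1 : (n.choose #S : ℝ) ≠ 0 := by exact_mod_cast (Nat.choose_pos hSn).ne'
  have hne2 : (n.choose k : ℝ) ≠ 0 := by exact_mod_cast (Nat.choose_pos hkn).ne'
  rw [mul_pow, div_eq_iff hne2]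
  have : ((#{K ∈ powersetCard k (univ : Finset (Fin n)) | S ⊆ K} : ℕ) : ℝ)
      = (n.choose k : ℝ) * (k.choose #S : ℝ) / (n.choose #S : ℝ) := by
    rw [eq_div_iff hne1]; exact hcard
  rw [this]
  ring

open MvPolynomial in
lemma subset_avg {n d : ℕ} (P : MvPolynomial (Fin n) ℝ) (hP : P.totalDegree ≤ d) (c : ℝ) :
    ∃ R : Polynomial ℝ, R.natDegree ≤ d ∧ ∀ k : ℕ, 1 ≤ k → k ≤ n →
      (∑ K ∈ powersetCard k (univ : Finset (Fin n)),
        eval (fun i => if i ∈ K then c * (k : ℝ)⁻¹ else 0) P) / (n.choose k : ℝ)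
      = R.eval ((k : ℝ)⁻¹) := by
  choose R hR hRe using fun α : Fin n →₀ ℕ => subset_avg_monomial c α
  refine ⟨∑ α ∈ P.support, Polynomial.C (P.coeff α) * R α, ?_, ?_⟩
  · refine Polynomial.natDegree_sum_le_of_forall_le _ _ fun α hα => ?_
    exact (Polynomial.natDegree_C_mul_le _ _).trans
      ((hR α).trans ((le_totalDegree hα).trans hP))
  · intro k hk hkn
    rw [Polynomial.eval_finsetSum]
    simp_rw [Polynomial.eval_C_mul, ← hRe _ k hk hkn, MvPolynomial.eval_eq]
    rw [Finset.sum_comm, Finset.sum_div]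
    refine Finset.sum_congr rfl fun α _ => ?_
    rw [← Finset.mul_sum, mul_div_assoc]
    rfl

/-- The operator `∏_{t<k} (shift - ρ^t)` on sequences. -/
def U (ρ : ℝ) : ℕ → (ℕ → ℝ) → ℕ → ℝ
  | 0, a => a
  | k + 1, a => fun j => U ρ k a (j + 1) - ρ ^ k * U ρ k a j

lemma U_add (ρ : ℝ) (k : ℕ) (a b : ℕ → ℝ) (j : ℕ) :
    U ρ k (fun i => a i + b i) j = U ρ k a j + U ρ k b j := by
  induction k generalizing j with
  | zero => rfl
  | succ k ih => simp only [U, ih]; ring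

lemma U_smul (ρ : ℝ) (k : ℕ) (c : ℝ) (a : ℕ → ℝ) (j : ℕ) :
    U ρ k (fun i => c * a i) j = c * U ρ k a j := by
  induction k generalizing j with
  | zero => rfl
  | succ k ih => simp only [U, ih]; ring

lemma U_sum (ρ : ℝ) (k : ℕ) {ι : Type*} (s : Finset ι) (a : ι → ℕ → ℝ) (j : ℕ) :
    U ρ k (fun i => ∑ x ∈ s, a x i) j = ∑ x ∈ s, U ρ k (a x) j := by
  induction k generalizing j with
  | zero => rfl
  | succ k ih => simp only [U, ih, Finset.sum_sub_distrib, Finset.mul_sum]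

lemma U_shift (ρ : ℝ) (k i : ℕ) (a : ℕ → ℝ) (j : ℕ) :
    U ρ k (fun l => a (i + l)) j = U ρ k a (i + j) := by
  induction k generalizing j with
  | zero => rfl
  | succ k ih => simp only [U, ih, add_assoc]

lemma U_pow (ρ : ℝ) (k i : ℕ) (j : ℕ) :
    U ρ k (fun l => (ρ ^ l) ^ i) j = (∏ t ∈ Finset.range k, (ρ ^ i - ρ ^ t)) * (ρ ^ j) ^ i := by
  induction k generalizing j with
  | zero => simp [U]
  | succ k ih =>
    simp only [U, ih, Finset.prod_range_succ]
    rw [pow_succ ρ j, mul_pow]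
    ring

lemma U_poly (ρ : ℝ) (k : ℕ) (R : Polynomial ℝ) (hR : R.natDegree < k) (j : ℕ) :
    U ρ k (fun l => R.eval (ρ ^ l)) j = 0 := by
  simp_rw [Polynomial.eval_eq_sum_range]
  rw [U_sum]
  refine Finset.sum_eq_zero fun i hi => ?_
  rw [U_smul, U_pow, Finset.prod_eq_zero (i := i)]
  · simp
  · simp at hi ⊢; omega
  · simp

lemma U_bound {ρ : ℝ} (h0 : 0 ≤ ρ) (h1 : ρ ≤ 1) (k : ℕ) (a : ℕ → ℝ) (M : ℝ) (j : ℕ)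
    (ha : ∀ l, j ≤ l → l ≤ j + k → |a l| ≤ M) : |U ρ k a j| ≤ 2 ^ k * M := by
  induction k generalizing j with
  | zero => simpa [U] using ha j le_rfl le_rfl
  | succ k ih =>
    simp only [U]
    have i1 := ih (j + 1) (fun l h h' => ha l (by omega) (by omega))
    have i2 := ih j (fun l h h' => ha l (by omega) (by omega))
    refine (abs_sub _ _).trans ?_
    rw [abs_mul, abs_of_nonneg (pow_nonneg h0 k), pow_succ]
    have : ρ ^ k * |U ρ k a j| ≤ |U ρ k a j| :=
      mul_le_of_le_one_left (abs_nonneg _) (pow_le_one₀ h0 h1)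
    linarith

lemma U_lin (ρ : ℝ) (k : ℕ) (j : ℕ) :
    U ρ (k + 1) (fun l => (l : ℝ)) j = ∏ t ∈ Finset.range k, (1 - ρ ^ (t + 1)) := by
  induction k generalizing j with
  | zero => simp [U]
  | succ k ih =>
    have e : U ρ (k + 1 + 1) (fun l => (l : ℝ)) j = U ρ (k + 1) (fun l => (l : ℝ)) (j + 1)
      - ρ ^ (k + 1) * U ρ (k + 1) (fun l => (l : ℝ)) j := rfl
    rw [e, ih, ih, Finset.prod_range_succ]
    ring

/-- Solving the recurrence. -/
lemma U_solve (k : ℕ) : ∃ A : ℝ, 0 ≤ A ∧ ∀ (a : ℕ → ℝ) (M : ℝ) (J : ℕ), 0 ≤ M →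
    (∀ l, l ≤ k + 1 → |a l| ≤ M) →
    (∀ i, i + (k + 1) ≤ J → |U (1 / 2) (k + 1) a i| ≤ M) →
    ∀ j, j ≤ J → |a j| ≤ A * M * (j + 1) := by
  induction k with
  | zero =>
    refine ⟨1, by norm_num, fun a M J hM h0 hU j => ?_⟩
    induction j with
    | zero =>
      intro _
      have := h0 0 (by omega)
      simpa using this
    | succ j ih =>
      intro hj
      have h1 := hU j (by omega)
      have h2 := ih (by omega)
      simp only [U] at h1
      have : a (j + 1) = (a (j + 1) - (1 / 2) ^ 0 * a j) + a j := by ring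
      rw [this]
      refine (abs_add_le _ _).trans ?_
      push_cast
      linarith
  | succ k ih =>
    obtain ⟨A, hA, ih⟩ := ih
    refine ⟨A * 2 ^ (k + 2), by positivity, fun a M J hM h0 hU => ?_⟩
    have key : ∀ i, i + (k + 1) ≤ J → |U (1 / 2) (k + 1) a i| ≤ 2 ^ (k + 2) * M := by
      have hM2 : M ≤ 2 ^ (k + 1) * M := le_mul_of_one_le_left hM (one_le_pow₀ (by norm_num))
      intro i
      induction i with
      | zero =>
        intro _
        have := U_bound (ρ := 1 / 2) (by norm_num) (by norm_num) (k + 1) a M 0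
          (fun l _ hl => h0 l (by omega))
        refine this.trans ?_
        rw [pow_succ _ (k + 1)]
        linarith
      | succ i ihi =>
        intro hi
        have h1 := hU i (by omega)
        have h2 := ihi (by omega)
        rw [U] at h1
        have e : U (1 / 2) (k + 1) a (i + 1) = (U (1 / 2) (k + 1) a (i + 1) -
          (1 / 2) ^ (k + 1) * U (1 / 2) (k + 1) a i) + (1 / 2) ^ (k + 1) * U (1 / 2) (k + 1) a i := by
          ring
        rw [e]
        refine (abs_add_le _ _).trans ?_
        rw [abs_mul, abs_of_nonneg (by positivity : (0 : ℝ) ≤ (1 / 2) ^ (k + 1))]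
        have h3 : (1 / 2 : ℝ) ^ (k + 1) * |U (1 / 2) (k + 1) a i| ≤
            (1 / 2) ^ (k + 1) * (2 ^ (k + 2) * M) := by gcongr
        have h4 : (1 / 2 : ℝ) ^ (k + 1) * (2 ^ (k + 2) * M) = 2 * M := by
          rw [pow_succ 2 (k + 1), ← mul_assoc, ← mul_assoc, ← mul_pow]; norm_num
        have h5 : (2 : ℝ) ≤ 2 ^ (k + 1) := by
          rw [pow_succ]
          have := one_le_pow₀ (M₀ := ℝ) (a := 2) (by norm_num) (n := k)
          linarith
        rw [pow_succ _ (k + 1)]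
        nlinarith
    intro j hj
    have hM2 : M ≤ 2 ^ (k + 2) * M := le_mul_of_one_le_left hM (one_le_pow₀ (by norm_num))
    refine (ih a (2 ^ (k + 2) * M) J (by positivity)
      (fun l hl => (h0 l (by omega)).trans hM2) key j hj).trans (le_of_eq (by ring))

lemma avg_close {ι : Type*} (s : Finset ι) (hs : 0 < #s) (φ ψ : ι → ℝ) (M : ℝ)
    (h : ∀ i ∈ s, |φ i - ψ i| ≤ M) : |(∑ i ∈ s, φ i) / (#s : ℝ) - (∑ i ∈ s, ψ i) / (#s : ℝ)| ≤ M := by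
  have hs' : (0 : ℝ) < #s := by exact_mod_cast hs
  rw [← sub_div, ← Finset.sum_sub_distrib, abs_div, abs_of_pos hs', div_le_iff₀ hs']
  refine (Finset.abs_sum_le_sum_abs _ _).trans ((Finset.sum_le_sum h).trans ?_)
  simp [mul_comm]

/-- Average over permutations. -/
noncomputable def Fs {n N : ℕ} (g : (Fin n → ℝ) → ℝ) (θ : ℝ) (v : Fin N → Fin n → ℝ)
    (A : Finset (Fin N)) : ℝ :=
  (∑ σ : Equiv.Perm (Fin N), g ((θ / (#A : ℝ)) • ∑ l ∈ A, v (σ l))) /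
    (#(univ : Finset (Equiv.Perm (Fin N))) : ℝ)

lemma Fs_card {n N : ℕ} (g : (Fin n → ℝ) → ℝ) (θ : ℝ) (v : Fin N → Fin n → ℝ)
    (A B : Finset (Fin N)) (h : #A = #B) : Fs g θ v A = Fs g θ v B := by
  classical
  have e : {x // x ∈ A} ≃ {x // x ∈ B} := Finset.equivOfCardEq h
  set π : Equiv.Perm (Fin N) := e.extendSubtype with hπ
  have hB : B = A.map π.toEmbedding := by
    refine (Finset.eq_of_subset_of_card_le ?_ (by simp [h])).symm
    intro x hx
    obtain ⟨a, ha, rfl⟩ := Finset.mem_map.1 hx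
    exact Equiv.extendSubtype_mem e a ha
  unfold Fs
  rw [h]
  congr 1
  rw [← Equiv.sum_comp (Equiv.mulRight π)]
  refine Finset.sum_congr rfl fun σ _ => ?_
  congr 2
  conv_rhs => rw [hB]
  rw [Finset.sum_map]
  rfl

lemma rec_step {n N m s : ℕ} (hm : 1 ≤ m) (g : (Fin n → ℝ) → ℝ) (hg : diffBound m (l1Ball n) g 1)
    {τ : ℝ} (hτ : 0 ≤ τ) (hτL : τ * ((2 ^ m : ℕ) + m ^ 2) ≤ 1) (v : Fin N → Fin n → ℝ)
    (hv : ∀ l, nm (v l) ≤ 1) (hs : 1 ≤ s) (hN : 2 ^ m * s ≤ N) :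
    ∃ R : Polynomial ℝ, R.natDegree ≤ m - 1 ∧ ∀ j, j ≤ m → ∀ A : Finset (Fin N), #A = s * 2 ^ j →
      |Fs g ((2 ^ m : ℕ) * τ) v A - R.eval ((1 / 2) ^ j)| ≤ 3 ^ (2 ^ m) := by
  classical
  set r := 2 ^ m with hr
  obtain ⟨e⟩ : Nonempty ((Fin r × Fin s) ↪ Fin N) :=
    Function.Embedding.nonempty_of_card_le (by simpa using hN)
  have hs0 : (0 : ℝ) < s := by exact_mod_cast hs
  set y : Equiv.Perm (Fin N) → Fin r → Fin n → ℝ :=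
    fun σ b => (s : ℝ)⁻¹ • ∑ c, v (σ (e (b, c))) with hy
  have hy1 : ∀ σ b, nm (y σ b) ≤ 1 := by
    intro σ b
    rw [hy]
    simp only
    rw [nm_smul, abs_of_pos (by positivity), inv_mul_le_iff₀ hs0, mul_one]
    refine (nm_sum_le _ _).trans ((Finset.sum_le_sum (g := fun _ => (1 : ℝ))
      fun c _ => hv _).trans (by simp))
  choose Q hQ hQe using fun σ => newton hm g hg r hτ hτL (hy1 σ)
  choose R hR hRe using fun σ => subset_avg (Q σ) (hQ σ) (r : ℝ)
  refine ⟨Polynomial.C ((#(univ : Finset (Equiv.Perm (Fin N))) : ℝ)⁻¹) * ∑ σ, R σ, ?_, ?_⟩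
  · refine (Polynomial.natDegree_C_mul_le _ _).trans ?_
    exact Polynomial.natDegree_sum_le_of_forall_le _ _ fun σ _ => hR σ
  intro j hj A hA
  set k := 2 ^ j with hk
  have hkr : k ≤ r := Nat.pow_le_pow_right (by norm_num) hj
  have hk1 : 1 ≤ k := Nat.one_le_two_pow
  have hk0 : (0 : ℝ) < k := by exact_mod_cast hk1
  have hkk : ((1 / 2 : ℝ)) ^ j = (k : ℝ)⁻¹ := by rw [hk]; push_cast; rw [one_div, inv_pow]
  have hrk : (2 ^ (m - j) * k : ℕ) = r := by rw [hk, hr, ← pow_add, Nat.sub_add_cancel hj]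
  have hrk' : ((2 ^ (m - j) : ℕ) : ℝ) = r * (k : ℝ)⁻¹ := by
    rw [← hrk]; push_cast; field_simp
  rw [hkk, Polynomial.eval_C_mul, Polynomial.eval_finsetSum, inv_mul_eq_div]
  set PK := powersetCard k (univ : Finset (Fin r)) with hPK
  have hPKc : #PK = r.choose k := by simp [hPK]
  have hPK0 : 0 < #PK := by rw [hPKc]; exact Nat.choose_pos hkr
  have hPK0' : (0 : ℝ) < #PK := by exact_mod_cast hPK0
  set AK : Finset (Fin r) → Finset (Fin N) := fun K => (K ×ˢ (univ : Finset (Fin s))).map e with hAK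
  have hAKc : ∀ K ∈ PK, #(AK K) = s * k := by
    intro K hK
    have := (Finset.mem_powersetCard.1 hK).2
    simp [hAK, this, mul_comm]
  have step1 : Fs g (r * τ) v A = (∑ σ : Equiv.Perm (Fin N), (∑ K ∈ PK,
      g ((r * τ / ((s * k : ℕ) : ℝ)) • ∑ l ∈ AK K, v (σ l))) / (#PK : ℝ)) /
      (#(univ : Finset (Equiv.Perm (Fin N))) : ℝ) := by
    have h1 : Fs g (r * τ) v A = (∑ K ∈ PK, Fs g (r * τ) v (AK K)) / (#PK : ℝ) := by
      rw [Finset.sum_congr rfl fun K hK => Fs_card g (r * τ) v (AK K) A (by rw [hAKc K hK, hA])]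
      rw [Finset.sum_const, nsmul_eq_mul, mul_div_cancel_left₀ _ hPK0'.ne']
    rw [h1]
    unfold Fs
    rw [← Finset.sum_div, ← Finset.sum_div, div_right_comm, Finset.sum_comm]
    congr 2
    refine Finset.sum_congr rfl fun σ _ => Finset.sum_congr rfl fun K hK => ?_
    rw [hAKc K hK]
  rw [step1]
  refine avg_close _ (Finset.card_pos.2 Finset.univ_nonempty) _ _ _ fun σ _ => ?_
  rw [← hRe σ k hk1 hkr, ← hPKc]
  refine avg_close _ hPK0 _ _ _ fun K hK => ?_
  set a : Fin r →₀ ℕ := Finsupp.equivFunOnFinite.symm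
    (fun b => if b ∈ K then 2 ^ (m - j) else 0) with ha
  have ha1 : ∀ b, a b = if b ∈ K then 2 ^ (m - j) else 0 := fun b => by simp [ha]
  have hKc := (Finset.mem_powersetCard.1 hK).2
  have := hQe σ a (by
    simp_rw [ha1]
    rw [Finset.sum_ite_mem, Finset.univ_inter, Finset.sum_const, smul_eq_mul, hKc, mul_comm, hrk])
  have e1 : pt τ (y σ) a = (r * τ / ((s * k : ℕ) : ℝ)) • ∑ l ∈ AK K, v (σ l) := by
    simp only [pt, ha1, hAK]
    rw [Finset.sum_map, Finset.sum_product]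
    have : ∑ b, ((if b ∈ K then 2 ^ (m - j) else 0 : ℕ) : ℝ) • y σ b
        = ((r * (k : ℝ)⁻¹) * (s : ℝ)⁻¹) • ∑ b ∈ K, ∑ c, v (σ (e (b, c))) := by
      rw [Finset.smul_sum, ← Finset.sum_subset (Finset.subset_univ K)]
      · refine Finset.sum_congr rfl fun b hb => ?_
        rw [if_pos hb, hrk', hy, smul_smul]
      · intro b _ hb
        rw [if_neg hb]; simp
    rw [this, smul_smul]
    congr 1
    push_cast
    field_simp
  have e2 : (fun b => ((a b : ℕ) : ℝ)) = fun b => if b ∈ K then (r : ℝ) * (k : ℝ)⁻¹ else 0 := by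
    funext b
    rw [ha1]
    split_ifs
    · exact hrk'
    · simp
  rw [e1, e2] at this
  exact this

/-- Isolating the value at the base point. -/
lemma iso {n m : ℕ} (g : (Fin n → ℝ) → ℝ) (hg : diffBound m (l1Ball n) g 1)
    (x h : Fin n → ℝ) (hx : ∀ j : ℕ, j ≤ m → nm (x + (j : ℝ) • h) ≤ 1) (E : ℝ) (hE : 0 ≤ E)
    (hb : ∀ j : ℕ, 1 ≤ j → j ≤ m → |g (x + (j : ℝ) • h)| ≤ E) : |g x| ≤ 1 + 2 ^ m * E := by
  have h1 := hg x h hx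
  rw [Finset.sum_range_succ'] at h1
  have h2 : |∑ j ∈ Finset.range m, (-1 : ℝ) ^ (m - (j + 1)) * (m.choose (j + 1) : ℝ) *
      g (x + ((j + 1 : ℕ) : ℝ) • h)| ≤ 2 ^ m * E := by
    refine (Finset.abs_sum_le_sum_abs _ _).trans ?_
    calc _ ≤ ∑ j ∈ Finset.range m, (m.choose (j + 1) : ℝ) * E := by
          refine Finset.sum_le_sum fun j hj => ?_
          rw [abs_mul, abs_mul, abs_pow, abs_neg, abs_one, one_pow, one_mul, Nat.abs_cast]
          exact mul_le_mul_of_nonneg_left (hb (j + 1) (by omega)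
            (by have := Finset.mem_range.1 hj; omega)) (by positivity)
      _ ≤ (∑ j ∈ Finset.range (m + 1), (m.choose j : ℝ)) * E := by
          rw [← Finset.sum_mul, Finset.sum_range_succ']
          refine mul_le_mul_of_nonneg_right (by simp) hE
      _ = 2 ^ m * E := by
          congr 1; exact_mod_cast Nat.sum_range_choose m
  have h3 : |(-1 : ℝ) ^ (m - 0) * (m.choose 0 : ℝ) * g (x + ((0 : ℕ) : ℝ) • h)| = |g x| := by
    simp [abs_mul]
  rw [← h3]
  rw [abs_le] at h1 h2 ⊢
  constructor <;> linarith [h1.1, h1.2, h2.1, h2.2]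

lemma extrap {n m : ℕ} (hm : 1 ≤ m) (g : (Fin n → ℝ) → ℝ) (hg : diffBound m (l1Ball n) g 1)
    (q : ℕ) : ∀ E : ℝ, 0 ≤ E → (∀ x, nm x ≤ (1 - 1 / (m : ℝ)) ^ q → |g x| ≤ E) →
      ∀ x, nm x ≤ 1 → |g x| ≤ (1 + 2 ^ m) ^ q * (1 + E) := by
  have hm0 : (1 : ℝ) ≤ m := by exact_mod_cast hm
  have hr0 : 0 ≤ 1 - 1 / (m : ℝ) := by
    rw [sub_nonneg, div_le_one (by linarith)]; exact hm0
  have hr1 : 1 - 1 / (m : ℝ) ≤ 1 := by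
    have : 0 ≤ 1 / (m : ℝ) := by positivity
    linarith
  induction q with
  | zero => intro E hE h x hx; have := h x (by simpa using hx); simp; linarith
  | succ q ih =>
    intro E hE h x hx
    have := ih (1 + 2 ^ m * E) (by positivity) (fun z hz => by
      have e : ∀ j : ℕ, j ≤ m → nm (z + (j : ℝ) • (-(1 / (m : ℝ)) • z)) = (1 - j / m) * nm z := by
        intro j hj
        have : z + (j : ℝ) • (-(1 / (m : ℝ)) • z) = (1 - j / m : ℝ) • z := by
          rw [smul_smul, sub_smul, one_smul, sub_eq_add_neg, ← neg_smul]; congr 2; ring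
        rw [this, nm_smul, abs_of_nonneg]
        rw [sub_nonneg, div_le_one (by linarith)]; exact_mod_cast hj
      have hz1 : nm z ≤ 1 := hz.trans (pow_le_one₀ hr0 hr1)
      refine iso g hg z (-(1 / (m : ℝ)) • z) ?_ E hE ?_
      · intro j hj
        rw [e j hj]
        have : 0 ≤ (j : ℝ) / m := by positivity
        have := nm_nonneg z
        nlinarith
      · intro j hj1 hj
        refine h _ ?_
        rw [e j hj, pow_succ, mul_comm]
        refine mul_le_mul hz ?_ ?_ (by positivity)
        · have : (1 : ℝ) / m ≤ j / m := by gcongr; exact_mod_cast hj1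
          linarith
        · rw [sub_nonneg, div_le_one (by linarith)]; exact_mod_cast hj) x hx
    refine this.trans ?_
    rw [pow_succ, mul_assoc]
    refine mul_le_mul_of_nonneg_left ?_ (by positivity)
    have : (1 : ℝ) ≤ 2 ^ m := one_le_pow₀ (by norm_num)
    nlinarith

lemma lattice {n m r : ℕ} (g : (Fin n → ℝ) → ℝ) (hg : diffBound m (l1Ball n) g 1)
    {τ : ℝ} (hτ : 0 ≤ τ) (hm : 1 ≤ m) (hτL : τ * ((m * r : ℕ) : ℝ) ≤ 1) (E : ℝ) (hE : 0 ≤ E)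
    (h : ∀ a : Fin n → ℕ, ∑ i, a i ≤ m * r → |g (fun i => τ * (a i : ℝ))| ≤ E)
    (b : Fin n → ℤ) (hb : ∑ i, |b i| ≤ r) : |g (fun i => τ * (b i : ℝ))| ≤ 1 + 2 ^ m * E := by
  set c : Fin n → ℝ := fun i => τ * ((b i).toNat : ℝ) with hc
  set d : Fin n → ℝ := fun i => τ * ((-b i).toNat : ℝ) with hd
  have hbr : ∀ i, (b i : ℝ) = ((b i).toNat : ℝ) - ((-b i).toNat : ℝ) := by
    intro i
    have : (b i) = ((b i).toNat : ℤ) - ((-b i).toNat : ℤ) := by omega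
    exact_mod_cast this
  have hr' : 1 * r ≤ m * r := Nat.mul_le_mul_right _ hm
  have main : ∀ j : ℕ, 1 ≤ j → j ≤ m → ((fun i => τ * (b i : ℝ)) + (j : ℝ) • d)
      = (fun i => τ * (((b i).toNat + (j - 1) * (-b i).toNat : ℕ) : ℝ)) ∧
      ∑ i, ((b i).toNat + (j - 1) * (-b i).toNat) ≤ m * r := by
    intro j hj1 hj
    constructor
    · funext i
      simp only [Pi.add_apply, Pi.smul_apply, smul_eq_mul, hd, hbr i]
      push_cast [Nat.cast_sub hj1]
      ring
    · calc _ ≤ ∑ i, m * (b i).natAbs := by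
            refine Finset.sum_le_sum fun i _ => ?_
            rcases le_total 0 (b i) with h0 | h0
            · have e1 : (-b i).toNat = 0 := by omega
              have e2 : (b i).toNat = (b i).natAbs := by omega
              rw [e1, e2]; nlinarith
            · have e1 : (-b i).toNat = (b i).natAbs := by omega
              have e2 : (b i).toNat = 0 := by omega
              rw [e1, e2, zero_add]; exact Nat.mul_le_mul_right _ (by omega)
        _ ≤ m * r := by
            rw [← Finset.mul_sum]
            refine Nat.mul_le_mul_left _ ?_
            zify
            exact hb
  refine iso g hg _ d ?_ E hE ?_
  · intro j hj
    rcases Nat.eq_zero_or_pos j with rfl | hj1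
    · have : nm (fun i => τ * (b i : ℝ)) = τ * ∑ i, |(b i : ℝ)| := by
        unfold nm
        rw [Finset.mul_sum]
        exact Finset.sum_congr rfl fun i _ => by rw [abs_mul, abs_of_nonneg hτ]
      have h2 : ∑ i, |(b i : ℝ)| ≤ ((m * r : ℕ) : ℝ) := by
        have : ∑ i, |b i| ≤ ((m * r : ℕ) : ℤ) := by push_cast; zify at hr'; linarith
        exact_mod_cast this
      simp only [Nat.cast_zero, zero_smul, add_zero]
      rw [this]
      exact (mul_le_mul_of_nonneg_left h2 hτ).trans hτL
    · obtain ⟨e1, e2⟩ := main j hj1 hj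
      rw [e1]
      unfold nm
      have : ∀ k : ℕ, |τ * (k : ℝ)| = τ * k := fun k => abs_of_nonneg (by positivity)
      simp_rw [this]
      rw [← Finset.mul_sum, ← Nat.cast_sum]
      exact (mul_le_mul_of_nonneg_left (by exact_mod_cast e2) hτ).trans hτL
  · intro j hj1 hj
    obtain ⟨e1, e2⟩ := main j hj1 hj
    rw [e1]
    exact h _ e2

lemma perm_avg {N : ℕ} (φ : Fin N → ℝ) (l : Fin N) :
    (∑ σ : Equiv.Perm (Fin N), φ (σ l)) / (#(univ : Finset (Equiv.Perm (Fin N))) : ℝ)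
      = (∑ i, φ i) / N := by
  have h1 : ∀ l', ∑ σ : Equiv.Perm (Fin N), φ (σ l') = ∑ σ : Equiv.Perm (Fin N), φ (σ l) := by
    intro l'
    rw [← Equiv.sum_comp (Equiv.mulRight (Equiv.swap l l'))]
    simp
  have h2 : ∑ l', ∑ σ : Equiv.Perm (Fin N), φ (σ l')
      = (#(univ : Finset (Equiv.Perm (Fin N))) : ℝ) * ∑ i, φ i := by
    rw [Finset.sum_comm]
    rw [Finset.sum_congr rfl fun σ _ => Equiv.sum_comp σ φ]
    rw [Finset.sum_const, nsmul_eq_mul]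
  rw [Finset.sum_congr rfl fun l' _ => h1 l', Finset.sum_const, nsmul_eq_mul] at h2
  have hN : (0 : ℝ) < N := by exact_mod_cast l.pos
  have hP : (0 : ℝ) < (#(univ : Finset (Equiv.Perm (Fin N))) : ℝ) := by
    exact_mod_cast Finset.card_pos.2 Finset.univ_nonempty
  rw [div_eq_div_iff hP.ne' hN.ne']
  simp only [Finset.card_univ, Fintype.card_fin] at h2 ⊢
  linarith

lemma core (m : ℕ) (hm : 1 ≤ m) : ∃ A : ℝ, 0 ≤ A ∧ ∀ (n : ℕ) (g : (Fin n → ℝ) → ℝ)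
    (_ : diffBound m (l1Ball n) g 1) (τ : ℝ) (_ : 0 ≤ τ) (_ : τ * ((2 ^ m : ℕ) + m ^ 2) ≤ 1)
    (C0 : ℝ) (_ : 0 ≤ C0)
    (_ : ∀ b : Fin n → ℤ, ∑ i, |b i| ≤ (2 ^ m : ℕ) → |g (fun i => τ * (b i : ℝ))| ≤ C0)
    (M : ℝ) (_ : 0 ≤ M) (_ : ∀ x, nm x ≤ 1 → |g x| ≤ M) (J : ℕ) (_ : m ≤ J)
    (N : ℕ) (_ : N = 2 ^ J)
    (v : Fin N → Fin n → ℝ) (_ : ∀ l, nm (v l) ≤ 1) (Bad : Finset (Fin N))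
    (_ : ∀ l, l ∉ Bad → ∃ b : Fin n → ℤ, ∑ i, |b i| ≤ 1 ∧ v l = fun i => (b i : ℝ)),
    |g (((2 ^ m : ℕ) * τ / (N : ℝ)) • ∑ l, v l)| ≤
      A * (C0 + 2 ^ m * 3 ^ (2 ^ m) + 2 ^ m * M * #Bad / (N : ℝ)) * (J + 1) := by
  classical
  obtain ⟨k, rfl⟩ : ∃ k, m = k + 1 := ⟨m - 1, by omega⟩
  obtain ⟨A, hA, hsolve⟩ := U_solve k
  refine ⟨A, hA, ?_⟩
  intro n g hg τ hτ hτL C0 hC0 hlat M hM hgM J hJ N hN v hv Bad hBad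
  set m := k + 1 with hmk
  have hN0 : (0 : ℝ) < N := by rw [hN]; positivity
  set θ : ℝ := (2 ^ m : ℕ) * τ with hθ
  have hθ0 : 0 ≤ θ := by positivity
  have hθ1 : θ ≤ 1 := by
    have : 0 ≤ τ * (m : ℝ) ^ 2 := by positivity
    rw [hθ]; nlinarith
  set S : ℕ → Finset (Fin N) := fun j => univ.filter fun l => (l : ℕ) < 2 ^ j with hS
  have hSc : ∀ j, j ≤ J → #(S j) = 2 ^ j := by
    intro j hj
    have h2 : 2 ^ j ≤ N := by rw [hN]; exact Nat.pow_le_pow_right (by norm_num) hj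
    rw [hS]
    simp only
    rw [Fin.card_filter_val_lt]
    exact min_eq_right h2
  set a : ℕ → ℝ := fun j => Fs g θ v (S j) with ha
  have hP0 : 0 < #(univ : Finset (Equiv.Perm (Fin N))) := Finset.card_pos.2 Finset.univ_nonempty
  have hP0' : (0 : ℝ) < #(univ : Finset (Equiv.Perm (Fin N))) := by exact_mod_cast hP0
  set W := C0 + 2 ^ m * 3 ^ (2 ^ m) + 2 ^ m * M * #Bad / (N : ℝ) with hW
  have hfrac : 0 ≤ 2 ^ m * M * #Bad / (N : ℝ) := by positivity
  have hW0 : 0 ≤ W := by positivity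
  have hfin : a J = g ((θ / (N : ℝ)) • ∑ l, v l) := by
    have hSJ : S J = univ := by
      rw [← Finset.card_eq_iff_eq_univ, hSc J le_rfl]; simp [hN]
    simp only [ha, hSJ]
    unfold Fs
    rw [Finset.sum_congr rfl (g := fun _ => g ((θ / (N : ℝ)) • ∑ l, v l)), Finset.sum_const,
      nsmul_eq_mul, mul_div_cancel_left₀ _ hP0'.ne']
    intro σ _
    rw [Equiv.sum_comp σ v]
    simp
  have hsmall : ∀ j ≤ m, |a j| ≤ W := by
    intro j hj
    have hjJ : j ≤ J := hj.trans hJ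
    have hpt : ∀ σ : Equiv.Perm (Fin N), |g ((θ / (#(S j) : ℝ)) • ∑ l ∈ S j, v (σ l))| ≤
        C0 + ∑ l ∈ S j, M * (if σ l ∈ Bad then 1 else 0) := by
      intro σ
      by_cases hex : ∃ l ∈ S j, σ l ∈ Bad
      · obtain ⟨l, hl, hlB⟩ := hex
        have h1 : M * (if σ l ∈ Bad then 1 else 0) ≤
            ∑ l ∈ S j, M * (if σ l ∈ Bad then 1 else 0) :=
          Finset.single_le_sum (f := fun l => M * (if σ l ∈ Bad then (1 : ℝ) else 0))
            (fun i _ => by positivity) hl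
        rw [if_pos hlB, mul_one] at h1
        refine (hgM _ ?_).trans (by linarith)
        rw [nm_smul, abs_of_nonneg (by positivity)]
        have h2 : nm (∑ l ∈ S j, v (σ l)) ≤ #(S j) := by
          refine (nm_sum_le _ _).trans ?_
          have := Finset.sum_le_sum (s := S j) (f := fun l => nm (v (σ l)))
            (g := fun _ => (1 : ℝ)) (fun c _ => hv _)
          simpa using this
        have h3 : (0 : ℝ) < #(S j) := by
          exact_mod_cast Finset.card_pos.2 ⟨l, hl⟩
        rw [div_mul_eq_mul_div, div_le_one h3]
        nlinarith [nm_nonneg (∑ l ∈ S j, v (σ l))]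
      · push Not at hex
        have hsum : 0 ≤ ∑ l ∈ S j, M * (if σ l ∈ Bad then (1 : ℝ) else 0) :=
          Finset.sum_nonneg fun i _ => by positivity
        refine le_trans ?_ (le_add_of_nonneg_right hsum)
        have hch : ∀ l, ∃ b : Fin n → ℤ, ∑ i, |b i| ≤ 1 ∧
            (l ∈ S j → v (σ l) = fun i => (b i : ℝ)) := by
          intro l
          by_cases hl : l ∈ S j
          · obtain ⟨b, h1, h2⟩ := hBad (σ l) (hex l hl)
            exact ⟨b, h1, fun _ => h2⟩
          · exact ⟨0, by simp, fun h => absurd h hl⟩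
        choose b hb1 hb2 using hch
        have := hlat (fun i => 2 ^ (m - j) * ∑ l ∈ S j, b l i) (by
          calc ∑ i, |2 ^ (m - j) * ∑ l ∈ S j, b l i|
              ≤ ∑ i, 2 ^ (m - j) * ∑ l ∈ S j, |b l i| := by
                refine Finset.sum_le_sum fun i _ => ?_
                rw [abs_mul, abs_of_nonneg (by positivity)]
                exact mul_le_mul_of_nonneg_left (Finset.abs_sum_le_sum_abs _ _) (by positivity)
            _ = 2 ^ (m - j) * ∑ l ∈ S j, ∑ i, |b l i| := by
                rw [← Finset.mul_sum, Finset.sum_comm]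
            _ ≤ 2 ^ (m - j) * ∑ l ∈ S j, 1 :=
                mul_le_mul_of_nonneg_left (Finset.sum_le_sum fun l _ => hb1 l) (by positivity)
            _ = ((2 ^ m : ℕ) : ℤ) := by
                rw [Finset.sum_const, hSc j hjJ]
                simp only [nsmul_eq_mul, mul_one]
                push_cast
                rw [← pow_add, Nat.sub_add_cancel hj])
        refine le_of_eq_of_le ?_ this
        congr 2
        funext i
        simp only [Pi.smul_apply, Finset.sum_apply, smul_eq_mul]
        rw [Finset.sum_congr rfl fun l hl => congrFun (hb2 l hl) i, hSc j hjJ, hθ]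
        push_cast
        have e : (2 : ℝ) ^ m = 2 ^ (m - j) * 2 ^ j := by rw [← pow_add, Nat.sub_add_cancel hj]
        rw [e]
        field_simp
    have h1 : |a j| ≤ C0 + ∑ l ∈ S j, M * ((#Bad : ℝ) / N) := by
      simp only [ha]
      unfold Fs
      rw [abs_div, abs_of_pos hP0', div_le_iff₀ hP0']
      refine (Finset.abs_sum_le_sum_abs _ _).trans ((Finset.sum_le_sum fun σ _ => hpt σ).trans ?_)
      rw [Finset.sum_add_distrib, Finset.sum_comm, add_mul]
      have h5 : ∀ l ∈ S j, ∑ σ : Equiv.Perm (Fin N), M * (if σ l ∈ Bad then (1 : ℝ) else 0)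
          = M * ((#Bad : ℝ) / N) * (#(univ : Finset (Equiv.Perm (Fin N))) : ℝ) := by
        intro l _
        rw [← Finset.mul_sum, mul_assoc]
        congr 1
        rw [← div_eq_iff hP0'.ne', perm_avg (fun i => if i ∈ Bad then (1 : ℝ) else 0) l]
        simp
      rw [Finset.sum_congr rfl h5, ← Finset.sum_mul, Finset.sum_const, nsmul_eq_mul]
      linarith
    refine h1.trans ?_
    rw [Finset.sum_const, hSc j hjJ, nsmul_eq_mul, hW]
    have h6 : ((2 ^ j : ℕ) : ℝ) ≤ 2 ^ m := by
      push_cast; exact pow_le_pow_right₀ (by norm_num) hj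
    have h7 : 0 ≤ M * ((#Bad : ℝ) / N) := by positivity
    have h8 : (0 : ℝ) ≤ 2 ^ m * 3 ^ (2 ^ m) := by positivity
    have h9 : 2 ^ m * M * #Bad / (N : ℝ) = 2 ^ m * (M * ((#Bad : ℝ) / N)) := by ring
    rw [h9]
    nlinarith
  have hrec : ∀ i, i + m ≤ J → |U (1 / 2) m a i| ≤ W := by
    intro i hi
    obtain ⟨R, hR, hRe⟩ := rec_step (N := N) (m := m) (s := 2 ^ i) (by omega) g hg hτ hτL v hv
      Nat.one_le_two_pow (by
        rw [← pow_add, hN]; exact Nat.pow_le_pow_right (by norm_num) (by omega))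
    have e1 : U (1 / 2) m a i = U (1 / 2) m (fun l => a (i + l)) 0 := by
      rw [U_shift]; simp
    have e2 : (fun l => a (i + l)) = fun l => (a (i + l) - R.eval ((1 / 2) ^ l)) +
        R.eval ((1 / 2) ^ l) := by funext l; ring
    rw [e1, e2, U_add, U_poly _ _ _ (by omega), add_zero]
    refine (U_bound (by norm_num) (by norm_num) m _ (3 ^ (2 ^ m)) 0 ?_).trans ?_
    · intro l _ hl
      exact hRe l (by omega) (S (i + l)) (by rw [hSc _ (by omega), pow_add])
    · rw [hW]; linarith
  rw [← hfin]
  exact hsolve a W J hW0 hsmall hrec J le_rfl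

lemma scale_poly {n : ℕ} (Q : MvPolynomial (Fin n) ℝ) (c : ℝ) : ∃ P : MvPolynomial (Fin n) ℝ,
    P.totalDegree ≤ Q.totalDegree ∧
      ∀ x : Fin n → ℝ, MvPolynomial.eval x P = MvPolynomial.eval (fun i => c * x i) Q := by
  refine ⟨∑ d ∈ Q.support, MvPolynomial.monomial d (Q.coeff d * ∏ i, c ^ d i), ?_, ?_⟩
  · refine MvPolynomial.totalDegree_finsetSum_le fun d hd => ?_
    refine (MvPolynomial.totalDegree_monomial_le _ _).trans ?_
    exact MvPolynomial.le_totalDegree hd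
  · intro x
    rw [map_sum, MvPolynomial.eval_eq']
    refine Finset.sum_congr rfl fun d _ => ?_
    rw [MvPolynomial.eval_monomial, mul_assoc, Finsupp.prod_fintype _ _ (by simp),
      ← Finset.prod_mul_distrib]
    simp_rw [mul_pow]

lemma atoms {n N : ℕ} (hN : 2 * n ≤ N) (x : Fin n → ℝ) (hx : nm x ≤ 1 / 2) :
    ∃ (v : Fin N → Fin n → ℝ) (Bad : Finset (Fin N)), #Bad ≤ n ∧ (∀ l, nm (v l) ≤ 1) ∧
      (∀ l, l ∉ Bad → ∃ b : Fin n → ℤ, ∑ i, |b i| ≤ 1 ∧ v l = fun i => (b i : ℝ)) ∧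
      ∑ l, v l = (N : ℝ) • x := by
  classical
  set k : Fin n → ℕ := fun i => ⌊(N : ℝ) * |x i|⌋₊ with hk
  have hk1 : ∀ i, (k i : ℝ) ≤ N * |x i| := fun i => Nat.floor_le (by positivity)
  have hk2 : ∀ i, (N : ℝ) * |x i| < k i + 1 := fun i => Nat.lt_floor_add_one _
  set s : Fin n → ℤ := fun i => if 0 ≤ x i then 1 else -1 with hs
  have hsx : ∀ i, (s i : ℝ) * |x i| = x i := by
    intro i
    simp only [hs]
    split_ifs with h
    · simp [abs_of_nonneg h]
    · push Not at h; simp [abs_of_neg h]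
  have hs1 : ∀ i, |s i| = 1 := by
    intro i; simp only [hs]; split_ifs <;> simp
  have hs1' : ∀ i, |(s i : ℝ)| = 1 := by
    intro i; exact_mod_cast congrArg (Int.cast (R := ℝ)) (hs1 i)
  have nms : ∀ (i : Fin n) (c : ℝ), nm (Pi.single i c) = |c| := by
    intro i c
    unfold nm
    rw [Finset.sum_eq_single i]
    · simp
    · intro j _ hj; simp [hj]
    · simp
  let ι := Σ i : Fin n, (Fin (k i) ⊕ Unit)
  have hcard : Fintype.card ι ≤ N := by
    have h1 : Fintype.card ι = ∑ i, (k i + 1) := by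
      simp [ι]
    rw [h1]
    have h2 : ((∑ i, (k i + 1) : ℕ) : ℝ) ≤ N := by
      push_cast
      rw [Finset.sum_add_distrib]
      have h3 : ∑ i, (k i : ℝ) ≤ N * nm x := by
        unfold nm; rw [Finset.mul_sum]; exact Finset.sum_le_sum fun i _ => hk1 i
      have h4 : (2 : ℝ) * n ≤ N := by exact_mod_cast hN
      have h5 : ∑ i : Fin n, (1 : ℝ) = n := by simp
      rw [h5]
      have : (0 : ℝ) ≤ N := by positivity
      nlinarith
    exact_mod_cast h2
  obtain ⟨e⟩ : Nonempty (ι ↪ Fin N) :=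
    Function.Embedding.nonempty_of_card_le (by simpa using hcard)
  let w : ι → Fin n → ℝ := fun p => match p with
    | ⟨i, Sum.inl _⟩ => Pi.single i (s i : ℝ)
    | ⟨i, Sum.inr _⟩ => Pi.single i ((s i : ℝ) * (N * |x i| - k i))
  set v : Fin N → Fin n → ℝ := Function.extend e w 0 with hv
  have hve : ∀ p, v (e p) = w p := fun p => e.injective.extend_apply w 0 p
  have hv0 : ∀ l, (¬ ∃ p, e p = l) → v l = 0 := fun l hl => by
    rw [hv, Function.extend_apply' _ _ _ hl]; rfl
  refine ⟨v, univ.image fun i : Fin n => e ⟨i, Sum.inr ()⟩, ?_, ?_, ?_, ?_⟩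
  · exact Finset.card_image_le.trans (by simp)
  · intro l
    by_cases hl : ∃ p, e p = l
    · obtain ⟨⟨i, q⟩, rfl⟩ := hl
      rw [hve]
      rcases q with q | q
      · show nm (Pi.single i (s i : ℝ)) ≤ 1
        rw [nms, hs1']
      · show nm (Pi.single i ((s i : ℝ) * (N * |x i| - k i))) ≤ 1
        rw [nms, abs_mul, hs1', one_mul, abs_le]
        constructor <;> linarith [hk1 i, hk2 i]
    · rw [hv0 l hl, nm_zero]; norm_num
  · intro l hl
    by_cases hp : ∃ p, e p = l
    · obtain ⟨⟨i, q⟩, rfl⟩ := hp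
      rcases q with q | q
      · refine ⟨Pi.single i (s i), ?_, ?_⟩
        · rw [Finset.sum_eq_single i]
          · simp [hs1]
          · intro j _ hj; simp [hj]
          · simp
        · rw [hve]
          show (Pi.single i (s i : ℝ) : Fin n → ℝ) = _
          funext j
          by_cases hj : j = i
          · subst hj; simp
          · simp [hj]
      · exact absurd (Finset.mem_image.2 ⟨i, by simp, rfl⟩) hl
    · exact ⟨0, by simp, by rw [hv0 l hp]; funext i; simp⟩
  · rw [← Fintype.sum_of_injective e e.injective w v (fun l hl => hv0 l (by simpa using hl))
      (fun p => (hve p).symm)]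
    rw [Fintype.sum_sigma]
    have : ∀ i : Fin n, ∑ q : Fin (k i) ⊕ Unit, w ⟨i, q⟩ = Pi.single i ((N : ℝ) * x i) := by
      intro i
      rw [Fintype.sum_sum_type]
      show ∑ _ : Fin (k i), (Pi.single i (s i : ℝ) : Fin n → ℝ) + ∑ _ : Unit,
        (Pi.single i ((s i : ℝ) * (N * |x i| - k i)) : Fin n → ℝ) = _
      rw [Finset.sum_const, Finset.sum_const]
      simp only [Finset.card_univ, Fintype.card_fin, Fintype.card_unit, one_smul]
      rw [← Pi.single_smul, ← Pi.single_add]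
      congr 1
      rw [nsmul_eq_mul]
      conv_rhs => rw [← hsx i]
      ring
    rw [Finset.sum_congr rfl fun i _ => this i]
    funext j
    simp [Finset.sum_apply, Pi.single_apply]

lemma choose_p (K : ℕ) (hK : 1 ≤ K) : ∃ c : ℝ, 0 ≤ c ∧ ∀ n : ℕ, 1 ≤ n → ∃ p : ℕ,
    K * n ≤ 2 ^ p ∧ (2 * p + 1 : ℝ) ≤ c * Real.log (n + 1) := by
  have hl2 : 0 < Real.log 2 := Real.log_pos (by norm_num)
  have hlK : 0 ≤ Real.log (2 * K) := Real.log_nonneg (by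
    have : (1 : ℝ) ≤ K := by exact_mod_cast hK
    linarith)
  refine ⟨(2 * (Real.log (2 * K) / Real.log 2 + 1) + 1) / Real.log 2, by positivity, ?_⟩
  intro n hn
  refine ⟨Nat.clog 2 (K * n), Nat.le_pow_clog (by norm_num) _, ?_⟩
  set p := Nat.clog 2 (K * n) with hp
  have hKn : 1 ≤ K * n := Nat.mul_pos hK hn
  have hpow : 2 ^ p ≤ 2 * (K * n) := by
    rcases Nat.lt_or_ge 1 (K * n) with h | h
    · have := Nat.pow_pred_clog_lt_self (b := 2) (by norm_num) h
      have hpp : 0 < p := Nat.clog_pos (by norm_num) h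
      have e : 2 ^ p = 2 * 2 ^ (p - 1) := by rw [← pow_succ']; congr 1; omega
      rw [e]
      rw [← hp] at this
      have := this.le
      simp only [Nat.pred_eq_sub_one] at this
      omega
    · have : p = 0 := by rw [hp]; exact Nat.clog_of_right_le_one h 2
      rw [this]; omega
  have hlog : p * Real.log 2 ≤ Real.log (2 * K) + Real.log (n + 1) := by
    rw [← Real.log_pow, ← Real.log_mul (by positivity) (by positivity)]
    refine Real.log_le_log (by positivity) ?_
    have : (2 : ℝ) ^ p ≤ 2 * (K * n) := by exact_mod_cast hpow
    have hK0 : (0 : ℝ) ≤ K := by positivity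
    nlinarith
  have hn1 : Real.log 2 ≤ Real.log (n + 1) := by
    refine Real.log_le_log (by norm_num) ?_
    have : (1 : ℝ) ≤ n := by exact_mod_cast hn
    linarith
  rw [div_mul_eq_mul_div, le_div_iff₀ hl2]
  have h3 : Real.log (2 * K) ≤ Real.log (2 * K) / Real.log 2 * Real.log (n + 1) := by
    rw [div_mul_eq_mul_div, le_div_iff₀ hl2]
    exact mul_le_mul_of_nonneg_left hn1 hlK
  nlinarith

lemma isCompact_l1Ball (n : ℕ) : IsCompact (l1Ball n) := by
  refine Metric.isCompact_of_isClosed_isBounded ?_ ?_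
  · exact isClosed_le (by fun_prop) continuous_const
  · refine (Metric.isBounded_closedBall (x := (0 : Fin n → ℝ)) (r := 1)).subset ?_
    intro x hx
    rw [mem_closedBall_zero_iff, pi_norm_le_iff_of_nonneg (by norm_num)]
    intro i
    rw [Real.norm_eq_abs]
    exact (Finset.single_le_sum (f := fun i => |x i|) (fun i _ => abs_nonneg _)
      (Finset.mem_univ i)).trans hx

lemma upper (m : ℕ) (hm : 1 ≤ m) : ∃ C : ℝ, ∀ n : ℕ, 1 ≤ n →
    ∀ f : (Fin n → ℝ) → ℝ, ContinuousOn f (l1Ball n) → diffBound m (l1Ball n) f 1 →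
      ∃ P : MvPolynomial (Fin n) ℝ, P.totalDegree ≤ m - 1 ∧
        ∀ x ∈ l1Ball n, |f x - MvPolynomial.eval x P| ≤ C * Real.log (n + 1) := by
  obtain ⟨A, hA, hcore⟩ := core m hm
  have hm0 : (1 : ℝ) ≤ m := by exact_mod_cast hm
  set L := m * 2 ^ m with hL
  have hLr : (2 ^ m : ℕ) ≤ L := by rw [hL]; nlinarith [Nat.one_le_two_pow (n := m)]
  set τ : ℝ := 1 / (L + m ^ 2) with hτ
  have hden : (0 : ℝ) < L + m ^ 2 := by positivity
  have hτ0 : 0 < τ := by positivity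
  have hτL : τ * (L + m ^ 2) ≤ 1 := by rw [hτ]; field_simp; exact le_rfl
  have hτL2 : τ * ((2 ^ m : ℕ) + m ^ 2) ≤ 1 := by
    refine le_trans ?_ hτL
    have : ((2 ^ m : ℕ) : ℝ) ≤ L := by exact_mod_cast hLr
    gcongr
  have hτL3 : τ * ((m * 2 ^ m : ℕ) : ℝ) ≤ 1 := by
    refine le_trans ?_ hτL
    rw [← hL]
    have : (0 : ℝ) ≤ (m : ℝ) ^ 2 := by positivity
    gcongr; linarith
  set θ : ℝ := (2 ^ m : ℕ) * τ with hθ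
  have hθ0 : 0 < θ := by positivity
  obtain ⟨q, hq⟩ := exists_pow_lt_of_lt_one (show 0 < θ / 2 by positivity)
    (show 1 - 1 / (m : ℝ) < 1 by
      have : 0 < 1 / (m : ℝ) := by positivity
      linarith)
  set A1 : ℝ := (1 + 2 ^ m) ^ q with hA1
  have hA10 : 0 < A1 := by positivity
  set C0 : ℝ := 1 + 2 ^ m * 3 ^ L with hC0
  set W0 : ℝ := C0 + 2 ^ m * 3 ^ (2 ^ m) with hW0
  have hW00 : 0 ≤ W0 := by positivity
  obtain ⟨K0, hK0⟩ := exists_nat_ge (6 * A1 * A * 2 ^ m)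
  set K := K0 + 2 ^ m + 2 with hK
  obtain ⟨c, hc, hcp⟩ := choose_p K (by rw [hK]; exact Nat.le_add_left _ _ |>.trans' (by norm_num))
  refine ⟨2 * A1 * (1 + A * W0) * c, ?_⟩
  intro n hn f hfc hf
  obtain ⟨Q, hQ, hQe⟩ := newton (r := n) hm f hf L hτ0.le hτL
    (y := fun i => Pi.single i 1) (by
      intro g
      unfold nm
      rw [Finset.sum_eq_single g]
      · simp
      · intro j _ hj; simp [hj]
      · simp)
  obtain ⟨P, hP, hPe⟩ := scale_poly Q τ⁻¹
  refine ⟨P, hP.trans hQ, ?_⟩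
  set g : (Fin n → ℝ) → ℝ := fun x => f x - MvPolynomial.eval x P with hgdef
  have hg : diffBound m (l1Ball n) g 1 := by
    intro x h hxh
    have := hf x h hxh
    have h2 := mvpoly_diff hm P (hP.trans hQ) x h
    simp only [hgdef, mul_sub, Finset.sum_sub_distrib]
    rw [h2, sub_zero]
    exact this
  have hgc : ContinuousOn g (l1Ball n) := hfc.sub (MvPolynomial.continuous_eval P).continuousOn
  have hlat0 : ∀ a : Fin n → ℕ, ∑ i, a i ≤ m * 2 ^ m → |g (fun i => τ * (a i : ℝ))| ≤ 3 ^ L := by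
    intro a ha
    have := hQe (Finsupp.equivFunOnFinite.symm a) (by simpa using ha)
    have e1 : pt τ (fun i : Fin n => Pi.single i (1 : ℝ)) (Finsupp.equivFunOnFinite.symm a)
        = fun i => τ * (a i : ℝ) := by
      funext j
      simp [pt, Finset.sum_apply, Pi.single_apply]
    rw [e1] at this
    simp only [hgdef]
    rw [hPe]
    convert this using 5
    simp [hτ0.ne']
  have hlat := lattice g hg hτ0.le hm hτL3 (3 ^ L) (by positivity) hlat0
  obtain ⟨x0, hx0, hmax⟩ := (isCompact_l1Ball n).exists_isMaxOn
    ⟨0, by simp [l1Ball]⟩ hgc.abs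
  set M := |g x0| with hM
  have hgM : ∀ x, nm x ≤ 1 → |g x| ≤ M := fun x hx => hmax hx
  have hM0 : 0 ≤ M := abs_nonneg _
  obtain ⟨p, hp1, hp2⟩ := hcp n hn
  have hpp : 2 ^ p ≤ 2 ^ (2 * p) := Nat.pow_le_pow_right (by norm_num) (by omega)
  have hmp : m ≤ 2 * p := by
    have h1 : 2 ^ m ≤ 2 ^ p := le_trans (by nlinarith) hp1
    have := (Nat.pow_le_pow_iff_right (by norm_num : 1 < 2)).1 h1
    omega
  set N := 2 ^ (2 * p) with hN
  have h2n : 2 * n ≤ N := le_trans (le_trans (Nat.mul_le_mul_right n (by rw [hK]; exact Nat.le_add_left _ _)) hp1) hpp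
  have hN0 : (0 : ℝ) < N := by rw [hN]; positivity
  set E : ℝ := A * (W0 + 2 ^ m * M * n / N) * (2 * p + 1) with hE
  have hE0 : 0 ≤ E := by positivity
  have hin : ∀ x, nm x ≤ (1 - 1 / (m : ℝ)) ^ q → |g x| ≤ E := by
    intro x hx
    have hz : nm (θ⁻¹ • x) ≤ 1 / 2 := by
      rw [nm_smul, abs_of_pos (by positivity), inv_mul_le_iff₀ hθ0]
      linarith
    obtain ⟨v, Bad, hB, hv1, hv2, hv3⟩ := atoms h2n (θ⁻¹ • x) hz
    have := hcore n g hg τ hτ0.le hτL2 C0 (by positivity) hlat M hM0 hgM (2 * p) hmp N hN v hv1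
      Bad hv2
    rw [hv3, ← hθ, smul_smul, smul_smul, div_mul_cancel₀ _ hN0.ne', mul_inv_cancel₀ hθ0.ne',
      one_smul] at this
    refine this.trans ?_
    rw [hE, hW0]
    push_cast
    have : (#Bad : ℝ) ≤ n := by exact_mod_cast hB
    gcongr
  have hMle := extrap hm g hg q E hE0 hin x0 hx0
  rw [← hA1, ← hM] at hMle
  have hkey : A1 * A * (2 ^ m * n / N) * (2 * p + 1) ≤ 1 / 2 := by
    have h1 : (2 * p + 1 : ℝ) ≤ 3 * 2 ^ p := by
      have h3 : p < 2 ^ p := Nat.lt_two_pow_self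
      have : 2 * p + 1 ≤ 3 * 2 ^ p := by omega
      exact_mod_cast this
    have h2 : (N : ℝ) = 2 ^ p * 2 ^ p := by
      rw [hN]; push_cast; rw [← pow_add]; congr 1; ring
    have h4 : (K : ℝ) * n ≤ 2 ^ p := by exact_mod_cast hp1
    have h5 : 6 * A1 * A * 2 ^ m ≤ K := by
      refine hK0.trans ?_
      rw [hK]; push_cast
      have : (0 : ℝ) ≤ 2 ^ m := by positivity
      linarith
    have h6 : 6 * A1 * A * 2 ^ m * n ≤ 2 ^ p :=
      le_trans (mul_le_mul_of_nonneg_right h5 (by positivity)) h4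
    have h7 : (0 : ℝ) < 2 ^ p := by positivity
    calc A1 * A * (2 ^ m * n / N) * (2 * p + 1)
        ≤ A1 * A * (2 ^ m * n / N) * (3 * 2 ^ p) := by gcongr
      _ = (6 * A1 * A * 2 ^ m * n) / 2 ^ p / 2 := by rw [h2]; field_simp; ring
      _ ≤ 1 / 2 := by
          gcongr
          rw [div_le_one h7]; exact h6
  have hexp : A1 * (1 + E) = A1 + A1 * A * W0 * (2 * p + 1) +
      (A1 * A * (2 ^ m * n / N) * (2 * p + 1)) * M := by rw [hE]; ring
  have hMfin : M ≤ 2 * A1 * (1 + A * W0) * (2 * p + 1) := by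
    have h1 := mul_le_mul_of_nonneg_right hkey hM0
    have h2 : A1 ≤ A1 * (2 * p + 1) := by
      have : (0 : ℝ) ≤ p := by positivity
      nlinarith
    rw [hexp] at hMle
    nlinarith
  intro x hx
  refine (hgM x hx).trans (hMfin.trans ?_)
  rw [mul_assoc (2 * A1 * (1 + A * W0))]
  gcongr

lemma diff_le (m : ℕ) (a : ℕ → ℝ) (B : ℝ) (h : ∀ j, j ≤ m → |a j| ≤ B) :
    |∑ j ∈ Finset.range (m + 1), (-1 : ℝ) ^ (m - j) * (m.choose j : ℝ) * a j| ≤ 2 ^ m * B := by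
  refine (Finset.abs_sum_le_sum_abs _ _).trans ?_
  calc _ ≤ ∑ j ∈ Finset.range (m + 1), (m.choose j : ℝ) * B := by
        refine Finset.sum_le_sum fun j hj => ?_
        rw [abs_mul, abs_mul, abs_pow, abs_neg, abs_one, one_pow, one_mul, Nat.abs_cast]
        exact mul_le_mul_of_nonneg_left (h j (by have := Finset.mem_range.1 hj; omega))
          (by positivity)
    _ = 2 ^ m * B := by
        rw [← Finset.sum_mul]
        congr 1; exact_mod_cast Nat.sum_range_choose m

lemma mul_log_le_one (u : ℝ) (hu : |u| ≤ 1) : |u * Real.log u| ≤ 1 := by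
  rcases eq_or_ne u 0 with rfl | h0
  · simp
  · have := (Real.abs_log_mul_self_lt |u| (abs_pos.2 h0) hu).le
    rwa [Real.log_abs, abs_mul, abs_abs, mul_comm, ← abs_mul] at this

lemma philog_diff (m : ℕ) (hm : 2 ≤ m) (x h : ℝ) :
    |∑ j ∈ Finset.range (m + 1), (-1 : ℝ) ^ (m - j) * (m.choose j : ℝ) *
      ((x + j * h) * Real.log (x + j * h))| ≤ 2 ^ m * ∑ j ∈ Finset.range (m + 1), |x + j * h| := by
  set s := ∑ j ∈ Finset.range (m + 1), |x + j * h| with hs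
  have hs0 : 0 ≤ s := Finset.sum_nonneg fun _ _ => abs_nonneg _
  have hle : ∀ j, j ≤ m → |x + j * h| ≤ s := fun j hj =>
    Finset.single_le_sum (f := fun j : ℕ => |x + j * h|) (fun _ _ => abs_nonneg _)
      (Finset.mem_range.2 (by omega))
  rcases hs0.eq_or_lt with h0 | h0
  · refine diff_le m _ _ fun j hj => ?_
    have : |x + j * h| ≤ 0 := by rw [h0]; exact hle j hj
    have := abs_nonpos_iff.1 this
    rw [this]; simp [hs0]
  · have e : ∀ j : ℕ, (x + j * h) * Real.log (x + j * h) =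
        s * ((x + j * h) / s * Real.log ((x + j * h) / s)) + Real.log s * (x + j * h) := by
      intro j
      rcases eq_or_ne (x + j * h) 0 with hj | hj
      · rw [hj]; simp
      · rw [Real.log_div hj h0.ne']; field_simp; ring
    have lin : ∑ j ∈ Finset.range (m + 1), (-1 : ℝ) ^ (m - j) * (m.choose j : ℝ) *
        (Real.log s * (x + j * h)) = 0 := by
      have := upoly_diff m (Polynomial.C (Real.log s) *
        (Polynomial.C x + Polynomial.X * Polynomial.C h)) (by
          refine lt_of_le_of_lt (b := 1) ?_ (by omega)
          compute_degree)
      simpa [mul_comm h] using this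
    rw [Finset.sum_congr rfl fun j _ => (by rw [e j, mul_add] :
      (-1 : ℝ) ^ (m - j) * (m.choose j : ℝ) * ((x + j * h) * Real.log (x + j * h)) =
      (-1 : ℝ) ^ (m - j) * (m.choose j : ℝ) *
        (s * ((x + j * h) / s * Real.log ((x + j * h) / s))) +
      (-1 : ℝ) ^ (m - j) * (m.choose j : ℝ) * (Real.log s * (x + j * h)))]
    rw [Finset.sum_add_distrib, lin, add_zero]
    refine diff_le m _ _ fun j hj => ?_
    rw [abs_mul, abs_of_pos h0]
    have := mul_log_le_one ((x + j * h) / s) (by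
      rw [abs_div, abs_of_pos h0, div_le_one h0]; exact hle j hj)
    nlinarith

lemma lower_big (m : ℕ) (hm : 2 ≤ m) : ∃ C : ℝ, 0 ≤ C ∧ ∀ n : ℕ, 2 ^ m ≤ n →
    ∃ f : (Fin n → ℝ) → ℝ, ContinuousOn f (l1Ball n) ∧ diffBound m (l1Ball n) f 1 ∧
      ∀ P : MvPolynomial (Fin n) ℝ, P.totalDegree ≤ m - 1 → ∀ ε : ℝ,
        (∀ x ∈ l1Ball n, |f x - MvPolynomial.eval x P| ≤ ε) → Real.log (n + 1) ≤ C * ε := by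
  set c : ℝ := 1 / (2 ^ m * (m + 1)) with hc
  have hc0 : 0 < c := by positivity
  refine ⟨2 * m * 2 ^ (m - 1) * 2 ^ m / c, by positivity, ?_⟩
  intro n hn
  refine ⟨fun x => c * ∑ i, x i * Real.log (x i), ?_, ?_, ?_⟩
  · refine Continuous.continuousOn (continuous_const.mul (continuous_finsetSum _ fun i _ => ?_))
    exact Real.continuous_mul_log.comp (continuous_apply i)
  · intro x h hxh
    have e : ∑ j ∈ Finset.range (m + 1), (-1 : ℝ) ^ (m - j) * (m.choose j : ℝ) *
        (c * ∑ i, (x + (j : ℝ) • h) i * Real.log ((x + (j : ℝ) • h) i)) =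
        c * ∑ i, ∑ j ∈ Finset.range (m + 1), (-1 : ℝ) ^ (m - j) * (m.choose j : ℝ) *
          ((x i + j * h i) * Real.log (x i + j * h i)) := by
      rw [Finset.sum_comm, Finset.mul_sum]
      refine Finset.sum_congr rfl fun j _ => ?_
      rw [mul_left_comm, Finset.mul_sum]
      simp
    simp only [e]
    rw [abs_mul, abs_of_pos hc0, hc, div_mul_eq_mul_div, one_mul, div_le_one (by positivity)]
    refine (Finset.abs_sum_le_sum_abs _ _).trans
      ((Finset.sum_le_sum fun i _ => philog_diff m hm (x i) (h i)).trans ?_)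
    rw [← Finset.mul_sum, Finset.sum_comm]
    refine mul_le_mul_of_nonneg_left ?_ (by positivity)
    calc _ ≤ ∑ j ∈ Finset.range (m + 1), (1 : ℝ) := by
          refine Finset.sum_le_sum fun j hj => ?_
          exact hxh j (by have := Finset.mem_range.1 hj; omega)
      _ = m + 1 := by simp
  · intro P hP ε hε
    have hn1 : 1 ≤ n := le_trans Nat.one_le_two_pow hn
    obtain ⟨R, hR, hRe⟩ := subset_avg P hP 1
    have key : ∀ k, 1 ≤ k → k ≤ n → |R.eval ((k : ℝ)⁻¹) + c * Real.log k| ≤ ε := by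
      intro k hk1 hkn
      have hk0 : (0 : ℝ) < k := by exact_mod_cast hk1
      rw [← hRe k hk1 hkn]
      have hcard : #(powersetCard k (univ : Finset (Fin n))) = n.choose k := by simp
      have hpos : 0 < n.choose k := Nat.choose_pos hkn
      have hpos' : (0 : ℝ) < n.choose k := by exact_mod_cast hpos
      have := avg_close (powersetCard k (univ : Finset (Fin n))) (by rw [hcard]; exact hpos)
        (fun K => MvPolynomial.eval (fun i => if i ∈ K then 1 * (k : ℝ)⁻¹ else 0) P)
        (fun _ => -(c * Real.log k)) ε (by
          intro K hK
          have hKc := (Finset.mem_powersetCard.1 hK).2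
          have h1 := hε (fun i => if i ∈ K then 1 * (k : ℝ)⁻¹ else 0) (by
            show ∑ i, |if i ∈ K then 1 * (k : ℝ)⁻¹ else 0| ≤ 1
            have : ∀ i, |if i ∈ K then 1 * (k : ℝ)⁻¹ else 0| = if i ∈ K then (k : ℝ)⁻¹ else 0 := by
              intro i; split_ifs
              · rw [one_mul, abs_of_pos (by positivity)]
              · simp
            simp_rw [this]
            rw [Finset.sum_ite_mem, Finset.univ_inter, Finset.sum_const, hKc, nsmul_eq_mul,
              mul_inv_cancel₀ hk0.ne'])
          have h2 : ∑ i, (if i ∈ K then 1 * (k : ℝ)⁻¹ else 0) *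
              Real.log (if i ∈ K then 1 * (k : ℝ)⁻¹ else 0) = -Real.log k := by
            have : ∀ i, (if i ∈ K then 1 * (k : ℝ)⁻¹ else 0) *
              Real.log (if i ∈ K then 1 * (k : ℝ)⁻¹ else 0) =
              if i ∈ K then (k : ℝ)⁻¹ * -Real.log k else 0 := by
              intro i; split_ifs
              · rw [one_mul, Real.log_inv]
              · simp
            simp_rw [this]
            rw [Finset.sum_ite_mem, Finset.univ_inter, Finset.sum_const, hKc, nsmul_eq_mul,
              ← mul_assoc, mul_inv_cancel₀ hk0.ne', one_mul]
          simp only [h2] at h1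
          rw [abs_sub_comm]
          convert h1 using 3
          ring)
      rw [hcard, Finset.sum_const, hcard, nsmul_eq_mul, mul_div_cancel_left₀ _ hpos'.ne'] at this
      rw [sub_neg_eq_add] at this
      exact this
    -- choose N
    have hex : ∃ N : ℕ, n < (N + 1) ^ m := ⟨n, lt_of_lt_of_le (Nat.lt_succ_self n)
      (Nat.le_self_pow (by omega) _)⟩
    classical
    set N := Nat.find hex with hNdef
    have hN1 : n < (N + 1) ^ m := Nat.find_spec hex
    have hN2 : 2 ≤ N := by
      by_contra hlt
      push Not at hlt
      have : (N + 1) ^ m ≤ 2 ^ m := Nat.pow_le_pow_left (by omega) m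
      omega
    have hN3 : N ^ m ≤ n := by
      have := Nat.find_min hex (m := N - 1) (by omega)
      push Not at this
      rwa [Nat.sub_add_cancel (by omega)] at this
    have hNr : (2 : ℝ) ≤ N := by exact_mod_cast hN2
    set ρ : ℝ := (N : ℝ)⁻¹ with hρ
    have hρ0 : 0 ≤ ρ := by positivity
    have hρ2 : ρ ≤ 1 / 2 := by
      rw [hρ, one_div]; exact inv_anti₀ (by norm_num) hNr
    have hU := U_bound hρ0 (by linarith) m
      (fun l => R.eval (ρ ^ l) + (c * Real.log N) * (l : ℝ)) ε 0 (by
        intro l _ hl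
        have h1 := key (N ^ l) (Nat.one_le_pow _ _ (by omega))
          (le_trans (Nat.pow_le_pow_right (by omega) (by omega)) hN3)
        push_cast at h1
        rw [Real.log_pow, ← inv_pow] at h1
        convert h1 using 2
        ring)
    rw [U_add, U_poly _ _ _ (by omega), zero_add, U_smul] at hU
    have hUl := U_lin ρ (m - 1) 0
    rw [Nat.sub_add_cancel (by omega)] at hUl
    rw [hUl] at hU
    have hprod : (1 / 2 : ℝ) ^ (m - 1) ≤ ∏ t ∈ Finset.range (m - 1), (1 - ρ ^ (t + 1)) := by
      have := Finset.prod_le_prod (s := Finset.range (m - 1)) (f := fun _ => (1 / 2 : ℝ))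
        (g := fun t => 1 - ρ ^ (t + 1)) (fun _ _ => by norm_num) (fun t _ => by
          have : ρ ^ (t + 1) ≤ ρ := pow_le_of_le_one hρ0 (by linarith) (by omega)
          linarith)
      simpa using this
    have hlogN : 0 < Real.log N := Real.log_pos (by linarith)
    have h1 : c * Real.log N * (1 / 2 : ℝ) ^ (m - 1) ≤ 2 ^ m * ε :=
      le_trans (mul_le_mul_of_nonneg_left hprod (by positivity)) ((le_abs_self _).trans hU)
    have h2 : Real.log (n + 1) ≤ 2 * m * Real.log N := by
      have h3 : Real.log (n + 1) ≤ Real.log (((N : ℝ) ^ 2) ^ m) := by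
        refine Real.log_le_log (by positivity) ?_
        have h4 : n + 1 ≤ (N ^ 2) ^ m := le_trans hN1 (Nat.pow_le_pow_left (by nlinarith) m)
        exact_mod_cast h4
      rw [Real.log_pow, Real.log_pow] at h3
      push_cast at h3
      linarith
    have h5 : Real.log N ≤ 2 ^ (m - 1) * 2 ^ m * ε / c := by
      rw [le_div_iff₀ hc0]
      rw [one_div, inv_pow, ← div_eq_mul_inv, div_le_iff₀ (by positivity)] at h1
      linarith
    calc Real.log (n + 1) ≤ 2 * m * Real.log N := h2
      _ ≤ 2 * m * (2 ^ (m - 1) * 2 ^ m * ε / c) := by gcongr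
      _ = _ := by ring

lemma lower_small (m : ℕ) (hm : 2 ≤ m) : ∃ C : ℝ, 0 ≤ C ∧ ∀ n : ℕ, 1 ≤ n → n < 2 ^ m →
    ∃ f : (Fin n → ℝ) → ℝ, ContinuousOn f (l1Ball n) ∧ diffBound m (l1Ball n) f 1 ∧
      ∀ P : MvPolynomial (Fin n) ℝ, P.totalDegree ≤ m - 1 → ∀ ε : ℝ,
        (∀ x ∈ l1Ball n, |f x - MvPolynomial.eval x P| ≤ ε) → Real.log (n + 1) ≤ C * ε := by
  have hm0 : (0 : ℝ) < m := by exact_mod_cast (by omega : 0 < m)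
  set κ : ℝ := (1 / 2 ^ m) * ((m.factorial : ℝ) / m ^ m) with hκ
  have hκ0 : 0 < κ := by have := Nat.factorial_pos m; positivity
  refine ⟨m * 2 ^ m / κ, by positivity, ?_⟩
  intro n hn1 hn
  set i0 : Fin n := ⟨0, hn1⟩
  refine ⟨fun x => (1 / 2 ^ m) * (x i0) ^ m, by fun_prop, ?_, ?_⟩
  · intro x h hxh
    have := diff_le m (fun j => (1 / 2 ^ m : ℝ) * ((x + (j : ℝ) • h) i0) ^ m) (1 / 2 ^ m) (by
      intro j hj
      have h1 : |(x + (j : ℝ) • h) i0| ≤ 1 :=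
        (Finset.single_le_sum (f := fun i => |(x + (j : ℝ) • h) i|) (fun i _ => abs_nonneg _)
          (Finset.mem_univ i0)).trans (hxh j hj)
      rw [abs_mul, abs_pow, abs_of_pos (by positivity : (0 : ℝ) < 1 / 2 ^ m)]
      exact mul_le_of_le_one_right (by positivity) (pow_le_one₀ (abs_nonneg _) h1))
    refine this.trans (le_of_eq ?_)
    field_simp
  · intro P hP ε hε
    set h : Fin n → ℝ := Pi.single i0 (1 / m) with hh
    have hb := diff_le m (fun j => (1 / 2 ^ m : ℝ) * ((0 + (j : ℝ) • h) i0) ^ m -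
      MvPolynomial.eval (0 + (j : ℝ) • h) P) ε (by
        intro j hj
        refine hε _ ?_
        rw [mem_l1Ball, zero_add, nm_smul]
        have : nm h = 1 / m := by
          unfold nm
          rw [Finset.sum_eq_single i0]
          · simp [hh]
          · intro j _ hj; simp [hh, hj]
          · simp
        rw [this, abs_of_nonneg (by positivity), mul_one_div, div_le_one hm0]
        exact_mod_cast hj)
    simp only [mul_sub, Finset.sum_sub_distrib] at hb
    rw [mvpoly_diff (by omega) P hP, sub_zero] at hb
    have hfac : ∑ j ∈ Finset.range (m + 1), (-1 : ℝ) ^ (m - j) * (m.choose j : ℝ) * (j : ℝ) ^ m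
        = m.factorial := by
      have h := fwdDiff_iter_eq_factorial (R := ℝ) (n := m)
      have h2 := congrFun h 0
      rw [fwdDiff_iter_eq_sum_shift] at h2
      simpa using h2
    have hsum : ∑ j ∈ Finset.range (m + 1), (-1 : ℝ) ^ (m - j) * (m.choose j : ℝ) *
        ((1 / 2 ^ m : ℝ) * ((0 + (j : ℝ) • h) i0) ^ m) = κ := by
      rw [hκ, ← hfac, Finset.sum_div, Finset.mul_sum]
      refine Finset.sum_congr rfl fun j _ => ?_
      have : (0 + (j : ℝ) • h) i0 = j / m := by simp [hh, div_eq_mul_inv]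
      rw [this, div_pow]
      ring
    rw [hsum, abs_of_pos hκ0] at hb
    have hlog : Real.log (n + 1) ≤ m := by
      have h1 : Real.log (n + 1) ≤ Real.log (2 ^ m) := by
        refine Real.log_le_log (by positivity) ?_
        exact_mod_cast hn
      rw [Real.log_pow] at h1
      have := Real.log_two_lt_d9
      nlinarith
    refine hlog.trans ?_
    rw [div_mul_eq_mul_div, le_div_iff₀ hκ0, mul_assoc]
    exact mul_le_mul_of_nonneg_left hb hm0.le

/-- Corollary 5.7: `C⁻¹ log(n+1) ≤ w_m(ℓ₁ⁿ) ≤ C log(n+1)`. -/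
theorem whitney_m_l1_two_sided (m : ℕ) (hm : 2 ≤ m) :
    ∃ C : ℝ, 1 ≤ C ∧ ∀ n : ℕ, 1 ≤ n →
      ((∀ f : (Fin n → ℝ) → ℝ, ContinuousOn f (l1Ball n) → diffBound m (l1Ball n) f 1 →
          ∃ P : MvPolynomial (Fin n) ℝ, P.totalDegree ≤ m - 1 ∧
            ∀ x ∈ l1Ball n, |f x - MvPolynomial.eval x P| ≤ C * Real.log (n + 1)) ∧
       (∃ f : (Fin n → ℝ) → ℝ, ContinuousOn f (l1Ball n) ∧ diffBound m (l1Ball n) f 1 ∧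
          ∀ P : MvPolynomial (Fin n) ℝ, P.totalDegree ≤ m - 1 →
            ∃ x ∈ l1Ball n, C⁻¹ * Real.log (n + 1) ≤ |f x - MvPolynomial.eval x P|)) := by
  obtain ⟨C1, hC1⟩ := upper m (by omega)
  obtain ⟨C2, hC20, hC2⟩ := lower_big m hm
  obtain ⟨C3, hC30, hC3⟩ := lower_small m hm
  set C : ℝ := 1 + |C1| + C2 + C3 with hC
  have hC1' : C1 ≤ C := by linarith [le_abs_self C1]
  have hCone : 1 ≤ C := by linarith [abs_nonneg C1]
  have hC2' : C2 < C := by linarith [abs_nonneg C1]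
  have hC3' : C3 < C := by linarith [abs_nonneg C1]
  refine ⟨C, hCone, ?_⟩
  intro n hn
  have hnr : (1 : ℝ) ≤ n := by exact_mod_cast hn
  have hlog : 0 < Real.log (n + 1) := Real.log_pos (by linarith)
  refine ⟨?_, ?_⟩
  · intro f hfc hf
    obtain ⟨P, hP, hPe⟩ := hC1 n hn f hfc hf
    exact ⟨P, hP, fun x hx => (hPe x hx).trans (mul_le_mul_of_nonneg_right hC1' hlog.le)⟩
  · have hC4 : ∃ C4 : ℝ, C4 < C ∧ ∃ f : (Fin n → ℝ) → ℝ, ContinuousOn f (l1Ball n) ∧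
        diffBound m (l1Ball n) f 1 ∧
        ∀ P : MvPolynomial (Fin n) ℝ, P.totalDegree ≤ m - 1 → ∀ ε : ℝ,
        (∀ x ∈ l1Ball n, |f x - MvPolynomial.eval x P| ≤ ε) → Real.log (n + 1) ≤ C4 * ε := by
      rcases Nat.lt_or_ge n (2 ^ m) with h | h
      · exact ⟨C3, hC3', hC3 n hn h⟩
      · exact ⟨C2, hC2', hC2 n h⟩
    obtain ⟨C4, hlt, f, hfc, hf, hfP⟩ := hC4
    refine ⟨f, hfc, hf, fun P hP => ?_⟩
    by_contra hcon
    push Not at hcon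
    have h1 := hfP P hP (C⁻¹ * Real.log (n + 1)) fun x hx => (hcon x hx).le
    have h2 : 0 < C⁻¹ * Real.log (n + 1) := by positivity
    have h3 : C * (C⁻¹ * Real.log (n + 1)) = Real.log (n + 1) :=
      mul_inv_cancel_left₀ (by positivity) _
    nlinarith
end
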